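/- Let n ≥ 3, let t_1,…,t_n ∈ ℝ be distinct, and set b = (max_{i≠j}|t_i − t_j|)/(min_{i≠j}|t_i − t_j|). For λ ∈ (0,1) let F_λ = {f_{i,λ}(x) = λx + t_i}_{i=1}^n, and for a probability vector p = (p_i)_{i=1}^n with strictly positive entries let ν_{p,λ} be the self-similar measure associated to F_λ and p. Then the set {λ ∈ (0, (1+√b)^{−1}) : dim ν_{p,λ} < min(1, sd ν_{p,λ})} is at most countable. -/

import Mathlib

/-!
A dimension drop at `λ` is a statement about the entropy of the random point `X_n(λ)` of generation
`n`, the image of `0` under a random word of length `n`. The proof compares the entropies of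
`X_n(λ)` at the scales `λ ^ n` and `λ ^ (3 n)`.

* Entropy rate. The entropy of `X_n(λ)` at scale `λ ^ n` is superadditive up to a constant, hence
  grows like `a n` (`SSM.exists_rate`), and exact dimensionality of the self-similar measure gives
  `a ≤ dim · log (1 / λ)` (`SSM.rate_le_dim`). A dimension drop thus forces both
  `a < log (1 / λ)` and `a < H(p)`.

* No concentration. If `a < log (1 / λ)`, then `X_n(λ)` gains only `o(n)` entropy between the
  scales `λ ^ n` and `λ ^ (3 n)` (`SSM.no_concentration`). This is Hochman's theorem on
  self-similar measures, in the homogeneous case. Take the sum of `k` independent copies of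
  `X_n(λ)` and of an independent copy of `λ ^ n X_{2n}(λ)`, conditionally on the cells of size
  `λ ^ n` of the `k` copies. Its entropy is bounded above by an iterated Kaimanovich–Vershik
  inequality (`SSM.kv_pow`), which shows that the copies bring nothing more than the entropy rate
  allows. It is bounded below scale by scale: every window of scales contributes at least as much as
  the summand `λ ^ n X_{2n}(λ)`, and a window below a scale at which `X_n(λ)` carries entropy
  contributes almost the maximal amount `log (1 / λ)` per step (`SSM.window_growth`). The latter
  comes from the Littlewood–Offord inequality, since conditionally on pairs of coupled points the
  sum is a random subset sum with many large steps. The two bounds are compatible only if there are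
  few scales at which `X_n(λ)` carries entropy.

* Transversality. Let `x < y < 1 / (1 + √b)` with `y - x` comparable to `x ^ n`. The difference of
  the points of two distinct words is, after removing the common prefix, a power series whose
  coefficients are differences of the `t_i` with nonzero constant term, and the bound on the
  parameters prevents it from being tiny at both `x` and `y` (`SSM.transversal`). Hence the cells of
  sizes `x ^ (3 n)` and `y ^ (3 n)` of the two points of a word of length `n` determine the word
  (`SSM.words_eq`). Since the cells of sizes `x ^ n` and `y ^ n` determine each other up to bounded
  error, `n H(p)` is at most the entropy at one scale `x ^ n`, plus two gains of order `o(n)`, plus a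
  constant (`SSM.word_ent_le`). For `n` large this contradicts `a < H(p)`.

It follows that parameters that are exceptional with uniform constants are separated, hence form a
countable set (`SSM.countable_uniform`), and the set of all exceptional parameters is a countable
union of such sets.
-/

open MeasureTheory Set Filter
open scoped ENNReal Classical

noncomputable section

/-- A measure is exact dimensional with dimension `d`: at a.e. point the local dimension
exists and equals `d`. -/
def ExactDim {X : Type*} [PseudoMetricSpace X] [MeasurableSpace X]
    (μ : Measure X) (d : ℝ) : Prop :=
  ∀ᵐ x ∂μ, Tendsto (fun r : ℝ => Real.log (μ (Metric.ball x r)).toReal / Real.log r)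
    (nhdsWithin 0 (Set.Ioi 0)) (nhds d)

/-- `f_{x,t}(0) = lim_n f_{x_1,t} ∘ ⋯ ∘ f_{x_n,t}(0)` for the IFS
`{y ↦ r i t · y + s i t}_{i}`, written as a series. -/
def codingPoint {Λ : Type*} (r s : Λ → ℝ → ℝ) (x : ℕ → Λ) (t : ℝ) : ℝ :=
  ∑' n : ℕ, (∏ k ∈ Finset.range n, r (x k) t) * s (x n) t

/-- The metric `d(x,y) = 2^{-|x∧y|}` on `Λ^ℕ`, where `|x∧y|` is the length of the longest
common initial segment. -/
def seqDist {Λ : Type*} (x y : ℕ → Λ) : ℝ :=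
  if x = y then 0 else (2 : ℝ) ^ (-((sInf {k : ℕ | x k ≠ y k} : ℕ) : ℤ))

/-- The similarity dimension `(Σ_i p_i log p_i) / (Σ_i p_i log |r_{i,t}|)`. -/
def simDim {Λ : Type*} [Fintype Λ] (p : Λ → ℝ) (r : Λ → ℝ → ℝ) (t : ℝ) : ℝ :=
  (∑ i : Λ, p i * Real.log (p i)) / (∑ i : Λ, p i * Real.log |r i t|)

/-- `μ` is the self-similar measure associated to the IFS `{y ↦ r i t · y + s i t}_i` and the
probability vector `p`. -/
def IsSelfSimilarMeasure {Λ : Type*} [Fintype Λ] (r s : Λ → ℝ → ℝ) (p : Λ → ℝ) (t : ℝ)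
    (μ : Measure ℝ) : Prop :=
  IsProbabilityMeasure μ ∧
    μ = ∑ i : Λ, ENNReal.ofReal (p i) • μ.map (fun x => r i t * x + s i t)

namespace SSM

/-! ### Shannon entropy on finite weighted spaces -/

/-- The total weight of the fibre of `X` through `ω`, i.e. `P(X = X ω)`. -/
def mass {Ω α : Type*} [Fintype Ω] (p : Ω → ℝ) (X : Ω → α) (ω : Ω) : ℝ :=
  ∑ ω', if X ω' = X ω then p ω' else 0

/-- Shannon entropy (natural logarithm) of a random variable `X` on the finite weighted space
`(Ω, p)`, written as the expectation of `-log P(X = X ω)`. -/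
def Ent {Ω α : Type*} [Fintype Ω] (p : Ω → ℝ) (X : Ω → α) : ℝ :=
  ∑ ω, p ω * (-Real.log (mass p X ω))

/-- `p` is a probability vector on the finite type `Ω`. -/
structure IsPr {Ω : Type*} [Fintype Ω] (p : Ω → ℝ) : Prop where
  nonneg : ∀ ω, 0 ≤ p ω
  sum_one : ∑ ω, p ω = 1

section basics
variable {Ω α β γ : Type*} [Fintype Ω] {p : Ω → ℝ}

lemma le_mass (hp : IsPr p) (X : Ω → α) (ω : Ω) : p ω ≤ mass p X ω := by
  have := Finset.single_le_sum (f := fun ω' => if X ω' = X ω then p ω' else 0) (s := Finset.univ)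
    (fun i _ => by split_ifs <;> simp [hp.nonneg]) (Finset.mem_univ ω)
  simpa [mass] using this

lemma mass_pos (hp : IsPr p) (X : Ω → α) {ω : Ω} (h : p ω ≠ 0) : 0 < mass p X ω :=
  lt_of_lt_of_le (lt_of_le_of_ne (hp.nonneg ω) (Ne.symm h)) (le_mass hp X ω)

lemma mass_mono (hp : IsPr p) {X : Ω → α} {Y : Ω → β}
    (h : ∀ ω ω', X ω = X ω' → Y ω = Y ω') (ω : Ω) : mass p X ω ≤ mass p Y ω := by
  unfold mass
  refine Finset.sum_le_sum fun ω' _ => ?_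
  by_cases hx : X ω' = X ω
  · simp [hx, h _ _ hx]
  · simp only [hx, if_false]
    split_ifs <;> simp [hp.nonneg]

lemma mass_le_one (hp : IsPr p) (X : Ω → α) (ω : Ω) : mass p X ω ≤ 1 := by
  rw [← hp.sum_one]
  unfold mass
  refine Finset.sum_le_sum fun ω' _ => ?_
  split_ifs <;> simp [hp.nonneg]

lemma Ent_le_of_ker (hp : IsPr p) {X : Ω → α} {Y : Ω → β}
    (h : ∀ ω ω', X ω = X ω' → Y ω = Y ω') : Ent p Y ≤ Ent p X := by
  unfold Ent
  refine Finset.sum_le_sum fun ω _ => ?_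
  by_cases h0 : p ω = 0
  · simp [h0]
  · refine mul_le_mul_of_nonneg_left ?_ (hp.nonneg ω)
    exact neg_le_neg (Real.log_le_log (mass_pos hp X h0) (mass_mono hp h ω))

lemma Ent_nonneg (hp : IsPr p) (X : Ω → α) : 0 ≤ Ent p X := by
  unfold Ent
  refine Finset.sum_nonneg fun ω _ => mul_nonneg (hp.nonneg ω) ?_
  by_cases h0 : p ω = 0
  · have := Real.log_nonpos ((hp.nonneg ω).trans (le_mass hp X ω)) (mass_le_one hp X ω)
    linarith
  · have := Real.log_nonpos (mass_pos hp X h0).le (mass_le_one hp X ω)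
    linarith

lemma Ent_unit (hp : IsPr p) : Ent p (fun _ => ()) = 0 := by
  unfold Ent mass
  simp [hp.sum_one]

/-- Gibbs' inequality in conditional form: `H(X | Y)` is at most the cross entropy with respect to
any family of subprobability vectors `q · y`. -/
lemma gibbs (hp : IsPr p) (X : Ω → α) (Y : Ω → β) (q : α → β → ℝ)
    (hq0 : ∀ x y, 0 ≤ q x y) (hq : ∀ ω, p ω ≠ 0 → 0 < q (X ω) (Y ω))
    (hs : ∀ ω, ∑ x ∈ Finset.univ.image X, q x (Y ω) ≤ 1) :
    Ent p (fun ω => (X ω, Y ω)) - Ent p Y ≤ ∑ ω, p ω * (-Real.log (q (X ω) (Y ω))) := by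
  set m := mass p (fun ω => (X ω, Y ω)) with hm
  have key : ∑ ω, p ω * (mass p Y ω * q (X ω) (Y ω) / m ω) ≤ 1 := by
    calc ∑ ω, p ω * (mass p Y ω * q (X ω) (Y ω) / m ω)
        = ∑ ω, ∑ ω', if Y ω' = Y ω then p ω' * (p ω * q (X ω) (Y ω) / m ω) else 0 := by
          refine Finset.sum_congr rfl fun ω _ => ?_
          unfold mass
          rw [Finset.sum_mul, Finset.sum_div, Finset.mul_sum]
          refine Finset.sum_congr rfl fun ω' _ => ?_
          split_ifs <;> ring
      _ = ∑ ω', ∑ ω, if Y ω' = Y ω then p ω' * (p ω * q (X ω) (Y ω) / m ω) else 0 :=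
          Finset.sum_comm
      _ ≤ ∑ ω', p ω' := by
          refine Finset.sum_le_sum fun ω' _ => ?_
          have h1 : (∑ ω, if Y ω' = Y ω then p ω' * (p ω * q (X ω) (Y ω) / m ω) else 0)
              = p ω' * ∑ x ∈ Finset.univ.image X, q x (Y ω') *
                ∑ ω, if X ω = x ∧ Y ω = Y ω' then p ω / m ω else 0 := by
            simp_rw [Finset.mul_sum]
            rw [Finset.sum_comm]
            refine Finset.sum_congr rfl fun ω _ => ?_
            rw [Finset.sum_eq_single (X ω)]
            · by_cases hy : Y ω' = Y ω
              · simp [hy]; left; ring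
              · have : ¬ Y ω = Y ω' := fun h => hy h.symm
                simp [hy, this]
            · intro x _ hx
              have : ¬ X ω = x := fun h => hx h.symm
              simp [this]
            · intro h; simp at h
          rw [h1]
          conv_rhs => rw [← mul_one (p ω')]
          refine mul_le_mul_of_nonneg_left (le_trans ?_ (hs ω')) (hp.nonneg ω')
          refine Finset.sum_le_sum fun x _ => ?_
          conv_rhs => rw [← mul_one (q x _)]
          refine mul_le_mul_of_nonneg_left ?_ (hq0 _ _)
          by_cases hex : ∃ ω₀, X ω₀ = x ∧ Y ω₀ = Y ω'
          · obtain ⟨ω₀, hx0, hy0⟩ := hex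
            have h2 : (∑ ω, if X ω = x ∧ Y ω = Y ω' then p ω / m ω else 0) = m ω₀ / m ω₀ := by
              have : m ω₀ = ∑ ω, if X ω = x ∧ Y ω = Y ω' then p ω else 0 := by
                rw [hm]; unfold mass
                simp [hx0, hy0]
              conv_rhs => rw [this, Finset.sum_div]
              refine Finset.sum_congr rfl fun ω _ => ?_
              split_ifs with h
              · rw [← this]
                congr 1
                rw [hm]; unfold mass
                simp [hx0, hy0, h.1, h.2]
              · simp
            rw [h2]; exact div_self_le_one _
          · have : ∀ ω, ¬ (X ω = x ∧ Y ω = Y ω') := fun ω h => hex ⟨ω, h⟩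
            simp [this]
      _ = 1 := hp.sum_one
  have h3 : Ent p (fun ω => (X ω, Y ω)) - Ent p Y - ∑ ω, p ω * (-Real.log (q (X ω) (Y ω)))
      ≤ ∑ ω, (p ω * (mass p Y ω * q (X ω) (Y ω) / m ω) - p ω) := by
    unfold Ent
    rw [← Finset.sum_sub_distrib, ← Finset.sum_sub_distrib]
    refine Finset.sum_le_sum fun ω _ => ?_
    by_cases h0 : p ω = 0
    · simp [h0]
    · have a1 := mass_pos hp (fun ω => (X ω, Y ω)) h0
      have a2 := mass_pos hp Y h0
      have a3 := hq ω h0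
      have := Real.log_le_sub_one_of_pos (x := mass p Y ω * q (X ω) (Y ω) / m ω) (by positivity)
      rw [Real.log_div (by positivity) (by positivity), Real.log_mul (by positivity)
        (by positivity)] at this
      have := mul_le_mul_of_nonneg_left this (hp.nonneg ω)
      simp only [← hm]
      linarith
  rw [Finset.sum_sub_distrib, hp.sum_one] at h3
  linarith

/-- Submodularity of entropy: `H(X | Y, Z) ≤ H(X | Z)`. -/
lemma submod (hp : IsPr p) (X : Ω → α) (Y : Ω → β) (Z : Ω → γ) :
    Ent p (fun ω => (X ω, Y ω, Z ω)) + Ent p Z ≤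
      Ent p (fun ω => (X ω, Z ω)) + Ent p (fun ω => (Y ω, Z ω)) := by
  let P : α → γ → ℝ := fun x z => ∑ ω, if X ω = x ∧ Z ω = z then p ω else 0
  let Q : γ → ℝ := fun z => ∑ ω, if Z ω = z then p ω else 0
  have hP0 : ∀ x z, 0 ≤ P x z := fun x z => Finset.sum_nonneg fun ω _ => by
    split_ifs <;> simp [hp.nonneg]
  have hQ0 : ∀ z, 0 ≤ Q z := fun z => Finset.sum_nonneg fun ω _ => by
    split_ifs <;> simp [hp.nonneg]
  have hPm : ∀ ω, P (X ω) (Z ω) = mass p (fun ω => (X ω, Z ω)) ω := fun ω => by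
    simp [P, mass]
  have hQm : ∀ ω, Q (Z ω) = mass p Z ω := fun ω => by simp [Q, mass]
  have := gibbs hp X (fun ω => (Y ω, Z ω)) (fun x yz => P x yz.2 / Q yz.2)
    (fun x y => div_nonneg (hP0 _ _) (hQ0 _))
    (fun ω h0 => by
      simp only [hPm, hQm]
      exact div_pos (mass_pos hp _ h0) (mass_pos hp _ h0))
    (fun ω => by
      simp only
      rw [← Finset.sum_div]
      have : ∑ x ∈ Finset.univ.image X, P x (Z ω) = Q (Z ω) := by
        simp only [P, Q]
        rw [Finset.sum_comm]
        refine Finset.sum_congr rfl fun ω' _ => ?_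
        rw [Finset.sum_eq_single (X ω')]
        · simp
        · intro x _ hx
          have : ¬ X ω' = x := fun h => hx h.symm
          simp [this]
        · intro h; simp at h
      rw [this]; exact div_self_le_one _)
  have h2 : ∑ ω, p ω * (-Real.log (P (X ω) (Z ω) / Q (Z ω))) =
      Ent p (fun ω => (X ω, Z ω)) - Ent p Z := by
    unfold Ent
    rw [← Finset.sum_sub_distrib]
    refine Finset.sum_congr rfl fun ω _ => ?_
    by_cases h0 : p ω = 0
    · simp [h0]
    · rw [hPm, hQm, Real.log_div (mass_pos hp _ h0).ne' (mass_pos hp _ h0).ne']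
      ring
  simp only at this
  rw [h2] at this
  linarith

/-- If `Y` determines `V`, and determines the integer variable `F` up to an error `K`, then
`H(F, V) ≤ H(Y) + log (2K+1)`. -/
lemma Ent_near (hp : IsPr p) (F : Ω → ℤ) (V : Ω → γ) (Y : Ω → β) (K : ℕ)
    (h : ∀ ω ω', Y ω = Y ω' → |F ω - F ω'| ≤ K ∧ V ω = V ω') :
    Ent p (fun ω => (F ω, V ω)) ≤ Ent p Y + Real.log (2 * K + 1) := by
  have h1 : Ent p (fun ω => (F ω, V ω)) ≤ Ent p (fun ω => (F ω, Y ω)) :=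
    Ent_le_of_ker hp fun ω ω' hh => by
      simp only [Prod.mk.injEq] at hh ⊢
      exact ⟨hh.1, (h _ _ hh.2).2⟩
  have h2 := gibbs hp F Y (fun x y => if ∃ ω, F ω = x ∧ Y ω = y then 1 / (2 * K + 1 : ℝ) else 0)
    (fun x y => by split_ifs <;> positivity)
    (fun ω _ => by
      have : ∃ ω', F ω' = F ω ∧ Y ω' = Y ω := ⟨ω, rfl, rfl⟩
      simp only [this, if_true]; positivity)
    (fun ω => by
      rw [← Finset.sum_filter, Finset.sum_const, nsmul_eq_mul, mul_one_div]
      rw [div_le_one (by positivity)]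
      have : (Finset.univ.image F).filter (fun x => ∃ ω', F ω' = x ∧ Y ω' = Y ω) ⊆
          Finset.Icc (F ω - K) (F ω + K) := by
        intro x hx
        simp only [Finset.mem_filter] at hx
        obtain ⟨ω', rfl, hy⟩ := hx.2
        have := abs_le.1 (h _ _ hy).1
        simp only [Finset.mem_Icc]
        constructor <;> linarith [this.1, this.2]
      have := Finset.card_le_card this
      rw [Int.card_Icc] at this
      have h4 : (F ω + K + 1 - (F ω - K)).toNat = 2 * K + 1 := by omega
      rw [h4] at this
      have h5 : (((Finset.univ.image F).filter
          (fun x => ∃ ω', F ω' = x ∧ Y ω' = Y ω)).card : ℝ) ≤ 2 * K + 1 := by exact_mod_cast this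
      refine le_trans (le_of_eq ?_) h5
      congr!)
  have h3 : ∑ ω, p ω * (-Real.log (if ∃ ω', F ω' = F ω ∧ Y ω' = Y ω then 1 / (2 * K + 1 : ℝ)
      else 0)) = Real.log (2 * K + 1) := by
    have : ∀ ω, ∃ ω', F ω' = F ω ∧ Y ω' = Y ω := fun ω => ⟨ω, rfl, rfl⟩
    simp only [this, if_true, one_div, Real.log_inv, neg_neg]
    rw [← Finset.sum_mul, hp.sum_one, one_mul]
  rw [h3] at h2
  linarith

lemma Ent_near' (hp : IsPr p) (F : Ω → ℤ) (Y : Ω → β) (K : ℕ)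
    (h : ∀ ω ω', Y ω = Y ω' → |F ω - F ω'| ≤ K) :
    Ent p F ≤ Ent p Y + Real.log (2 * K + 1) := by
  refine le_trans ?_ (Ent_near hp F (fun _ => ()) Y K fun ω ω' hh => ⟨h _ _ hh, rfl⟩)
  exact Ent_le_of_ker hp fun ω ω' hh => by simpa using hh

end basics

/-! ### Products and push-forwards of weights -/

section transport
variable {Ω Ω' α β : Type*} [Fintype Ω] [Fintype Ω'] {q : Ω' → ℝ} {p : Ω → ℝ}

/-- `φ` pushes the weights `q` forward to the weights `p`. -/
def Push (q : Ω' → ℝ) (φ : Ω' → Ω) (p : Ω → ℝ) : Prop :=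
  ∀ ω, (∑ ω', if φ ω' = ω then q ω' else 0) = p ω

lemma Push.sum {φ : Ω' → Ω} (h : Push q φ p) (f : Ω → ℝ) :
    ∑ ω', q ω' * f (φ ω') = ∑ ω, p ω * f ω := by
  have : ∀ ω, p ω * f ω = ∑ ω', if φ ω' = ω then q ω' * f (φ ω') else 0 := by
    intro ω
    rw [← h ω, Finset.sum_mul]
    refine Finset.sum_congr rfl fun ω' _ => ?_
    split_ifs with hh
    · rw [hh]
    · simp
  simp_rw [this]
  rw [Finset.sum_comm]
  simp

lemma Push.mass_eq {φ : Ω' → Ω} (h : Push q φ p) (X : Ω → α) (ω' : Ω') :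
    mass q (fun ω' => X (φ ω')) ω' = mass p X (φ ω') := by
  have := h.sum (fun ω => if X ω = X (φ ω') then 1 else 0)
  unfold mass
  simpa using this

lemma Push.Ent_eq {φ : Ω' → Ω} (h : Push q φ p) (X : Ω → α) :
    Ent q (fun ω' => X (φ ω')) = Ent p X := by
  unfold Ent
  rw [← h.sum]
  refine Finset.sum_congr rfl fun ω' _ => ?_
  rw [h.mass_eq]

lemma push_equiv (e : Ω' ≃ Ω) (h : ∀ ω', q ω' = p (e ω')) : Push q e p := by
  intro ω
  rw [Finset.sum_eq_single (e.symm ω)]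
  · simp [h]
  · intro b _ hb
    have : e b ≠ ω := fun hh => hb (by simp [← hh])
    simp [this]
  · simp

/-- Weights of the product of two weighted spaces. -/
def prodW (p : Ω → ℝ) (q : Ω' → ℝ) : Ω × Ω' → ℝ := fun ω => p ω.1 * q ω.2

lemma IsPr.prod (hp : IsPr p) (hq : IsPr q) : IsPr (prodW p q) := by
  refine ⟨fun ω => mul_nonneg (hp.nonneg _) (hq.nonneg _), ?_⟩
  simp only [prodW, Fintype.sum_prod_type]
  simp_rw [← Finset.mul_sum, hq.sum_one, mul_one, hp.sum_one]

lemma push_fst (hq : IsPr q) : Push (prodW p q) Prod.fst p := by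
  intro ω
  simp only [prodW, Fintype.sum_prod_type]
  rw [Finset.sum_eq_single ω]
  · simp [← Finset.mul_sum, hq.sum_one]
  · intro b _ hb; simp [hb]
  · simp

lemma push_snd (hp : IsPr p) : Push (prodW p q) Prod.snd q := by
  intro ω
  simp only [prodW, Fintype.sum_prod_type_right]
  rw [Finset.sum_eq_single ω]
  · simp [← Finset.sum_mul, hp.sum_one]
  · intro b _ hb; simp [hb]
  · simp

lemma Ent_prod (hp : IsPr p) (hq : IsPr q) (X : Ω → α) (Y : Ω' → β) :
    Ent (prodW p q) (fun ω => (X ω.1, Y ω.2)) = Ent p X + Ent q Y := by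
  have hm : ∀ ω, mass (prodW p q) (fun ω => (X ω.1, Y ω.2)) ω = mass p X ω.1 * mass q Y ω.2 := by
    intro ω
    unfold mass prodW
    rw [Finset.sum_mul_sum, Fintype.sum_prod_type]
    refine Finset.sum_congr rfl fun a _ => Finset.sum_congr rfl fun b _ => ?_
    by_cases h1 : X a = X ω.1 <;> by_cases h2 : Y b = Y ω.2 <;> simp [h1, h2]
  rw [← (push_fst (p := p) hq).Ent_eq X, ← (push_snd (q := q) hp).Ent_eq Y]
  unfold Ent
  rw [← Finset.sum_add_distrib]
  refine Finset.sum_congr rfl fun ω _ => ?_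
  rw [hm, (push_fst (p := p) hq).mass_eq X, (push_snd (q := q) hp).mass_eq Y]
  by_cases h0 : prodW p q ω = 0
  · simp [h0]
  · have h1 : p ω.1 ≠ 0 := fun h => h0 (by simp [prodW, h])
    have h2 : q ω.2 ≠ 0 := fun h => h0 (by simp [prodW, h])
    rw [Real.log_mul (mass_pos hp _ h1).ne' (mass_pos hq _ h2).ne']
    ring

/-- Weights of the product of `k` copies of a weighted space. -/
def powW (k : ℕ) (p : Ω → ℝ) : (Fin k → Ω) → ℝ := fun ω => ∏ j, p (ω j)

lemma IsPr.pow (hp : IsPr p) (k : ℕ) : IsPr (powW k p) := by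
  refine ⟨fun ω => Finset.prod_nonneg fun j _ => hp.nonneg _, ?_⟩
  unfold powW
  have := Finset.prod_univ_sum (fun _ : Fin k => (Finset.univ : Finset Ω)) (fun _ ω => p ω)
  simp only [Fintype.piFinset_univ] at this
  rw [← this]
  simp [hp.sum_one]

end transport

/-! ### Entropy at a scale and the Kaimanovich–Vershik inequality -/

/-- Index of the cell of length `r` containing `x`. -/
def D (r x : ℝ) : ℤ := ⌊x / r⌋

lemma D_near {r x y : ℝ} (hr : 0 < r) (K : ℕ) (h : |x - y| ≤ K * r) : |D r x - D r y| ≤ K := by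
  unfold D
  have h1 : |x / r - y / r| ≤ K := by
    rw [← sub_div, abs_div, abs_of_pos hr]
    exact (div_le_iff₀ hr).2 h
  rw [abs_le] at h1 ⊢
  constructor
  · have : ⌊y / r⌋ ≤ ⌊x / r + (K : ℤ)⌋ := Int.floor_le_floor (by push_cast; linarith [h1.1])
    rw [Int.floor_add_intCast] at this
    linarith
  · have : ⌊x / r⌋ ≤ ⌊y / r + (K : ℤ)⌋ := Int.floor_le_floor (by push_cast; linarith [h1.2])
    rw [Int.floor_add_intCast] at this
    linarith

lemma D_eq_imp {r x y : ℝ} (hr : 0 < r) (h : D r x = D r y) : |x - y| < r := by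
  unfold D at h
  have := Int.abs_sub_lt_one_of_floor_eq_floor h
  rwa [← sub_div, abs_div, abs_of_pos hr, div_lt_one hr] at this

lemma D_scale {c : ℝ} (hc : 0 < c) (r x : ℝ) : D (c * r) (c * x) = D r x := by
  unfold D
  rw [mul_div_mul_left _ _ hc.ne']

section incr
variable {Ω α β γ : Type*} [Fintype Ω] {p : Ω → ℝ}

/-- The entropy gained when refining the scale from `r₂` to `r₁` only decreases (up to a constant)
when one conditions on more information. -/
lemma increment (hp : IsPr p) (T : Ω → ℝ) (V : Ω → β) (W : Ω → γ)
    (hVW : ∀ ω ω', V ω = V ω' → W ω = W ω') {r₁ r₂ : ℝ} (h0 : 0 < r₁) (h12 : r₁ ≤ r₂) :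
    Ent p (fun ω => (D r₁ (T ω), V ω)) - Ent p (fun ω => (D r₂ (T ω), V ω)) ≤
    Ent p (fun ω => (D r₁ (T ω), W ω)) - Ent p (fun ω => (D r₂ (T ω), W ω)) + Real.log 3 := by
  have h1 := submod hp (fun ω => D r₁ (T ω)) V (fun ω => (D r₂ (T ω), W ω))
  have h2 : Ent p (fun ω => (D r₁ (T ω), V ω)) ≤
      Ent p (fun ω => (D r₁ (T ω), V ω, D r₂ (T ω), W ω)) :=
    Ent_le_of_ker hp fun ω ω' h => by
      simp only [Prod.mk.injEq] at h ⊢; exact ⟨h.1, h.2.1⟩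
  have h3 : Ent p (fun ω => (V ω, D r₂ (T ω), W ω)) ≤ Ent p (fun ω => (D r₂ (T ω), V ω)) :=
    Ent_le_of_ker hp fun ω ω' h => by
      simp only [Prod.mk.injEq] at h ⊢; exact ⟨h.2, h.1, hVW _ _ h.2⟩
  have h4 : Ent p (fun ω => (D r₁ (T ω), D r₂ (T ω), W ω)) ≤
      Ent p (fun ω => (D r₁ (T ω), W ω)) + Real.log (2 * (1 : ℕ) + 1) := by
    refine le_trans (Ent_le_of_ker hp (X := fun ω => (D r₂ (T ω), D r₁ (T ω), W ω)) ?_)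
      (Ent_near hp _ (fun ω => (D r₁ (T ω), W ω)) _ 1 ?_)
    · intro ω ω' h
      simp only [Prod.mk.injEq] at h ⊢; tauto
    · intro ω ω' h
      refine ⟨D_near (h0.trans_le h12) 1 ?_, h⟩
      simp only [Prod.mk.injEq] at h
      have := D_eq_imp h0 h.1
      push_cast; linarith
  norm_num at h4
  linarith

/-- Refining the scale increases entropy, up to a constant. -/
lemma Ent_scale_mono (hp : IsPr p) (T : Ω → ℝ) (W : Ω → γ) {r₁ r₂ : ℝ} (h0 : 0 < r₁)
    (h12 : r₁ ≤ r₂) :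
    Ent p (fun ω => (D r₂ (T ω), W ω)) ≤ Ent p (fun ω => (D r₁ (T ω), W ω)) + Real.log 3 := by
  have := Ent_near hp (fun ω => D r₂ (T ω)) W (fun ω => (D r₁ (T ω), W ω)) 1 (fun ω ω' h => by
    simp only [Prod.mk.injEq] at h
    refine ⟨D_near (h0.trans_le h12) 1 ?_, h.2⟩
    have := D_eq_imp h0 h.1
    push_cast; linarith)
  norm_num at this
  linarith

/-- Perturbing a variable by at most `K` cells changes its entropy by at most a constant. -/
lemma Ent_perturb (hp : IsPr p) (T T' : Ω → ℝ) (V : Ω → γ) {r : ℝ} (hr : 0 < r) (K : ℕ)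
    (h : ∀ ω ω', V ω = V ω' → |(T ω - T' ω) - (T ω' - T' ω')| ≤ K * r) :
    Ent p (fun ω => (D r (T ω), V ω)) ≤
      Ent p (fun ω => (D r (T' ω), V ω)) + Real.log (2 * (K + 1 : ℕ) + 1) := by
  refine Ent_near hp _ _ _ (K + 1) fun ω ω' hh => ?_
  simp only [Prod.mk.injEq] at hh
  refine ⟨D_near hr _ ?_, hh.2⟩
  have h1 := abs_lt.1 (D_eq_imp hr hh.1)
  have h2 := abs_le.1 (h _ _ hh.2)
  push_cast
  rw [abs_le]
  constructor <;> nlinarith [h1.1, h1.2, h2.1, h2.2]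

end incr

section window
variable {ΩA ΩB ΩZ β γ : Type*} [Fintype ΩA] [Fintype ΩB] [Fintype ΩZ]
  {pA : ΩA → ℝ} {pB : ΩB → ℝ} {pZ : ΩZ → ℝ}

/-- Adding an independent variable does not decrease the entropy gained between two scales. -/
lemma window_mono (hA : IsPr pA) (hB : IsPr pB) (A : ΩA → ℝ) (B : ΩB → ℝ) (W : ΩA → γ)
    {r₁ r₂ : ℝ} (h0 : 0 < r₁) (h12 : r₁ ≤ r₂) :
    Ent pB (fun b => D r₁ (B b)) - Ent pB (fun b => D r₂ (B b)) ≤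
    Ent (prodW pA pB) (fun ω => (D r₁ (A ω.1 + B ω.2), W ω.1)) -
      Ent (prodW pA pB) (fun ω => (D r₂ (A ω.1 + B ω.2), W ω.1)) + 3 * Real.log 3 := by
  have hP := hA.prod hB
  have h1 := increment hP (fun ω => A ω.1 + B ω.2) (fun ω => ω.1) (fun ω => W ω.1)
    (fun ω ω' h => by simp only [h]) h0 h12
  have e : ∀ r, Ent (prodW pA pB) (fun ω => (D r (B ω.2), ω.1)) =
      Ent pB (fun b => D r (B b)) + Ent pA (fun a => a) := by
    intro r
    rw [add_comm, ← Ent_prod hA hB]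
    refine le_antisymm (Ent_le_of_ker hP ?_) (Ent_le_of_ker hP ?_) <;>
    · intro ω ω' h
      simp only [Prod.mk.injEq] at h ⊢; tauto
  have h2 := Ent_perturb hP (fun ω => B ω.2) (fun ω => A ω.1 + B ω.2) (fun ω => ω.1) h0 0
    (fun ω ω' h => by simp only [h]; simp)
  have h3 := Ent_perturb hP (fun ω => A ω.1 + B ω.2) (fun ω => B ω.2) (fun ω => ω.1)
    (h0.trans_le h12) 0 (fun ω ω' h => by simp only [h]; simp)
  rw [e] at h2 h3
  norm_num at h2 h3
  linarith

/-- Kaimanovich–Vershik type inequality: if `(A, W_A)`, `(B, W_B)` and `Z` are independent then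
`H(A+B+Z | W_A, W_B) + H(Z) ≤ H(A+Z | W_A) + H(B+Z | W_B)` at a fixed scale, up to a constant. -/
lemma kv_step (hA : IsPr pA) (hB : IsPr pB) (hZ : IsPr pZ) (A : ΩA → ℝ) (B : ΩB → ℝ) (Z : ΩZ → ℝ)
    (WA : ΩA → β) (WB : ΩB → γ) {r : ℝ} (hr : 0 < r) :
    Ent (prodW (prodW pB pA) pZ)
      (fun ω => (D r (B ω.1.1 + A ω.1.2 + Z ω.2), WB ω.1.1, WA ω.1.2)) +
      Ent pZ (fun z => D r (Z z)) ≤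
    Ent (prodW pA pZ) (fun ω => (D r (A ω.1 + Z ω.2), WA ω.1)) +
    Ent (prodW pB pZ) (fun ω => (D r (B ω.1 + Z ω.2), WB ω.1)) + 3 * Real.log 3 := by
  set P := prodW (prodW pB pA) pZ with hPdef
  have hP : IsPr P := (hB.prod hA).prod hZ
  have s := submod hP (fun ω => ω.1.1) (fun ω => (ω.1.2, D r (B ω.1.1 + Z ω.2)))
    (fun ω => (D r (B ω.1.1 + A ω.1.2 + Z ω.2), WB ω.1.1, WA ω.1.2))
  -- the joint variable on the left dominates the full information on `A`, `B` and `Z`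
  have h1 : Ent pB (fun b => b) + Ent pA (fun a => a) + Ent pZ (fun z => D r (Z z)) ≤
      Ent P (fun ω => (ω.1.1, (ω.1.2, D r (B ω.1.1 + Z ω.2)),
        (D r (B ω.1.1 + A ω.1.2 + Z ω.2), WB ω.1.1, WA ω.1.2))) + Real.log 3 := by
    rw [← Ent_prod hB hA, ← Ent_prod (hB.prod hA) hZ]
    have t := Ent_perturb hP (fun ω => Z ω.2) (fun ω => B ω.1.1 + Z ω.2) (fun ω => ω.1) hr 0
      (fun ω ω' h => by simp only [h]; simp)
    norm_num at t
    refine le_trans (Ent_le_of_ker hP ?_) (t.trans (add_le_add_left (Ent_le_of_ker hP ?_) _))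
    · intro ω ω' h
      simp only [Prod.mk.injEq] at h ⊢; simp only [h.1, h.2, and_self]
    · intro ω ω' h
      simp only [Prod.mk.injEq] at h ⊢; exact ⟨h.2.1.2, Prod.ext h.1 h.2.1.1⟩
  have h2 : Ent P (fun ω => ((ω.1.2, D r (B ω.1.1 + Z ω.2)),
      (D r (B ω.1.1 + A ω.1.2 + Z ω.2), WB ω.1.1, WA ω.1.2))) ≤
      Ent pA (fun a => a) + Ent (prodW pB pZ) (fun ω => (D r (B ω.1 + Z ω.2), WB ω.1))
        + Real.log 3 := by
    rw [← Ent_prod hA (hB.prod hZ)]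
    have pu : Push P (fun ω => (ω.1.2, (ω.1.1, ω.2))) (prodW pA (prodW pB pZ)) :=
      push_equiv (q := P) (p := prodW pA (prodW pB pZ))
        ⟨fun ω => (ω.1.2, (ω.1.1, ω.2)), fun ω => ((ω.2.1, ω.1), ω.2.2), fun _ => rfl,
          fun _ => rfl⟩ (fun ω => by simp [hPdef, prodW]; ring)
    rw [← pu.Ent_eq]
    have t := Ent_perturb hP (fun ω => B ω.1.1 + A ω.1.2 + Z ω.2) (fun ω => B ω.1.1 + Z ω.2)
      (fun ω => (ω.1.2, D r (B ω.1.1 + Z ω.2), WB ω.1.1)) hr 0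
      (fun ω ω' h => by
        simp only [Prod.mk.injEq] at h
        simp only [h.1]
        have : B ω.1.1 + A ω'.1.2 + Z ω.2 - (B ω.1.1 + Z ω.2) -
          (B ω'.1.1 + A ω'.1.2 + Z ω'.2 - (B ω'.1.1 + Z ω'.2)) = 0 := by ring
        rw [this]; simp)
    norm_num at t
    refine le_trans (Ent_le_of_ker hP ?_) (t.trans (add_le_add_left (Ent_le_of_ker hP ?_) _))
    · intro ω ω' h
      simp only [Prod.mk.injEq] at h ⊢
      refine ⟨⟨h.2.1, h.2.2.1⟩, h.1, h.2.2.2, by rw [h.2.1]⟩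
    · intro ω ω' h
      simp only [Prod.mk.injEq] at h ⊢; tauto
  have h3 : Ent P (fun ω => (ω.1.1,
      (D r (B ω.1.1 + A ω.1.2 + Z ω.2), WB ω.1.1, WA ω.1.2))) ≤
      Ent pB (fun a => a) + Ent (prodW pA pZ) (fun ω => (D r (A ω.1 + Z ω.2), WA ω.1))
        + Real.log 3 := by
    rw [← Ent_prod hB (hA.prod hZ)]
    have pu : Push P (fun ω => (ω.1.1, (ω.1.2, ω.2))) (prodW pB (prodW pA pZ)) :=
      push_equiv (q := P) (p := prodW pB (prodW pA pZ))
        ⟨fun ω => (ω.1.1, (ω.1.2, ω.2)), fun ω => ((ω.1, ω.2.1), ω.2.2), fun _ => rfl,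
          fun _ => rfl⟩ (fun ω => by simp [hPdef, prodW]; ring)
    rw [← pu.Ent_eq]
    have t := Ent_perturb hP (fun ω => B ω.1.1 + A ω.1.2 + Z ω.2) (fun ω => A ω.1.2 + Z ω.2)
      (fun ω => (ω.1.1, WA ω.1.2)) hr 0
      (fun ω ω' h => by
        simp only [Prod.mk.injEq] at h
        simp only [h.1]
        have : B ω'.1.1 + A ω.1.2 + Z ω.2 - (A ω.1.2 + Z ω.2) -
          (B ω'.1.1 + A ω'.1.2 + Z ω'.2 - (A ω'.1.2 + Z ω'.2)) = 0 := by ring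
        rw [this]; simp)
    norm_num at t
    refine le_trans (Ent_le_of_ker hP ?_) (t.trans (add_le_add_left (Ent_le_of_ker hP ?_) _))
    · intro ω ω' h
      simp only [Prod.mk.injEq] at h ⊢
      refine ⟨h.2.1, h.1, by rw [h.2.1], h.2.2⟩
    · intro ω ω' h
      simp only [Prod.mk.injEq] at h ⊢; tauto
  linarith

end window

section power
variable {Ω ΩZ γ : Type*} [Fintype Ω] [Fintype ΩZ] {p : Ω → ℝ} {pZ : ΩZ → ℝ}

lemma push_cons (k : ℕ) : Push (prodW p (powW k p)) (fun ω => Fin.cons ω.1 ω.2)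
    (powW (k + 1) p) := by
  refine push_equiv (q := prodW p (powW k p)) (p := powW (k + 1) p)
    (Fin.consEquiv (fun _ : Fin (k + 1) => Ω)) (fun ω => ?_)
  simp [prodW, powW, Fin.prod_univ_succ, Fin.consEquiv]

lemma Push.prod {Ω₁ Ω₂ Ω₃ : Type*} [Fintype Ω₁] [Fintype Ω₂] [Fintype Ω₃] {p₁ : Ω₁ → ℝ}
    {p₂ : Ω₂ → ℝ} {φ : Ω₁ → Ω₂} (h : Push p₁ φ p₂) (p₃ : Ω₃ → ℝ) :
    Push (prodW p₁ p₃) (fun ω => (φ ω.1, ω.2)) (prodW p₂ p₃) := by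
  intro ω
  simp only [prodW, Fintype.sum_prod_type]
  rw [← h ω.1, Finset.sum_mul]
  refine Finset.sum_congr rfl fun a _ => ?_
  rw [Finset.sum_eq_single ω.2]
  · by_cases hh : φ a = ω.1
    · simp [hh]
    · have : ¬ (φ a, ω.2) = ω := fun h' => hh (by rw [← h'])
      simp [hh, this]
  · intro b _ hb
    have : ¬ (φ a, b) = ω := fun h' => hb (by rw [← h'])
    simp [this]
  · simp

lemma Ent_pow (hp : IsPr p) (W : Ω → γ) (k : ℕ) :
    Ent (powW k p) (fun ω j => W (ω j)) = k * Ent p W := by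
  induction k with
  | zero =>
    have h : Ent (powW 0 p) (fun ω j => W (ω j)) ≤ Ent (powW 0 p) (fun _ => ()) :=
      Ent_le_of_ker (hp.pow 0) fun ω ω' _ => by funext j; exact j.elim0
    rw [Ent_unit (hp.pow 0)] at h
    have := Ent_nonneg (hp.pow 0) (fun ω j => W (ω j))
    simp; linarith
  | succ k ih =>
    rw [← (push_cons k).Ent_eq]
    have hP := hp.prod (hp.pow k)
    have : Ent (prodW p (powW k p)) (fun ω (j : Fin (k + 1)) => W (Fin.cons (α := fun _ => Ω) ω.1 ω.2 j)) =
        Ent (prodW p (powW k p)) (fun ω => (W ω.1, fun j => W (ω.2 j))) := by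
      refine le_antisymm (Ent_le_of_ker hP ?_) (Ent_le_of_ker hP ?_)
      · intro ω ω' h
        simp only [Prod.mk.injEq] at h
        funext j
        refine Fin.cases ?_ (fun j => ?_) j
        · simpa using h.1
        · simpa using congrFun h.2 j
      · intro ω ω' h
        simp only [Prod.mk.injEq]
        refine ⟨by simpa using congrFun h 0, ?_⟩
        funext j
        simpa using congrFun h j.succ
    rw [this, Ent_prod hp (hp.pow k) W (fun ω j => W (ω j)), ih]
    push_cast; ring

/-- Iterated Kaimanovich–Vershik inequality for the sum of `k` independent copies of `Y`. -/
lemma kv_pow (hp : IsPr p) (hZ : IsPr pZ) (Y : Ω → ℝ) (W : Ω → γ) (Z : ΩZ → ℝ) {r : ℝ}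
    (hr : 0 < r) (k : ℕ) :
    Ent (prodW (powW k p) pZ) (fun ω => (D r ((∑ j, Y (ω.1 j)) + Z ω.2), fun j => W (ω.1 j))) ≤
    Ent pZ (fun z => D r (Z z)) + k * (Ent (prodW p pZ) (fun ω => (D r (Y ω.1 + Z ω.2), W ω.1)) -
      Ent pZ (fun z => D r (Z z)) + 3 * Real.log 3) := by
  induction k with
  | zero =>
    have hP := (hp.pow 0).prod hZ
    rw [← (push_snd (q := pZ) (hp.pow 0)).Ent_eq]
    simp only [Nat.cast_zero, zero_mul, add_zero]
    refine Ent_le_of_ker hP fun ω ω' h => ?_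
    simp only [Finset.univ_eq_empty, Finset.sum_empty, zero_add, Prod.mk.injEq]
    exact ⟨h, by funext j; exact j.elim0⟩
  | succ k ih =>
    rw [← ((push_cons (p := p) k).prod pZ).Ent_eq]
    have hP := (hp.prod (hp.pow k)).prod hZ
    have st := kv_step (hp.pow k) hp hZ (fun ω => ∑ j, Y (ω j)) Y Z (fun ω j => W (ω j)) W hr
    have : Ent (prodW (prodW p (powW k p)) pZ) (fun ω => (D r ((∑ j : Fin (k + 1),
          Y (Fin.cons (α := fun _ => Ω) ω.1.1 ω.1.2 j)) + Z ω.2),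
        fun j : Fin (k + 1) => W (Fin.cons (α := fun _ => Ω) ω.1.1 ω.1.2 j))) ≤
        Ent (prodW (prodW p (powW k p)) pZ) (fun ω => (D r (Y ω.1.1 + (∑ j, Y (ω.1.2 j)) + Z ω.2),
          W ω.1.1, fun j => W (ω.1.2 j))) := by
      refine Ent_le_of_ker hP fun ω ω' h => ?_
      simp only [Prod.mk.injEq, Fin.sum_univ_succ, Fin.cons_zero, Fin.cons_succ] at h ⊢
      refine ⟨h.1, ?_⟩
      funext j
      refine Fin.cases ?_ (fun j => ?_) j
      · simpa using h.2.1
      · simpa using congrFun h.2.2 j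
    push_cast
    refine this.trans ?_
    linarith

end power

/-! ### Littlewood–Offord estimates for random subset sums -/

lemma centralBinom_sq_le (m : ℕ) : (2 * m + 1) * m.centralBinom ^ 2 ≤ 4 ^ (2 * m) := by
  induction m with
  | zero => simp
  | succ m ih =>
    have h := Nat.succ_mul_centralBinom_succ m
    have h2 : (m + 1) ^ 2 * ((2 * (m + 1) + 1) * (m + 1).centralBinom ^ 2) ≤
        (m + 1) ^ 2 * 4 ^ (2 * (m + 1)) := by
      calc (m + 1) ^ 2 * ((2 * (m + 1) + 1) * (m + 1).centralBinom ^ 2)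
          = (2 * (m + 1) + 1) * ((m + 1) * (m + 1).centralBinom) ^ 2 := by ring
        _ = (2 * (m + 1) + 1) * (2 * m + 1) * 4 * ((2 * m + 1) * m.centralBinom ^ 2) := by
            rw [h]; ring
        _ ≤ (4 * (m + 1) ^ 2) * 4 * 4 ^ (2 * m) :=
            Nat.mul_le_mul (Nat.mul_le_mul_right _ (by nlinarith)) ih
        _ = (m + 1) ^ 2 * 4 ^ (2 * (m + 1)) := by ring
    exact Nat.le_of_mul_le_mul_left h2 (by positivity)

lemma choose_half_sq_le (g : ℕ) : (g + 1) * (g.choose (g / 2)) ^ 2 ≤ 4 ^ g := by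
  rcases Nat.even_or_odd' g with ⟨m, rfl | rfl⟩
  · have := centralBinom_sq_le m
    rw [Nat.centralBinom] at this
    simpa using this
  · have := centralBinom_sq_le (m + 1)
    have e : (m + 1).centralBinom = 2 * (2 * m + 1).choose m := by
      rw [Nat.centralBinom, show 2 * (m + 1) = 2 * m + 1 + 1 by ring, Nat.choose_succ_succ,
        Nat.choose_symm_half]
      ring
    rw [e] at this
    have e2 : (2 * m + 1) / 2 = m := by omega
    rw [e2]
    have : (2 * (m + 1) + 1) * (2 * (2 * m + 1).choose m) ^ 2 =
      4 * ((2 * m + 1 + 1) * (2 * m + 1).choose m ^ 2) + (2 * (2 * m + 1).choose m) ^ 2 := by ring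
    have e3 : 4 ^ (2 * (m + 1)) = 4 * 4 ^ (2 * m + 1) := by ring
    omega

/-- Erdős' form of the Littlewood–Offord inequality, from Sperner's theorem: at most
`2 ^ (k - g) * (g choose g / 2)` subset sums of nonnegative reals, `g` of which are at least `s`,
lie in a common half-open cell of length `s`. -/
lemma card_subset_sums {k : ℕ} (d : Fin k → ℝ) (hd : ∀ j, 0 ≤ d j) {s : ℝ} (hs : 0 < s) (c : ℝ)
    (n : ℤ) (G : Finset (Fin k)) (hG : ∀ j ∈ G, s ≤ d j) :
    (Finset.univ.filter (fun S : Finset (Fin k) => D s (c + ∑ j ∈ S, d j) = n)).card ≤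
      G.card.choose (G.card / 2) * 2 ^ (k - G.card) := by
  set A := Finset.univ.filter (fun S : Finset (Fin k) => D s (c + ∑ j ∈ S, d j) = n) with hA
  have h1 := Finset.card_le_mul_card_image (f := fun S : Finset (Fin k) => S \ G) A
    (G.card.choose (G.card / 2)) ?_
  · refine h1.trans (Nat.mul_le_mul_left _ ?_)
    have : A.image (fun S => S \ G) ⊆ Gᶜ.powerset := by
      intro S hS
      obtain ⟨S', _, rfl⟩ := Finset.mem_image.1 hS
      simp only [Finset.mem_powerset]
      intro x hx
      simp only [Finset.mem_sdiff, Finset.mem_compl] at hx ⊢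
      exact hx.2
    refine (Finset.card_le_card this).trans ?_
    rw [Finset.card_powerset, Finset.card_compl, Fintype.card_fin]
  · intro B _
    set F := A.filter (fun S => S \ G = B)
    have hinj : Set.InjOn (fun S : Finset (Fin k) => S.subtype (· ∈ G)) (F : Set (Finset (Fin k))) := by
      intro S hS S' hS' h
      have hS1 : S \ G = B := (Finset.mem_filter.1 hS).2
      have hS2 : S' \ G = B := (Finset.mem_filter.1 hS').2
      ext x
      by_cases hx : x ∈ G
      · have := Finset.ext_iff.1 h ⟨x, hx⟩
        simpa using this
      · have := Finset.ext_iff.1 (hS1.trans hS2.symm) x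
        simpa [hx] using this
    rw [← Finset.card_image_of_injOn hinj]
    have hanti : IsAntichain (· ⊆ ·)
        ((F.image (fun S : Finset (Fin k) => S.subtype (· ∈ G)) :
          Finset (Finset {x // x ∈ G})) : Set (Finset {x // x ∈ G})) := by
      intro U hU U' hU' hne hsub
      obtain ⟨S, hS, rfl⟩ := Finset.mem_image.1 (Finset.mem_coe.1 hU)
      obtain ⟨S', hS', rfl⟩ := Finset.mem_image.1 (Finset.mem_coe.1 hU')
      have hS1 : S \ G = B := (Finset.mem_filter.1 hS).2
      have hS2 : S' \ G = B := (Finset.mem_filter.1 hS').2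
      have hSS : S ⊆ S' := by
        intro x hx
        by_cases hxG : x ∈ G
        · have := @hsub ⟨x, hxG⟩ (by simpa using hx)
          simpa using this
        · have := Finset.ext_iff.1 (hS1.trans hS2.symm) x
          simpa [hxG, hx] using this
      have hne' : S ≠ S' := fun h => hne (by rw [h])
      obtain ⟨x, hx', hx⟩ := Finset.exists_of_ssubset (hSS.ssubset_of_ne hne')
      have hxG : x ∈ G := by
        by_contra hxG
        have := Finset.ext_iff.1 (hS1.trans hS2.symm) x
        simp [hxG, hx, hx'] at this
      have e : D s (c + ∑ j ∈ S', d j) = D s (c + ∑ j ∈ S, d j) := by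
        rw [(Finset.mem_filter.1 (Finset.mem_filter.1 hS).1).2,
          (Finset.mem_filter.1 (Finset.mem_filter.1 hS').1).2]
      have h2 := (abs_lt.1 (D_eq_imp hs e)).2
      have h3 : ∑ j ∈ insert x S, d j ≤ ∑ j ∈ S', d j :=
        Finset.sum_le_sum_of_subset_of_nonneg (Finset.insert_subset hx' hSS)
          (fun j _ _ => hd j)
      rw [Finset.sum_insert hx] at h3
      linarith [hG x hxG]
    have := hanti.sperner
    simpa using this

/-- Uniform weights on the subsets of `Fin k`. -/
def unifW (k : ℕ) : Finset (Fin k) → ℝ := fun _ => 1 / 2 ^ k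

lemma isPr_unifW (k : ℕ) : IsPr (unifW k) := by
  refine ⟨fun _ => by unfold unifW; positivity, ?_⟩
  simp [unifW]

/-- A random subset sum of nonnegative reals, `g` of which are at least `s`, has entropy at least
`½ log (1 + g)` at scale `s`. -/
lemma Ent_subset_sum_ge {k : ℕ} (d : Fin k → ℝ) (hd : ∀ j, 0 ≤ d j) {s : ℝ} (hs : 0 < s) (c : ℝ) :
    1 / 2 * Real.log (1 + (Finset.univ.filter fun j => s ≤ d j).card) ≤
      Ent (unifW k) (fun S => D s (c + ∑ j ∈ S, d j)) := by
  set G := Finset.univ.filter fun j => s ≤ d j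
  set g := G.card
  have hgk : g ≤ k := by simpa using Finset.card_le_univ G
  have hm : ∀ S, mass (unifW k) (fun S => D s (c + ∑ j ∈ S, d j)) S ≤ 1 / Real.sqrt (1 + g) := by
    intro S
    have h1 := card_subset_sums d hd hs c (D s (c + ∑ j ∈ S, d j)) G (by simp [G])
    have h2 := choose_half_sq_le g
    have h3 : (g.choose (g / 2) : ℝ) * Real.sqrt (1 + g) ≤ 2 ^ g := by
      refine abs_le_of_sq_le_sq' ?_ (by positivity) |>.2
      rw [mul_pow, Real.sq_sqrt (by positivity), ← pow_mul, mul_comm g 2, pow_mul]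
      norm_num
      have : (((g + 1) * (g.choose (g / 2)) ^ 2 : ℕ) : ℝ) ≤ ((4 ^ g : ℕ) : ℝ) := by
        exact_mod_cast h2
      push_cast at this
      linarith
    have e : mass (unifW k) (fun S => D s (c + ∑ j ∈ S, d j)) S =
        (Finset.univ.filter (fun S' : Finset (Fin k) =>
          D s (c + ∑ j ∈ S', d j) = D s (c + ∑ j ∈ S, d j))).card * (1 / 2 ^ k) := by
      unfold mass unifW
      simp only []
      rw [Finset.card_filter]
      push_cast
      rw [Finset.sum_mul]
      refine Finset.sum_congr rfl fun S' _ => ?_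
      split_ifs <;> simp
    rw [e]
    have hsq : 0 < Real.sqrt (1 + g) := Real.sqrt_pos.2 (by positivity)
    have h1' : ((Finset.univ.filter (fun S' : Finset (Fin k) =>
          D s (c + ∑ j ∈ S', d j) = D s (c + ∑ j ∈ S, d j))).card : ℝ) ≤
          g.choose (g / 2) * 2 ^ (k - g) := by exact_mod_cast h1
    rw [mul_one_div, div_le_div_iff₀ (by positivity) hsq, one_mul]
    calc _ ≤ (g.choose (g / 2) * 2 ^ (k - g) : ℝ) * Real.sqrt (1 + g) := by gcongr
      _ = (g.choose (g / 2) : ℝ) * Real.sqrt (1 + g) * 2 ^ (k - g) := by ring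
      _ ≤ 2 ^ g * 2 ^ (k - g) := by gcongr
      _ = 2 ^ k := by rw [← pow_add]; congr 1; omega
  have hP := isPr_unifW k
  unfold Ent
  calc 1 / 2 * Real.log (1 + g) = ∑ S, unifW k S * (1 / 2 * Real.log (1 + g)) := by
        rw [← Finset.sum_mul, hP.sum_one, one_mul]
    _ ≤ _ := by
        refine Finset.sum_le_sum fun S _ => mul_le_mul_of_nonneg_left ?_ (hP.nonneg S)
        have h0 : unifW k S ≠ 0 := by unfold unifW; positivity
        have := Real.log_le_log (mass_pos hP _ h0) (hm S)
        rw [one_div, Real.log_inv, Real.log_sqrt (by positivity)] at this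
        linarith

lemma subset_sum_sq {ι : Type*} (d : ι → ℝ) (s : Finset ι) : ∀ x : ℝ,
    ∑ S ∈ s.powerset, (x + ∑ j ∈ S, d j - (∑ j ∈ s, d j) / 2) ^ 2 =
      2 ^ s.card * (x ^ 2 + (∑ j ∈ s, d j ^ 2) / 4) := by
  induction s using Finset.induction_on with
  | empty => intro x; simp
  | insert a s ha ih =>
    intro x
    rw [Finset.sum_powerset_insert ha, Finset.sum_insert ha, Finset.sum_insert ha,
      Finset.card_insert_of_notMem ha]
    have e1 := ih (x - d a / 2)
    have e2 := ih (x + d a / 2)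
    have r1 : ∑ S ∈ s.powerset, (x + ∑ j ∈ S, d j - (d a + ∑ j ∈ s, d j) / 2) ^ 2 =
        ∑ S ∈ s.powerset, (x - d a / 2 + ∑ j ∈ S, d j - (∑ j ∈ s, d j) / 2) ^ 2 :=
      Finset.sum_congr rfl fun S _ => by ring
    have r2 : ∑ S ∈ s.powerset, (x + ∑ j ∈ insert a S, d j - (d a + ∑ j ∈ s, d j) / 2) ^ 2 =
        ∑ S ∈ s.powerset, (x + d a / 2 + ∑ j ∈ S, d j - (∑ j ∈ s, d j) / 2) ^ 2 :=
      Finset.sum_congr rfl fun S hS => by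
        rw [Finset.sum_insert (fun h => ha (Finset.mem_powerset.1 hS h))]; ring
    rw [r1, r2, e1, e2]
    ring

lemma sum_geom_int_le (A : Finset ℤ) (n0 : ℤ) :
    ∑ n ∈ A, (1 / 3 : ℝ) * (1 / 2) ^ (n - n0).natAbs ≤ 1 := by
  have h : HasSum (fun n : ℤ => (1 / 2 : ℝ) ^ n.natAbs) (2 + 1) := by
    refine HasSum.of_nat_of_neg_add_one ?_ ?_
    · simpa using hasSum_geometric_two
    · have := hasSum_geometric_two.mul_left (1 / 2 : ℝ)
      norm_num at this
      refine this.congr_fun ?_ |> id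
      intro n
      have : (-((n : ℤ) + 1)).natAbs = n + 1 := by omega
      rw [this, pow_succ]; ring
  have h2 := sum_le_hasSum (A.map ⟨fun n => n - n0, fun a b h => by simpa using h⟩)
    (fun i _ => by positivity) h
  rw [Finset.sum_map] at h2
  change ∑ n ∈ A, (1 / 2 : ℝ) ^ (n - n0).natAbs ≤ _ at h2
  rw [← Finset.mul_sum]
  linarith

/-- A random subset sum of `k` reals in `[0, R]` has bounded entropy at scale `√k R`. -/
lemma Ent_subset_sum_le {k : ℕ} (d : Fin k → ℝ) {R ρ : ℝ} (hd : ∀ j, 0 ≤ d j)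
    (hdR : ∀ j, d j ≤ R) (hρ : 0 < ρ) (h : k * R ^ 2 ≤ ρ ^ 2) (c : ℝ) :
    Ent (unifW k) (fun S => D ρ (c + ∑ j ∈ S, d j)) ≤ 3 := by
  have hP := isPr_unifW k
  set μ := (∑ j, d j) / 2
  set n0 := D ρ (c + μ)
  set X := fun S : Finset (Fin k) => D ρ (c + ∑ j ∈ S, d j)
  have g := gibbs hP X (fun _ => ()) (fun n _ => (1 / 3 : ℝ) * (1 / 2) ^ (n - n0).natAbs)
    (fun _ _ => by positivity) (fun _ _ => by positivity) (fun _ => sum_geom_int_le _ n0)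
  rw [Ent_unit hP] at g
  have g1 : Ent (unifW k) X ≤ Ent (unifW k) (fun S => (X S, ())) :=
    Ent_le_of_ker hP fun ω ω' h => by simpa using h
  have l2 : Real.log 2 ≤ 1 := by linarith [Real.log_two_lt_d9]
  have l20 : 0 ≤ Real.log 2 := Real.log_nonneg (by norm_num)
  have l3 : Real.log 3 ≤ 1.2 := by
    have : Real.log 3 = Real.log 2 + Real.log (3 / 2) := by
      rw [← Real.log_mul (by norm_num) (by norm_num)]; norm_num
    have := Real.log_le_sub_one_of_pos (show (0 : ℝ) < 3 / 2 by norm_num)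
    linarith [Real.log_two_lt_d9]
  have hpt : ∀ S : Finset (Fin k), -Real.log ((1 / 3 : ℝ) * (1 / 2) ^ (X S - n0).natAbs) ≤
      2.7 + 1 / 2 * ((0 + ∑ j ∈ S, d j - μ) ^ 2 / ρ ^ 2) := by
    intro S
    rw [Real.log_mul (by norm_num) (by positivity), Real.log_pow, one_div, one_div,
      Real.log_inv, Real.log_inv]
    have h1 : ((X S - n0).natAbs : ℝ) ≤ |(∑ j ∈ S, d j - μ) / ρ| + 1 := by
      rw [Nat.cast_natAbs, Int.cast_abs]
      simp only [X, n0, D]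
      have a1 := Int.floor_le ((c + ∑ j ∈ S, d j) / ρ)
      have a2 := Int.lt_floor_add_one ((c + ∑ j ∈ S, d j) / ρ)
      have a3 := Int.floor_le ((c + μ) / ρ)
      have a4 := Int.lt_floor_add_one ((c + μ) / ρ)
      have a5 : (∑ j ∈ S, d j - μ) / ρ = (c + ∑ j ∈ S, d j) / ρ - (c + μ) / ρ := by ring
      push_cast
      rw [a5, abs_le]
      constructor
      · linarith [neg_abs_le ((c + ∑ j ∈ S, d j) / ρ - (c + μ) / ρ)]
      · linarith [le_abs_self ((c + ∑ j ∈ S, d j) / ρ - (c + μ) / ρ)]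
    have h2 : |(∑ j ∈ S, d j - μ) / ρ| ≤ 1 / 2 + 1 / 2 * ((0 + ∑ j ∈ S, d j - μ) ^ 2 / ρ ^ 2) := by
      rw [zero_add, ← div_pow, ← sq_abs]
      nlinarith [sq_nonneg (|(∑ j ∈ S, d j - μ) / ρ| - 1)]
    have h3 : ((X S - n0).natAbs : ℝ) * Real.log 2 ≤ ((X S - n0).natAbs : ℝ) := by
      nlinarith [Nat.cast_nonneg (α := ℝ) (X S - n0).natAbs]
    linarith
  have hsum : ∑ S, unifW k S * (-Real.log ((1 / 3 : ℝ) * (1 / 2) ^ (X S - n0).natAbs)) ≤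
      ∑ S, unifW k S * (2.7 + 1 / 2 * ((0 + ∑ j ∈ S, d j - μ) ^ 2 / ρ ^ 2)) :=
    Finset.sum_le_sum fun S _ => mul_le_mul_of_nonneg_left (hpt S) (hP.nonneg S)
  have hv := subset_sum_sq d Finset.univ 0
  have e : ∑ S, unifW k S * (2.7 + 1 / 2 * ((0 + ∑ j ∈ S, d j - μ) ^ 2 / ρ ^ 2)) =
      2.7 + 1 / (2 * 2 ^ k * ρ ^ 2) * ∑ S ∈ (Finset.univ : Finset (Fin k)).powerset,
        (0 + ∑ j ∈ S, d j - μ) ^ 2 := by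
    simp_rw [mul_add, Finset.sum_add_distrib, ← Finset.sum_mul, hP.sum_one]
    rw [Finset.powerset_univ, Finset.mul_sum]
    congr 1
    · ring
    · refine Finset.sum_congr rfl fun S _ => ?_
      unfold unifW
      field_simp
  have hsq : ∑ j, d j ^ 2 ≤ ρ ^ 2 := by
    calc ∑ j, d j ^ 2 ≤ ∑ _j : Fin k, R ^ 2 := Finset.sum_le_sum fun j _ => by
          have := hd j; have := hdR j; gcongr; 
      _ = k * R ^ 2 := by simp
      _ ≤ ρ ^ 2 := h
  have e2 : 1 / (2 * 2 ^ k * ρ ^ 2) * ∑ S ∈ (Finset.univ : Finset (Fin k)).powerset,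
        (0 + ∑ j ∈ S, d j - μ) ^ 2 ≤ 1 / 8 := by
    rw [hv, Finset.card_univ, Fintype.card_fin, one_div_mul_eq_div, div_le_div_iff₀ (by positivity) (by norm_num)]
    have : (0 : ℝ) < 2 ^ k := by positivity
    nlinarith
  linarith

/-! ### Binomial expectations -/

/-- Expectation of `F g` for a binomial variable `g` with parameters `k` and `x`. -/
def binE (x : ℝ) : ℕ → (ℕ → ℝ) → ℝ
  | 0, F => F 0
  | k + 1, F => x * binE x k (fun g => F (g + 1)) + (1 - x) * binE x k F

lemma binE_add_mul (x : ℝ) (k : ℕ) : ∀ (F G : ℕ → ℝ) (a b : ℝ),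
    binE x k (fun g => a * F g + b * G g) = a * binE x k F + b * binE x k G := by
  induction k with
  | zero => intro F G a b; rfl
  | succ k ih => intro F G a b; simp only [binE, ih]; ring

lemma binE_mono {x : ℝ} (h0 : 0 ≤ x) (h1 : x ≤ 1) (k : ℕ) : ∀ {F G : ℕ → ℝ}, (∀ g, F g ≤ G g) →
    binE x k F ≤ binE x k G := by
  induction k with
  | zero => intro F G h; exact h 0
  | succ k ih =>
    intro F G h
    simp only [binE]
    have : 0 ≤ 1 - x := by linarith
    gcongr
    · exact ih fun g => h _
    · exact ih h

lemma binE_const (x : ℝ) (k : ℕ) (c : ℝ) : binE x k (fun _ => c) = c := by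
  induction k with
  | zero => rfl
  | succ k ih => simp only [binE, ih]; ring

/-- Size biasing for the binomial distribution. -/
lemma binE_size_bias (x : ℝ) (k : ℕ) : ∀ F : ℕ → ℝ,
    binE x (k + 1) (fun g => g * F g) = (k + 1) * x * binE x k (fun g => F (g + 1)) := by
  induction k with
  | zero => intro F; simp [binE]
  | succ k ih =>
    intro F
    have e1 : binE x (k + 1) (fun g => ((g + 1 : ℕ) : ℝ) * F (g + 1)) =
        1 * binE x (k + 1) (fun g => g * F (g + 1)) + 1 * binE x (k + 1) (fun g => F (g + 1)) := by
      rw [← binE_add_mul]; congr 1; funext g; push_cast; ring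
    have e2 := ih (fun g => F (g + 1))
    have e3 := ih F
    rw [binE, e1, e2, e3]
    have e4 : binE x (k + 1) (fun g => F (g + 1)) =
      x * binE x k (fun g => F (g + 1 + 1)) + (1 - x) * binE x k (fun g => F (g + 1)) := rfl
    rw [e4]
    push_cast
    ring

/-- Expected logarithm of one plus a binomial variable: the tangent bound
`log (1 + g) ≥ log M + 1 - M / (1 + g)` at `M = (k + 1) x`, combined with size biasing. -/
lemma binE_log {x : ℝ} (h0 : 0 < x) (h1 : x ≤ 1) (k : ℕ) :
    Real.log ((k + 1) * x) ≤ binE x k (fun g => Real.log (1 + g)) := by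
  set M : ℝ := (k + 1) * x
  have hM : 0 < M := by positivity
  have h2 : M * binE x k (fun g => 1 / ((g + 1 : ℕ) : ℝ)) ≤ 1 := by
    rw [← binE_size_bias x k (fun g => 1 / (g : ℝ))]
    refine le_trans (binE_mono h0.le h1 _ (G := fun _ => 1) fun g => ?_) (binE_const _ _ _).le
    rcases Nat.eq_zero_or_pos g with rfl | hg
    · simp
    · have : (0 : ℝ) < g := by exact_mod_cast hg
      field_simp; exact le_rfl
  have h3 : binE x k (fun g => (-M) * (1 / ((g + 1 : ℕ) : ℝ)) + (1 + Real.log M) * 1) ≤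
      binE x k (fun g => Real.log (1 + g)) := by
    refine binE_mono h0.le h1 _ fun g => ?_
    have hg : (0 : ℝ) < 1 + g := by positivity
    have := Real.log_le_sub_one_of_pos (show 0 < M / (1 + g) by positivity)
    rw [Real.log_div hM.ne' hg.ne'] at this
    push_cast
    rw [add_comm (g : ℝ) 1]
    have e : (-M) * (1 / (1 + (g : ℝ))) = -(M / (1 + g)) := by ring
    rw [e]; linarith
  rw [binE_add_mul x k (fun g => 1 / ((g + 1 : ℕ) : ℝ)) (fun _ => 1), binE_const] at h3
  linarith

/-- The number of successes among `k` independent trials is binomial. -/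
lemma sum_powW_card {A : Type*} [Fintype A] {q : A → ℝ} (hq : IsPr q) (P : A → Prop) (k : ℕ) :
    ∀ F : ℕ → ℝ, ∑ v, powW k q v * F (Finset.univ.filter fun j => P (v j)).card =
      binE (∑ a, if P a then q a else 0) k F := by
  induction k with
  | zero => intro F; simp [powW, binE]
  | succ k ih =>
    intro F
    rw [← (push_cons (p := q) k).sum (fun v => F (Finset.univ.filter fun j => P (v j)).card)]
    simp only [prodW, Fintype.sum_prod_type, binE]
    rw [← ih, ← ih]
    have e : ∀ a (v : Fin k → A), (Finset.univ.filter fun j : Fin (k + 1) =>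
        P (Fin.cons (α := fun _ => A) a v j)).card =
        (if P a then 1 else 0) + (Finset.univ.filter fun j => P (v j)).card := by
      intro a v
      rw [Fin.card_filter_univ_succ]
      simp only [Fin.cons_zero, Fin.cons_succ]
      split_ifs <;> ring
    simp_rw [e]
    have e1 : (1 - ∑ a, if P a then q a else 0) = ∑ a, if P a then 0 else q a := by
      rw [← hq.sum_one, ← Finset.sum_sub_distrib]
      exact Finset.sum_congr rfl fun a _ => by split_ifs <;> ring
    rw [e1, Finset.sum_mul, Finset.sum_mul, ← Finset.sum_add_distrib]
    refine Finset.sum_congr rfl fun a _ => ?_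
    by_cases ha : P a
    · simp only [ha, if_true, zero_mul, add_zero, mul_assoc, ← Finset.mul_sum]
      simp only [add_comm]
    · simp only [ha, if_false, zero_mul, zero_add, mul_assoc, ← Finset.mul_sum]

/-! ### The conditional coupling -/

section coupling
variable {Ω γ : Type*} [Fintype Ω] {p : Ω → ℝ}

/-- Weights of a pair of points drawn independently conditionally on having the same value of `C`. -/
def cplW (p : Ω → ℝ) (C : Ω → γ) : Ω × Ω → ℝ :=
  fun a => if C a.1 = C a.2 then p a.1 * p a.2 / mass p C a.1 else 0

/-- One of the two points of a pair: the one with the larger value of `Y` if `e` holds, the other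
one if not. If the two points have distinct values of `C`, the first point is selected. -/
def sel (C : Ω → γ) (Y : Ω → ℝ) (a : Ω × Ω) (e : Prop) : Ω :=
  if C a.1 = C a.2 ∧ (Y a.1 ≤ Y a.2 ↔ e) then a.2 else a.1

lemma mass_congr {α : Type*} (C : Ω → α) {ω ω' : Ω} (h : C ω = C ω') :
    mass p C ω = mass p C ω' := by
  unfold mass; rw [h]

lemma C_sel (C : Ω → γ) (Y : Ω → ℝ) (a : Ω × Ω) (e : Prop) : C (sel C Y a e) = C a.1 := by
  unfold sel; split_ifs with h
  · exact h.1.symm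
  · rfl

lemma sel_le (C : Ω → γ) (Y : Ω → ℝ) (a : Ω × Ω) :
    Y (sel C Y a False) ≤ Y (sel C Y a True) := by
  unfold sel
  by_cases h : C a.1 = C a.2 <;> by_cases h' : Y a.1 ≤ Y a.2 <;> simp [h, h']
  exact (not_le.1 h').le

lemma sel_sub (C : Ω → γ) (Y : Ω → ℝ) (a : Ω × Ω) (h : C a.1 = C a.2) :
    Y (sel C Y a True) - Y (sel C Y a False) = |Y a.1 - Y a.2| := by
  unfold sel
  by_cases h' : Y a.1 ≤ Y a.2
  · simp only [h, h', true_and, if_true, iff_false, not_true, if_false]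
    rw [abs_of_nonpos (by linarith)]; ring
  · simp only [h, h', true_and, iff_true, if_true, if_false]
    rw [abs_of_nonneg (by linarith)]

lemma cplW_nonneg (hp : IsPr p) (C : Ω → γ) (a : Ω × Ω) : 0 ≤ cplW p C a := by
  unfold cplW
  split_ifs
  · exact div_nonneg (mul_nonneg (hp.nonneg _) (hp.nonneg _))
      ((hp.nonneg _).trans (le_mass hp C _))
  · exact le_rfl

lemma cplW_sum_snd (hp : IsPr p) (C : Ω → γ) (ω : Ω) : ∑ ω', cplW p C (ω, ω') = p ω := by
  by_cases h0 : p ω = 0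
  · simp [cplW, h0]
  have hm := mass_pos hp C h0
  have : ∀ ω', cplW p C (ω, ω') = p ω / mass p C ω * (if C ω' = C ω then p ω' else 0) := by
    intro ω'
    unfold cplW
    simp only [eq_comm (a := C ω)]
    split_ifs <;> ring
  simp_rw [this, ← Finset.mul_sum]
  change p ω / mass p C ω * mass p C ω = p ω
  field_simp

lemma cplW_symm (C : Ω → γ) (ω ω' : Ω) : cplW p C (ω, ω') = cplW p C (ω', ω) := by
  unfold cplW
  by_cases h : C ω = C ω'
  · simp only [h, if_true, mass_congr C h]; ring
  · simp only [h, Ne.symm h, if_false]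

lemma cplW_sum_fst (hp : IsPr p) (C : Ω → γ) (ω' : Ω) : ∑ ω, cplW p C (ω, ω') = p ω' := by
  simp_rw [cplW_symm C _ ω']
  exact cplW_sum_snd hp C ω'

lemma isPr_cplW (hp : IsPr p) (C : Ω → γ) : IsPr (cplW p C) := by
  refine ⟨cplW_nonneg hp C, ?_⟩
  rw [Fintype.sum_prod_type]
  simp_rw [cplW_sum_snd hp, hp.sum_one]

/-- Selecting a random point of a coupled pair recovers the original weights. -/
lemma cplW_sel (hp : IsPr p) (C : Ω → γ) (Y : Ω → ℝ) (ω : Ω) :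
    ∑ a, cplW p C a * ((if sel C Y a True = ω then 1 / 2 else 0) +
      (if sel C Y a False = ω then 1 / 2 else 0)) = p ω := by
  have e : ∀ a, cplW p C a * ((if sel C Y a True = ω then 1 / 2 else 0) +
      (if sel C Y a False = ω then 1 / 2 else 0)) =
      cplW p C a * ((if a.1 = ω then 1 / 2 else 0) + (if a.2 = ω then 1 / 2 else 0)) := by
    intro a
    by_cases h : C a.1 = C a.2
    · congr 1
      unfold sel
      by_cases h' : Y a.1 ≤ Y a.2
      · simp [h, h']; ring
      · simp [h, h']
    · simp [cplW, h]
  simp_rw [e, mul_add, Finset.sum_add_distrib]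
  rw [Fintype.sum_prod_type, Fintype.sum_prod_type_right]
  simp only [mul_ite, mul_zero]
  have e1 : ∑ x, ∑ y, (if x = ω then cplW p C (x, y) * (1 / 2) else 0) = p ω * (1 / 2) := by
    rw [Finset.sum_eq_single ω]
    · simp only [if_true, ← Finset.sum_mul, cplW_sum_snd hp]
    · intro b _ hb; simp [hb]
    · simp
  have e2 : ∑ y, ∑ x, (if y = ω then cplW p C (x, y) * (1 / 2) else 0) = p ω * (1 / 2) := by
    rw [Finset.sum_eq_single ω]
    · simp only [if_true, ← Finset.sum_mul, cplW_sum_fst hp]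
    · intro b _ hb; simp [hb]
    · simp
  rw [e1, e2]; ring

/-- Choosing at random one point from each of `k` coupled pairs produces `k` independent points. -/
lemma push_sel (hp : IsPr p) (C : Ω → γ) (Y : Ω → ℝ) (k : ℕ) :
    Push (prodW (powW k (cplW p C)) (unifW k))
      (fun ω (j : Fin k) => sel C Y (ω.1 j) (j ∈ ω.2)) (powW k p) := by
  intro ω
  rw [Fintype.sum_prod_type]
  have e : ∀ a : Fin k → Ω × Ω, ∑ S : Finset (Fin k),
      (if (fun (j : Fin k) => sel C Y (a j) (j ∈ S)) = ω then
        prodW (powW k (cplW p C)) (unifW k) (a, S) else 0) =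
      ∏ j, (cplW p C (a j) * ((if sel C Y (a j) True = ω j then 1 / 2 else 0) +
      (if sel C Y (a j) False = ω j then 1 / 2 else 0))) := by
    intro a
    rw [Finset.prod_mul_distrib, Finset.prod_add, Finset.mul_sum, Finset.powerset_univ]
    refine Finset.sum_congr rfl fun S _ => ?_
    have e2 : (∏ i ∈ S, (if sel C Y (a i) True = ω i then (1 / 2 : ℝ) else 0)) *
        ∏ i ∈ Finset.univ \ S, (if sel C Y (a i) False = ω i then (1 / 2 : ℝ) else 0) =
        ∏ i, (if sel C Y (a i) (i ∈ S) = ω i then (1 / 2 : ℝ) else 0) := by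
      rw [← Finset.prod_sdiff (Finset.subset_univ S), mul_comm]
      congr 1
      · refine Finset.prod_congr rfl fun i hi => ?_
        have : (i ∈ S) = False := by simpa using (Finset.mem_sdiff.1 hi).2
        simp only [this]
      · refine Finset.prod_congr rfl fun i hi => ?_
        have : (i ∈ S) = True := by simpa using hi
        simp only [this]
    rw [e2]
    by_cases h : (fun (j : Fin k) => sel C Y (a j) (j ∈ S)) = ω
    · rw [if_pos h]
      have : ∀ i, sel C Y (a i) (i ∈ S) = ω i := fun i => congrFun h i
      simp [this, prodW, powW, unifW]
    · rw [if_neg h]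
      obtain ⟨i, hi⟩ := Function.ne_iff.1 h
      have hz : ∏ i, (if sel C Y (a i) (i ∈ S) = ω i then (1 / 2 : ℝ) else 0) = 0 :=
        Finset.prod_eq_zero (Finset.mem_univ i) (if_neg hi)
      rw [hz, mul_zero]
  refine (Finset.sum_congr rfl fun a _ => (Finset.sum_congr rfl fun S _ => ?_).trans (e a)).trans ?_
  · congr!
  have := Finset.prod_univ_sum (fun _ : Fin k => (Finset.univ : Finset (Ω × Ω)))
    (fun j a => cplW p C a * ((if sel C Y a True = ω j then 1 / 2 else 0) +
      (if sel C Y a False = ω j then 1 / 2 else 0)))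
  simp only [Fintype.piFinset_univ] at this
  rw [← this]
  unfold powW
  exact Finset.prod_congr rfl fun j _ => cplW_sel hp C Y (ω j)

lemma sum_indicator_near (A : Finset ℤ) (n0 : ℤ) (K : ℕ) :
    ∑ n ∈ A, (if |n - n0| ≤ K then (1 : ℝ) else 0) ≤ 2 * K + 1 := by
  rw [Finset.sum_boole]
  have : A.filter (fun n => |n - n0| ≤ K) ⊆ Finset.Icc (n0 - K) (n0 + K) := by
    intro n hn
    have := abs_le.1 (Finset.mem_filter.1 hn).2
    rw [Finset.mem_Icc]; constructor <;> linarith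
  have h := Finset.card_le_card this
  rw [Int.card_Icc] at h
  have : (n0 + K + 1 - (n0 - K)).toNat = 2 * K + 1 := by omega
  rw [this] at h
  exact_mod_cast h

/-- If `Y` carries much entropy at scale `s` conditionally on `C`, which localises `Y` up to `R`,
then two copies of `Y` that are independent conditionally on `C` are often `s`-separated. -/
lemma separated_of_entropy (hp : IsPr p) (Y : Ω → ℝ) (C : Ω → γ) {s R : ℝ} (hs : 0 < s)
    (hC : ∀ ω ω', C ω = C ω' → |Y ω - Y ω'| ≤ R) (K : ℕ) (hK : R ≤ K * s) :
    Ent p (fun ω => (D s (Y ω), C ω)) - Ent p C ≤ Real.log 6 +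
      (∑ a, if s ≤ Y (sel C Y a True) - Y (sel C Y a False) then cplW p C a else 0) *
        Real.log (2 * (2 * K + 1)) := by
  set q := cplW p C with hqdef
  have hq : IsPr q := isPr_cplW hp C
  set X := fun ω => D s (Y ω)
  have g := gibbs hq (fun a => X a.1) (fun a => a.2)
    (fun x b => (1 / 6) * (if |x - X b| ≤ (1 : ℕ) then (1 : ℝ) else 0) +
      (1 / (2 * (2 * K + 1))) * (if |x - X b| ≤ K then (1 : ℝ) else 0))
    (fun x b => by positivity) ?_ ?_
  · have hcpl : ∀ a, q a ≠ 0 → C a.1 = C a.2 ∧ p a.1 ≠ 0 ∧ p a.2 ≠ 0 := by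
      intro a ha
      rw [hqdef] at ha
      unfold cplW at ha
      split_ifs at ha with h
      · refine ⟨h, fun h0 => ha (by simp [h0]), fun h0 => ha (by simp [h0])⟩
      · exact absurd rfl ha
    -- conditionally on `C` the two points are independent, so conditioning the cell of the first
    -- point on the second point is the same as conditioning on `C`
    have key : Ent p (fun ω => (X ω, C ω)) - Ent p C =
        Ent q (fun a => (X a.1, a.2)) - Ent q (fun a => a.2) := by
      have m1 : ∀ a, q a ≠ 0 → mass q (fun a => a.2) a = p a.2 := by
        intro a _
        unfold mass
        rw [Fintype.sum_prod_type_right, Finset.sum_eq_single a.2]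
        · simp only [if_true]
          exact cplW_sum_fst hp C a.2
        · intro b _ hb; simp [hb]
        · simp
      have m2 : ∀ a, q a ≠ 0 → mass q (fun a => (X a.1, a.2)) a =
          p a.2 / mass p C a.1 * mass p (fun ω => (X ω, C ω)) a.1 := by
        intro a ha
        obtain ⟨hc, h1, h2⟩ := hcpl a ha
        unfold mass
        rw [Fintype.sum_prod_type_right, Finset.sum_eq_single a.2]
        · change _ = p a.2 / mass p C a.1 * _
          rw [Finset.mul_sum]
          refine Finset.sum_congr rfl fun ω _ => ?_
          simp only [Prod.mk.injEq, and_true]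
          by_cases hx : X ω = X a.1
          · by_cases hc' : C ω = C a.1
            · simp only [hx, hc', and_self, if_true, hqdef, cplW, hc]
              rw [mass_congr C hc', mass_congr C hc]; ring
            · have : ¬ C ω = C a.2 := fun h => hc' (h.trans hc.symm)
              simp [hx, hc', hqdef, cplW, this]
          · simp [hx]
        · intro b _ hb
          simp [hb]
        · simp
      have pu : Push q Prod.fst p := by
        intro ω
        rw [Fintype.sum_prod_type, Finset.sum_eq_single ω]
        · simp only [if_true]; exact cplW_sum_snd hp C ω
        · intro b _ hb; simp [hb]
        · simp
      unfold Ent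
      rw [← pu.sum, ← pu.sum, ← Finset.sum_sub_distrib, ← Finset.sum_sub_distrib]
      refine Finset.sum_congr rfl fun a _ => ?_
      by_cases ha : q a = 0
      · simp [ha]
      obtain ⟨hc, h1, h2⟩ := hcpl a ha
      rw [m1 a ha, m2 a ha, Real.log_mul, Real.log_div]
      · ring
      · exact h2
      · exact (mass_pos hp C h1).ne'
      · exact (div_ne_zero h2 (mass_pos hp C h1).ne')
      · exact (mass_pos hp _ h1).ne'
    rw [key]
    refine g.trans ?_
    calc _ ≤ ∑ a, (q a * Real.log 6 + (if s ≤ Y (sel C Y a True) - Y (sel C Y a False) then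
            q a else 0) * Real.log (2 * (2 * K + 1))) := ?_
      _ = _ := by
          rw [Finset.sum_add_distrib, ← Finset.sum_mul, ← Finset.sum_mul, hq.sum_one, one_mul]
    refine Finset.sum_le_sum fun a _ => ?_
    by_cases ha : q a = 0
    · simp [ha]
    obtain ⟨hc, h1, h2⟩ := hcpl a ha
    have hq0 : 0 ≤ q a := hq.nonneg a
    rw [sel_sub C Y a hc]
    have hKK : (1 : ℝ) ≤ 2 * (2 * K + 1) := by
      have := Nat.cast_nonneg (α := ℝ) K; linarith
    have hnear : |X a.1 - X a.2| ≤ K := D_near hs K ((hC _ _ hc).trans hK)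
    split_ifs with hsep hn1 hn1
    · -- both `|x - x'| ≤ 1` and `s`-separated
      rw [← mul_add]
      refine mul_le_mul_of_nonneg_left ?_ hq0
      have : (1 / 6 : ℝ) ≤ 1 / 6 * 1 + 1 / (2 * (2 * K + 1)) * 1 := by
        have : (0 : ℝ) ≤ 1 / (2 * (2 * K + 1)) := by positivity
        linarith
      have := Real.log_le_log (by norm_num) this
      rw [one_div, Real.log_inv] at this
      have l := Real.log_nonneg hKK
      linarith
    · rw [zero_mul, add_zero]
      refine mul_le_mul_of_nonneg_left ?_ hq0
      have : (1 / 6 : ℝ) ≤ 1 / 6 * 1 + 1 / (2 * (2 * K + 1)) * 1 := by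
        have : (0 : ℝ) ≤ 1 / (2 * (2 * K + 1)) := by positivity
        linarith
      have := Real.log_le_log (by norm_num) this
      rw [one_div, Real.log_inv] at this
      linarith
    · rw [← mul_add]
      refine mul_le_mul_of_nonneg_left ?_ hq0
      rw [mul_zero, zero_add, mul_one, one_div, Real.log_inv, neg_neg]
      linarith [Real.log_nonneg (show (1 : ℝ) ≤ 6 by norm_num)]
    · exfalso
      refine hsep (D_near hs 1 ?_)
      push_cast; linarith
  · intro a ha
    have hc : C a.1 = C a.2 := by
      by_contra h
      exact ha (by simp [hqdef, cplW, h])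
    have hnear : |X a.1 - X a.2| ≤ K := D_near hs K ((hC _ _ hc).trans hK)
    rw [if_pos hnear]
    have : (0 : ℝ) < 1 / (2 * (2 * K + 1)) * 1 := by positivity
    have : (0 : ℝ) ≤ 1 / 6 * (if |X a.1 - X a.2| ≤ (1 : ℕ) then (1 : ℝ) else 0) := by positivity
    linarith
  · intro a
    have hA : ∀ A : Finset ℤ, ∑ x ∈ A, ((1 / 6) * (if |x - X a.2| ≤ (1 : ℕ) then (1 : ℝ) else 0) +
      (1 / (2 * (2 * K + 1))) * (if |x - X a.2| ≤ K then (1 : ℝ) else 0)) ≤ 1 := by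
      intro A
      rw [Finset.sum_add_distrib, ← Finset.mul_sum, ← Finset.mul_sum]
      have h1 := sum_indicator_near A (X a.2) 1
      have h2 := sum_indicator_near A (X a.2) K
      have h3 := mul_le_mul_of_nonneg_left h2 (show (0 : ℝ) ≤ 1 / (2 * (2 * K + 1)) by positivity)
      have h4 : 1 / (2 * (2 * (K : ℝ) + 1)) * (2 * K + 1) = 1 / 2 := by
        have : (2 * (K : ℝ) + 1) ≠ 0 := by positivity
        field_simp
      push_cast at h1 h3 ⊢
      linarith
    exact hA _

end coupling

/-! ### Entropy growth of sums of many independent copies -/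

lemma Ent_cond {V E α : Type*} [Fintype V] [Fintype E] {pV : V → ℝ} {pE : E → ℝ}
    (hE : IsPr pE) (F : V → E → α) :
    Ent (prodW pV pE) (fun ω => (F ω.1 ω.2, ω.1)) =
      Ent pV (fun v => v) + ∑ v, pV v * Ent pE (F v) := by
  have m : ∀ ω, mass (prodW pV pE) (fun ω => (F ω.1 ω.2, ω.1)) ω =
      pV ω.1 * mass pE (F ω.1) ω.2 := by
    intro ω
    unfold mass
    rw [Fintype.sum_prod_type, Finset.sum_eq_single ω.1, Finset.mul_sum]
    · refine Finset.sum_congr rfl fun e _ => ?_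
      simp [prodW]
    · intro b _ hb; simp [hb]
    · simp
  have m2 : ∀ v, mass pV (fun v => v) v = pV v := by intro v; simp [mass]
  unfold Ent
  rw [Fintype.sum_prod_type, ← Finset.sum_add_distrib]
  refine Finset.sum_congr rfl fun v _ => ?_
  by_cases hv : pV v = 0
  · simp [hv, prodW]
  have e : ∀ e, prodW pV pE (v, e) * -Real.log (mass (prodW pV pE) (fun ω => (F ω.1 ω.2, ω.1)) (v, e))
      = pV v * (-Real.log (pV v)) * pE e + pV v * (pE e * -Real.log (mass pE (F v) e)) := by
    intro e
    rw [m]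
    by_cases he : pE e = 0
    · simp [he, prodW]
    rw [Real.log_mul hv (mass_pos hE _ he).ne']
    simp only [prodW]; ring
  simp_rw [e, Finset.sum_add_distrib, ← Finset.mul_sum, hE.sum_one, m2]
  ring

/-- Between the scales `s` and `ρ ≥ √k R`, the sum of `k` independent copies of `Y` and of an
independent `Z` gains entropy at least `½ log (k x)` up to a constant, provided that a single copy of `Y` carries a
proportion at least `x` of the maximal possible entropy between the scales `s` and `R`. -/
lemma window_growth {Ω ΩZ γ : Type*} [Fintype Ω] [Fintype ΩZ] {p : Ω → ℝ} {pZ : ΩZ → ℝ}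
    (hp : IsPr p) (hZ : IsPr pZ) (Y : Ω → ℝ) (W : Ω → γ) (Z : ΩZ → ℝ) {s R ρ x : ℝ} (hs : 0 < s)
    (hR : 0 < R) (hsρ : s ≤ ρ) (k : ℕ) (hk1 : 1 ≤ k) (hk : k * R ^ 2 ≤ ρ ^ 2) (hx : 0 < x) (K : ℕ)
    (hK : R ≤ K * s)
    (hent : Real.log 6 + x * Real.log (2 * (2 * K + 1)) ≤
      Ent p (fun ω => (D s (Y ω), D R (Y ω), W ω)) - Ent p (fun ω => (D R (Y ω), W ω))) :
    1 / 2 * Real.log (k * x) - 3 - Real.log 3 ≤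
      Ent (prodW (powW k p) pZ)
        (fun ω => (D s ((∑ j, Y (ω.1 j)) + Z ω.2), fun j => W (ω.1 j))) -
      Ent (prodW (powW k p) pZ)
        (fun ω => (D ρ ((∑ j, Y (ω.1 j)) + Z ω.2), fun j => W (ω.1 j))) := by
  set C := fun ω => (D R (Y ω), W ω) with hCdef
  have hCR : ∀ ω ω', C ω = C ω' → |Y ω - Y ω'| ≤ R := by
    intro ω ω' h
    simp only [hCdef, Prod.mk.injEq] at h
    exact (D_eq_imp hR h.1).le
  set q := cplW p C with hqdef
  have hq : IsPr q := isPr_cplW hp C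
  set d : Ω × Ω → ℝ := fun a => Y (sel C Y a True) - Y (sel C Y a False) with hd
  have hd0 : ∀ a, 0 ≤ d a := fun a => by simp only [hd]; linarith [sel_le C Y a]
  have hdR : ∀ a, d a ≤ R := fun a => by
    have := hCR (sel C Y a True) (sel C Y a False) ((C_sel C Y a True).trans (C_sel C Y a False).symm)
    exact (le_abs_self _).trans this
  set y := ∑ a, if s ≤ d a then q a else 0 with hy
  have hKK : (1 : ℝ) < 2 * (2 * K + 1) := by
    have := Nat.cast_nonneg (α := ℝ) K; linarith
  have hxy : x ≤ y := by
    have := separated_of_entropy hp Y C hs hCR K hK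
    have := hent.trans this
    have h2 : x * Real.log (2 * (2 * K + 1)) ≤ y * Real.log (2 * (2 * K + 1)) := by linarith
    exact le_of_mul_le_mul_right h2 (Real.log_pos hKK)
  have hy1 : y ≤ 1 := by
    rw [← hq.sum_one]
    exact Finset.sum_le_sum fun a _ => by split_ifs; exacts [le_rfl, hq.nonneg a]
  set pV := prodW (powW k q) pZ
  have hV : IsPr pV := (hq.pow k).prod hZ
  have hE := isPr_unifW k
  set T : ((Fin k → Ω × Ω) × ΩZ) × Finset (Fin k) → ℝ :=
    fun ω => (∑ j, Y (sel C Y (ω.1.1 j) (j ∈ ω.2))) + Z ω.1.2 with hT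
  set W' : ((Fin k → Ω × Ω) × ΩZ) × Finset (Fin k) → Fin k → γ :=
    fun ω j => W (ω.1.1 j).1 with hW'
  have hTV : ∀ (v : (Fin k → Ω × Ω) × ΩZ) (S : Finset (Fin k)), T (v, S) =
      ((∑ j, Y (sel C Y (v.1 j) False)) + Z v.2) + ∑ j ∈ S, d (v.1 j) := by
    intro v S
    have : ∑ j ∈ S, d (v.1 j) = ∑ j, if j ∈ S then d (v.1 j) else 0 := by simp
    rw [this]
    simp only [hT]
    have e : ∀ j, Y (sel C Y (v.1 j) (j ∈ S)) =
        Y (sel C Y (v.1 j) False) + if j ∈ S then d (v.1 j) else 0 := by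
      intro j
      by_cases h : j ∈ S
      · simp only [h, if_true, hd]; ring
      · simp only [h, if_false]; ring
    simp_rw [e, Finset.sum_add_distrib]; ring
  have tr : ∀ r, Ent (prodW (powW k p) pZ)
        (fun ω => (D r ((∑ j, Y (ω.1 j)) + Z ω.2), fun j => W (ω.1 j))) =
      Ent (prodW pV (unifW k)) (fun ω => (D r (T ω), W' ω)) := by
    intro r
    rw [← ((push_sel hp C Y k).prod pZ).Ent_eq]
    have pu : Push (prodW pV (unifW k)) (fun ω => ((ω.1.1, ω.2), ω.1.2))
        (prodW (prodW (powW k q) (unifW k)) pZ) :=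
      push_equiv (q := prodW pV (unifW k)) (p := prodW (prodW (powW k q) (unifW k)) pZ)
        ⟨fun ω => ((ω.1.1, ω.2), ω.1.2), fun ω => ((ω.1.1, ω.2), ω.1.2), fun _ => rfl,
          fun _ => rfl⟩ (fun ω => by simp [pV, prodW]; ring)
    rw [← pu.Ent_eq]
    have : ∀ a e, W (sel C Y a e) = W a.1 := fun a e => by
      have := C_sel C Y a e
      simp only [hCdef, Prod.mk.injEq] at this
      exact this.2
    simp only [this]
    rfl
  rw [tr, tr]
  have inc := increment (hV.prod hE) T (fun ω => ω.1) W' (fun ω ω' h => by simp only [hW', h])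
    hs hsρ
  have c1 := Ent_cond (pV := pV) hE (fun v S => D s (T (v, S)))
  have c2 := Ent_cond (pV := pV) hE (fun v S => D ρ (T (v, S)))
  simp only [Prod.mk.eta] at c1 c2
  rw [c1, c2] at inc
  have l1 : 1 / 2 * Real.log (k * x) ≤ ∑ v, pV v * Ent (unifW k) (fun S => D s (T (v, S))) := by
    have b := binE_log (hx.trans_le hxy) hy1 k
    have b2 := sum_powW_card hq (fun a => s ≤ d a) k (fun g => Real.log (1 + g))
    rw [← hy] at b2
    have b3 := (push_fst (p := powW k q) hZ).sum
      (fun v => Real.log (1 + (Finset.univ.filter fun j => s ≤ d (v j)).card))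
    have b4 : Real.log (k * x) ≤ Real.log ((k + 1) * y) := by
      refine Real.log_le_log (by positivity) ?_
      have : (0 : ℝ) ≤ k := by positivity
      nlinarith
    calc 1 / 2 * Real.log (k * x) ≤ 1 / 2 * ∑ v, pV v *
          Real.log (1 + (Finset.univ.filter fun j => s ≤ d (v.1 j)).card) := by
            rw [b3, b2]; linarith
      _ ≤ _ := by
          rw [Finset.mul_sum]
          refine Finset.sum_le_sum fun v _ => ?_
          have := Ent_subset_sum_ge (fun j => d (v.1 j)) (fun j => hd0 _) hs
            ((∑ j, Y (sel C Y (v.1 j) False)) + Z v.2)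
          simp_rw [hTV]
          rw [mul_left_comm]
          exact mul_le_mul_of_nonneg_left this (hV.nonneg v)
  have l2 : ∑ v, pV v * Ent (unifW k) (fun S => D ρ (T (v, S))) ≤ 3 := by
    calc _ ≤ ∑ v, pV v * 3 := by
          refine Finset.sum_le_sum fun v _ => mul_le_mul_of_nonneg_left ?_ (hV.nonneg v)
          simp_rw [hTV]
          exact Ent_subset_sum_le _ (fun j => hd0 _) (fun j => hdR _) (hs.trans_le hsρ) hk _
      _ = 3 := by rw [← Finset.sum_mul, hV.sum_one, one_mul]
  linarith

/-! ### Entropy of the cylinder points of a homogeneous IFS -/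

section ifs
variable {Λ : Type*} [Fintype Λ]

/-- The image of `0` under the composition `f_{u 0} ∘ ⋯ ∘ f_{u (n-1)}` of maps
`f_i x = lam * x + t i`. -/
def pt (t : Λ → ℝ) (lam : ℝ) (n : ℕ) (u : Fin n → Λ) : ℝ := ∑ k, t (u k) * lam ^ (k : ℕ)

/-- Entropy at scale `lam ^ m` of the distribution of the points of generation `N`. -/
def scaleEnt (t p : Λ → ℝ) (lam : ℝ) (N m : ℕ) : ℝ :=
  Ent (powW N p) (fun u => D (lam ^ m) (pt t lam N u))

lemma pt_append (t : Λ → ℝ) (lam : ℝ) (n m : ℕ) (u : Fin n → Λ) (v : Fin m → Λ) :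
    pt t lam (n + m) (Fin.append u v) = pt t lam n u + lam ^ n * pt t lam m v := by
  unfold pt
  rw [Fin.sum_univ_add, Finset.mul_sum]
  congr 1
  · simp
  · refine Finset.sum_congr rfl fun k _ => ?_
    simp only [Fin.append_right, Fin.val_natAdd, pow_add]; ring

lemma push_append (p : Λ → ℝ) (n m : ℕ) : Push (prodW (powW n p) (powW m p))
    (fun ω => Fin.append ω.1 ω.2) (powW (n + m) p) := by
  refine push_equiv (q := prodW (powW n p) (powW m p)) (p := powW (n + m) p)
    (Fin.appendEquiv n m) (fun ω => ?_)
  simp [prodW, powW, Fin.prod_univ_add, Fin.appendEquiv]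

/-- `B` bounds the oscillation of the translation parts of all words. -/
def OscBound (t : Λ → ℝ) (lam : ℝ) (B : ℕ) : Prop :=
  ∀ n (u v : Fin n → Λ), |pt t lam n u - pt t lam n v| ≤ B

lemma abs_sum_geom_le {lam τ : ℝ} (h0 : 0 ≤ lam) (h1 : lam < 1) (hτ : 0 ≤ τ) (n : ℕ)
    (c : Fin n → ℝ) (hc : ∀ k, |c k| ≤ τ) : |∑ k, c k * lam ^ (k : ℕ)| ≤ τ / (1 - lam) := by
  calc |∑ k, c k * lam ^ (k : ℕ)| ≤ ∑ k : Fin n, τ * lam ^ (k : ℕ) := by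
        refine (Finset.abs_sum_le_sum_abs _ _).trans (Finset.sum_le_sum fun k _ => ?_)
        rw [abs_mul, abs_of_nonneg (pow_nonneg h0 _)]
        exact mul_le_mul_of_nonneg_right (hc k) (pow_nonneg h0 _)
    _ = τ * ∑ k ∈ Finset.range n, lam ^ k := by
        rw [Finset.mul_sum, Finset.sum_range]
    _ ≤ τ * (1 - lam)⁻¹ := by
        refine mul_le_mul_of_nonneg_left ?_ hτ
        rw [← tsum_geometric_of_lt_one h0 h1]
        exact (summable_geometric_of_lt_one h0 h1).sum_le_tsum _ (fun _ _ => pow_nonneg h0 _)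
    _ = τ / (1 - lam) := by rw [div_eq_mul_inv]

lemma exists_oscBound (t : Λ → ℝ) {lam : ℝ} (h0 : 0 < lam) (h1 : lam < 1) :
    ∃ B, OscBound t lam B := by
  set τ := ∑ i, ∑ j, |t i - t j|
  have hτ : ∀ i j, |t i - t j| ≤ τ := fun i j =>
    (Finset.single_le_sum (f := fun j => |t i - t j|) (fun j _ => abs_nonneg _)
      (Finset.mem_univ j)).trans (Finset.single_le_sum (f := fun i => ∑ j, |t i - t j|)
      (fun i _ => Finset.sum_nonneg fun j _ => abs_nonneg _) (Finset.mem_univ i))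
  have hτ0 : 0 ≤ τ := Finset.sum_nonneg fun i _ => Finset.sum_nonneg fun j _ => abs_nonneg _
  refine ⟨⌈τ / (1 - lam)⌉₊, fun n u v => ?_⟩
  refine le_trans ?_ (Nat.le_ceil _)
  have : pt t lam n u - pt t lam n v = ∑ k, (t (u k) - t (v k)) * lam ^ (k : ℕ) := by
    unfold pt; rw [← Finset.sum_sub_distrib]; exact Finset.sum_congr rfl fun k _ => by ring
  rw [this]
  exact abs_sum_geom_le h0.le h1 hτ0 n _ (fun k => hτ _ _)

variable {t p : Λ → ℝ} {lam : ℝ} {B : ℕ}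

/-- The constant absorbing all bounded errors. -/
def errC (B : ℕ) : ℝ := Real.log (2 * (B + 1 : ℕ) + 1)

lemma log3_le_errC (B : ℕ) : Real.log 3 ≤ errC B := by
  unfold errC
  refine Real.log_le_log (by norm_num) ?_
  push_cast
  have := Nat.cast_nonneg (α := ℝ) B
  linarith

lemma log3_pos : 0 < Real.log 3 := Real.log_pos (by norm_num)

/-- Letters beyond the `m`-th move a point by at most a bounded number of cells of size `lam ^ m`,
so that they do not affect the entropy at this scale, up to a constant. -/
lemma scaleEnt_append (hp : IsPr p) (hlam : 0 < lam) (hB : OscBound t lam B) (m r : ℕ) :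
    scaleEnt t p lam (m + r) m ≤ scaleEnt t p lam m m + errC B ∧
    scaleEnt t p lam m m ≤ scaleEnt t p lam (m + r) m + errC B := by
  have hP := (hp.pow m).prod (hp.pow r)
  have hm : 0 < lam ^ m := pow_pos hlam m
  unfold scaleEnt
  rw [← (push_append p m r).Ent_eq, ← (push_fst (p := powW m p) (hp.pow r)).Ent_eq]
  simp only [pt_append]
  constructor
  · refine Ent_near' hP _ _ (B + 1) fun ω ω' h => D_near hm _ ?_
    have h1 := abs_lt.1 (D_eq_imp hm h)
    have h2 := abs_le.1 (hB r ω.2 ω'.2)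
    push_cast
    rw [abs_le]
    constructor <;> nlinarith
  · refine Ent_near' hP _ _ (B + 1) fun ω ω' h => D_near hm _ ?_
    have h1 := abs_lt.1 (D_eq_imp hm h)
    have h2 := abs_le.1 (hB r ω.2 ω'.2)
    push_cast
    rw [abs_le]
    constructor <;> nlinarith

lemma scaleEnt_zero_le (hp : IsPr p) (hB : OscBound t lam B) (N : ℕ) :
    scaleEnt t p lam N 0 ≤ errC B := by
  have := Ent_near' (hp.pow N) (fun u => D (lam ^ 0) (pt t lam N u)) (fun _ => ()) (B + 1)
    (fun ω ω' _ => D_near (by simp) _ (by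
      have := hB N ω ω'
      push_cast; rw [pow_zero, mul_one]; linarith))
  rw [Ent_unit (hp.pow N)] at this
  unfold scaleEnt errC
  linarith

/-- Self-similarity: the entropy gained between the scales `lam ^ f` and `lam ^ (f + g)` is at least
the entropy at scale `lam ^ g`, up to a constant. -/
lemma scaleEnt_window (hp : IsPr p) (hlam : 0 < lam) (h1 : lam < 1) (hB : OscBound t lam B)
    (f g N : ℕ) (h : f + g ≤ N) :
    scaleEnt t p lam g g - 5 * errC B ≤ scaleEnt t p lam N (f + g) - scaleEnt t p lam N f := by
  obtain ⟨r, rfl⟩ := Nat.exists_eq_add_of_le h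
  have w := window_mono (hp.pow f) (hp.pow (g + r)) (pt t lam f)
    (fun v => lam ^ f * pt t lam (g + r) v) (fun _ => ()) (pow_pos hlam (f + g))
    (pow_le_pow_of_le_one hlam.le h1.le (Nat.le_add_right f g))
  have e : ∀ m, Ent (prodW (powW f p) (powW (g + r) p))
      (fun ω => (D (lam ^ m) (pt t lam f ω.1 + lam ^ f * pt t lam (g + r) ω.2), ())) =
      scaleEnt t p lam (f + (g + r)) m := by
    intro m
    unfold scaleEnt
    rw [← (push_append p f (g + r)).Ent_eq]
    simp only [pt_append]
    refine le_antisymm (Ent_le_of_ker ((hp.pow f).prod (hp.pow (g + r))) ?_)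
      (Ent_le_of_ker ((hp.pow f).prod (hp.pow (g + r))) ?_) <;>
    · intro ω ω' h
      simpa using h
  rw [e, e] at w
  have e2 : Ent (powW (g + r) p) (fun b => D (lam ^ (f + g)) (lam ^ f * pt t lam (g + r) b)) =
      scaleEnt t p lam (g + r) g := by
    unfold scaleEnt
    simp only [pow_add, D_scale (pow_pos hlam f)]
  have e3 : Ent (powW (g + r) p) (fun b => D (lam ^ f) (lam ^ f * pt t lam (g + r) b)) =
      scaleEnt t p lam (g + r) 0 := by
    unfold scaleEnt
    have := fun b => D_scale (pow_pos hlam f) 1 (pt t lam (g + r) b)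
    simp only [mul_one] at this
    simp only [this, pow_zero]
  rw [e2, e3] at w
  have a1 := (scaleEnt_append hp hlam hB g r).2
  have a2 := scaleEnt_zero_le hp hB (g + r) (lam := lam) (t := t)
  have a3 := log3_le_errC B
  rw [← add_assoc] at w
  linarith

lemma scaleEnt_super (hp : IsPr p) (hlam : 0 < lam) (h1 : lam < 1) (hB : OscBound t lam B)
    (f g : ℕ) : scaleEnt t p lam f f + scaleEnt t p lam g g - 6 * errC B ≤
      scaleEnt t p lam (f + g) (f + g) := by
  have := scaleEnt_window hp hlam h1 hB f g _ le_rfl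
  have := (scaleEnt_append hp hlam hB f g).2
  linarith

lemma scaleEnt_le (hp : IsPr p) (N m : ℕ) :
    scaleEnt t p lam N m ≤ N * Ent p (fun i => i) := by
  rw [← Ent_pow hp (fun i => i) N]
  exact Ent_le_of_ker (hp.pow N) fun ω ω' h => by
    have : ω = ω' := h
    rw [this]

/-- The entropies at scale `lam ^ n` grow linearly: there is a rate `a` with
`scaleEnt n n / n → a`, and the upper bound is uniform. -/
lemma exists_rate (hp : IsPr p) (hlam : 0 < lam) (h1 : lam < 1) (hB : OscBound t lam B) :
    ∃ a : ℝ, Tendsto (fun n : ℕ => scaleEnt t p lam n n / n) atTop (nhds a) ∧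
      ∀ n : ℕ, scaleEnt t p lam n n ≤ a * n + 6 * errC B := by
  have hC : 0 ≤ errC B := log3_pos.le.trans (log3_le_errC B)
  set u : ℕ → ℝ := fun n => 6 * errC B - scaleEnt t p lam n n with hu
  have hs : Subadditive u := fun m n => by
    have := scaleEnt_super (t := t) hp hlam h1 hB m n
    simp only [hu]; linarith
  have hb : BddBelow (range fun n : ℕ => u n / n) := by
    refine ⟨-Ent p (fun i => i), ?_⟩
    rintro _ ⟨n, rfl⟩
    rcases Nat.eq_zero_or_pos n with rfl | hn
    · simpa using Ent_nonneg hp (fun i => i)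
    · have hn' : (0 : ℝ) < n := by exact_mod_cast hn
      rw [le_div_iff₀ hn']
      have := scaleEnt_le (t := t) (lam := lam) hp n n
      simp only [hu]; nlinarith
  refine ⟨-hs.lim, ?_, fun n => ?_⟩
  · have l := hs.tendsto_lim hb
    have l2 : Tendsto (fun n : ℕ => 6 * errC B / (n : ℝ)) atTop (nhds 0) :=
      tendsto_const_div_atTop_nhds_zero_nat _
    have := l2.sub l
    rw [zero_sub] at this
    refine this.congr fun n => ?_
    simp only [hu]; ring
  · rcases Nat.eq_zero_or_pos n with rfl | hn
    · have := scaleEnt_le (t := t) (lam := lam) hp 0 0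
      simp at this ⊢; linarith
    · have hn' : (0 : ℝ) < n := by exact_mod_cast hn
      have := hs.lim_le_div hb hn.ne'
      rw [le_div_iff₀ hn'] at this
      simp only [hu] at this; linarith

end ifs

/-! ### Entropy of large convolution powers of the cylinder points -/

section conv
variable {Λ : Type*} [Fintype Λ] {t p : Λ → ℝ} {lam : ℝ} {B : ℕ}

/-- Entropy at scale `r` of `Y₁ + ⋯ + Y_k + lam ^ n * X`, jointly with the cells of size `lam ^ n`
of the `Y_j`; here the `Y_j` are independent random points of generation `n`, and `X` is an
independent random point of generation `2 * n`. -/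
def convEnt (t p : Λ → ℝ) (lam : ℝ) (n k : ℕ) (r : ℝ) : ℝ :=
  Ent (prodW (powW k (powW n p)) (powW (2 * n) p))
    (fun ω => (D r ((∑ j, pt t lam n (ω.1 j)) + lam ^ n * pt t lam (2 * n) ω.2),
      fun j => D (lam ^ n) (pt t lam n (ω.1 j))))

/-- Upper bound at the finest scale, from the iterated Kaimanovich–Vershik inequality: each of the
`k` summands contributes at most the entropy gained between generations `2 * n` and `n + 2 * n`. -/
lemma convEnt_upper (hp : IsPr p) (hlam : 0 < lam) (h1 : lam < 1) (hB : OscBound t lam B)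
    (n k : ℕ) : convEnt t p lam n k (lam ^ (n + 2 * n)) ≤ scaleEnt t p lam (2 * n) (2 * n) +
      k * (scaleEnt t p lam (n + 2 * n) (n + 2 * n) - scaleEnt t p lam (2 * n) (2 * n)
        + 4 * errC B) := by
  have hr : 0 < lam ^ (n + 2 * n) := pow_pos hlam _
  have hn : 0 < lam ^ n := pow_pos hlam _
  have h := kv_pow (hp.pow n) (hp.pow (2 * n)) (pt t lam n) (fun u => D (lam ^ n) (pt t lam n u))
    (fun v => lam ^ n * pt t lam (2 * n) v) hr k
  have hP := (hp.pow n).prod (hp.pow (2 * n))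
  have e2 : Ent (powW (2 * n) p) (fun b => D (lam ^ (n + 2 * n)) (lam ^ n * pt t lam (2 * n) b)) =
      scaleEnt t p lam (2 * n) (2 * n) := by
    unfold scaleEnt
    simp only [pow_add, D_scale hn]
  have e1 : Ent (prodW (powW n p) (powW (2 * n) p)) (fun ω => (D (lam ^ (n + 2 * n))
      (pt t lam n ω.1 + lam ^ n * pt t lam (2 * n) ω.2), D (lam ^ n) (pt t lam n ω.1))) ≤
      scaleEnt t p lam (n + 2 * n) (n + 2 * n) + errC B := by
    unfold scaleEnt
    rw [← (push_append p n (2 * n)).Ent_eq]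
    simp only [pt_append]
    refine le_trans (Ent_le_of_ker hP ?_) (Ent_near hP (fun ω => D (lam ^ n) (pt t lam n ω.1))
      (fun ω => D (lam ^ (n + 2 * n)) (pt t lam n ω.1 + lam ^ n * pt t lam (2 * n) ω.2)) _ (B + 1)
      fun ω ω' h => ⟨D_near hn _ ?_, h⟩)
    · intro ω ω' h
      simp only [Prod.mk.injEq] at h ⊢; tauto
    · have h1' := abs_lt.1 (D_eq_imp hr h)
      have h2 := abs_le.1 (hB (2 * n) ω.2 ω'.2)
      have h3 : lam ^ (n + 2 * n) ≤ lam ^ n :=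
        pow_le_pow_of_le_one hlam.le h1.le (Nat.le_add_right _ _)
      push_cast
      rw [abs_le]
      constructor <;> nlinarith
  rw [e2] at h
  refine h.trans ?_
  have := log3_le_errC B
  refine add_le_add le_rfl (mul_le_mul_of_nonneg_left ?_ (Nat.cast_nonneg k))
  linarith

lemma convEnt_lower (hp : IsPr p) (n k : ℕ) (r : ℝ) :
    k * scaleEnt t p lam n n ≤ convEnt t p lam n k r := by
  have hP := ((hp.pow n).pow k).prod (hp.pow (2 * n))
  unfold scaleEnt convEnt
  rw [← Ent_pow (hp.pow n), ← (push_fst (p := powW k (powW n p)) (hp.pow (2 * n))).Ent_eq]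
  exact Ent_le_of_ker hP fun ω ω' h => by
    simp only [Prod.mk.injEq] at h; exact h.2

lemma convEnt_mono (hp : IsPr p) (n k : ℕ) {r₁ r₂ : ℝ} (h0 : 0 < r₁) (h12 : r₁ ≤ r₂) :
    convEnt t p lam n k r₂ ≤ convEnt t p lam n k r₁ + Real.log 3 :=
  Ent_scale_mono (((hp.pow n).pow k).prod (hp.pow (2 * n))) _ _ h0 h12

/-- The entropy gained between two scales is at least that of the summand `lam ^ n * X`. -/
lemma convEnt_window (hp : IsPr p) (hlam : 0 < lam) (h1 : lam < 1) (hB : OscBound t lam B)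
    (n k f g : ℕ) (h : f + g ≤ 2 * n) :
    scaleEnt t p lam g g - 8 * errC B ≤
      convEnt t p lam n k (lam ^ (n + (f + g))) - convEnt t p lam n k (lam ^ (n + f)) := by
  have hn : 0 < lam ^ n := pow_pos hlam _
  have w := window_mono ((hp.pow n).pow k) (hp.pow (2 * n)) (fun u => ∑ j, pt t lam n (u j))
    (fun v => lam ^ n * pt t lam (2 * n) v) (fun u j => D (lam ^ n) (pt t lam n (u j)))
    (pow_pos hlam (n + (f + g)))
    (pow_le_pow_of_le_one hlam.le h1.le (show n + f ≤ n + (f + g) by omega))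
  have e2 : ∀ m, Ent (powW (2 * n) p) (fun b => D (lam ^ (n + m)) (lam ^ n * pt t lam (2 * n) b)) =
      scaleEnt t p lam (2 * n) m := by
    intro m
    unfold scaleEnt
    simp only [pow_add, D_scale hn]
  rw [e2, e2] at w
  have := scaleEnt_window (t := t) hp hlam h1 hB f g _ h
  have := log3_le_errC B
  unfold convEnt
  linarith

/-- Conditional entropy of a random point of generation `n` at scale `lam ^ (n + f + g)`, given
its cells of sizes `lam ^ (n + f)` and `lam ^ n`. -/
def stepEnt (t p : Λ → ℝ) (lam : ℝ) (n f g : ℕ) : ℝ :=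
  Ent (powW n p) (fun u => (D (lam ^ (n + (f + g))) (pt t lam n u), D (lam ^ (n + f)) (pt t lam n u),
    D (lam ^ n) (pt t lam n u))) -
  Ent (powW n p) (fun u => (D (lam ^ (n + f)) (pt t lam n u), D (lam ^ n) (pt t lam n u)))

/-- If the points of generation `n` carry substantial entropy between the scales
`lam ^ (n + f + g + L)` and `lam ^ (n + f + g)`, the convolution has almost full entropy between
`lam ^ (n + f)` and the smaller of these scales. -/
lemma convEnt_growth (hp : IsPr p) (hlam : 0 < lam) (h1 : lam < 1) (n k f g L K : ℕ) {x : ℝ}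
    (hx : 0 < x) (hk1 : 1 ≤ k) (hk : k * lam ^ (2 * g) ≤ 1) (hK : 1 ≤ K * lam ^ L)
    (hent : Real.log 6 + x * Real.log (2 * (2 * K + 1)) ≤ stepEnt t p lam n (f + g) L) :
    1 / 2 * Real.log (k * x) - 3 - Real.log 3 ≤
      convEnt t p lam n k (lam ^ (n + (f + (g + L)))) - convEnt t p lam n k (lam ^ (n + f)) := by
  refine window_growth (hp.pow n) (hp.pow (2 * n)) (pt t lam n)
    (fun u => D (lam ^ n) (pt t lam n u)) (fun v => lam ^ n * pt t lam (2 * n) v)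
    (pow_pos hlam _) (R := lam ^ (n + (f + g))) (pow_pos hlam _)
    (pow_le_pow_of_le_one hlam.le h1.le (by omega)) k hk1 ?_ hx K ?_ ?_
  · have : 0 < (lam ^ (n + f)) ^ 2 := by positivity
    calc (k : ℝ) * (lam ^ (n + (f + g))) ^ 2 = k * lam ^ (2 * g) * (lam ^ (n + f)) ^ 2 := by ring
      _ ≤ 1 * (lam ^ (n + f)) ^ 2 := by gcongr
      _ = _ := one_mul _
  · have : 0 < lam ^ (n + (f + g)) := by positivity
    calc lam ^ (n + (f + g)) = 1 * lam ^ (n + (f + g)) := (one_mul _).symm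
      _ ≤ K * lam ^ L * lam ^ (n + (f + g)) := by gcongr
      _ = K * lam ^ (n + (f + (g + L))) := by ring
  · unfold stepEnt at hent
    rw [add_assoc f g L] at hent
    exact hent

lemma stepEnt_le (hp : IsPr p) (hlam : 0 < lam) (n f L K : ℕ) (hK : 1 ≤ K * lam ^ L) :
    stepEnt t p lam n f L ≤ Real.log (2 * K + 1) := by
  unfold stepEnt
  have hs : 0 < lam ^ (n + (f + L)) := by positivity
  have := Ent_near (hp.pow n) (fun u => D (lam ^ (n + (f + L))) (pt t lam n u))
    (fun u => (D (lam ^ (n + f)) (pt t lam n u), D (lam ^ n) (pt t lam n u)))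
    (fun u => (D (lam ^ (n + f)) (pt t lam n u), D (lam ^ n) (pt t lam n u))) K
    (fun ω ω' h => ⟨D_near hs _ ?_, h⟩)
  · linarith
  · simp only [Prod.mk.injEq] at h
    have h2 : 0 < lam ^ (n + f) := by positivity
    refine (D_eq_imp h2 h.1).le.trans ?_
    calc lam ^ (n + f) = 1 * lam ^ (n + f) := (one_mul _).symm
      _ ≤ K * lam ^ L * lam ^ (n + f) := by gcongr
      _ = K * lam ^ (n + (f + L)) := by ring

/-- Chain rule over the scales `lam ^ (n + i * L)`. -/
lemma sum_stepEnt (hp : IsPr p) (hlam : 0 < lam) (n J L K : ℕ)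
    (hJ : 2 * n ≤ J * L + L) (hK : 1 ≤ K * lam ^ L) (h1 : lam < 1) :
    scaleEnt t p lam n (n + 2 * n) - scaleEnt t p lam n n - Real.log (2 * K + 1) ≤
      ∑ i ∈ Finset.range J, stepEnt t p lam n (i * L) L := by
  set E : ℕ → ℝ := fun i => Ent (powW n p) (fun u => (D (lam ^ (n + i * L)) (pt t lam n u),
    D (lam ^ n) (pt t lam n u)))
  have hE : ∀ i, E (i + 1) - E i ≤ stepEnt t p lam n (i * L) L := by
    intro i
    unfold stepEnt
    have : E (i + 1) ≤ Ent (powW n p) (fun u => (D (lam ^ (n + (i * L + L))) (pt t lam n u),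
        D (lam ^ (n + i * L)) (pt t lam n u), D (lam ^ n) (pt t lam n u))) :=
      Ent_le_of_ker (hp.pow n) fun ω ω' h => by
        simp only [Prod.mk.injEq] at h ⊢
        rw [show (i + 1) * L = i * L + L by ring]
        tauto
    linarith
  have h0 : E 0 = scaleEnt t p lam n n := by
    unfold scaleEnt
    refine le_antisymm (Ent_le_of_ker (hp.pow n) ?_) (Ent_le_of_ker (hp.pow n) ?_)
    · intro ω ω' h; simp only [zero_mul, add_zero, h]
    · intro ω ω' h; simp only [Prod.mk.injEq] at h; exact h.2
  have hJ' : scaleEnt t p lam n (n + 2 * n) ≤ E J + Real.log (2 * K + 1) := by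
    refine Ent_near' (hp.pow n) _ _ K fun ω ω' h => D_near (by positivity) _ ?_
    simp only [Prod.mk.injEq] at h
    have h2 : 0 < lam ^ (n + J * L) := by positivity
    refine (D_eq_imp h2 h.1).le.trans ?_
    calc lam ^ (n + J * L) = 1 * lam ^ (n + J * L) := (one_mul _).symm
      _ ≤ K * lam ^ L * lam ^ (n + J * L) := by gcongr
      _ = K * lam ^ (n + (J * L + L)) := by ring
      _ ≤ _ := by
        have : lam ^ (n + (J * L + L)) ≤ lam ^ (n + 2 * n) :=
          pow_le_pow_of_le_one hlam.le h1.le (by omega)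
        gcongr
  have := Finset.sum_le_sum (fun i (_ : i ∈ Finset.range J) => hE i)
  rw [Finset.sum_range_sub] at this
  linarith

end conv

/-! ### No superexponential concentration below entropy rate `log (1 / lam)` -/

section inverse
variable {Λ : Type*} [Fintype Λ] {t p : Λ → ℝ} {lam : ℝ} {B : ℕ}

lemma sum_window_le (H : ℕ → ℝ) {c : ℝ} (N m : ℕ)
    (hmono : ∀ i j, i ≤ j → H i ≤ H j + c) :
    ∑ i ∈ Finset.range N, (H (i + (m + 1)) - H i) ≤ (m + 1) * (H (N + m) - H 0 + 2 * c) := by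
  have e1 := Finset.sum_range_add H N (m + 1)
  have e2 := Finset.sum_range_add H (m + 1) N
  rw [add_comm (m + 1) N] at e2
  have e : ∑ i ∈ Finset.range N, (H (i + (m + 1)) - H i) =
      ∑ i ∈ Finset.range (m + 1), (H (N + i) - H i) := by
    rw [Finset.sum_sub_distrib, Finset.sum_sub_distrib]
    simp only [add_comm _ (m + 1)] at e1 e2 ⊢
    linarith
  rw [e]
  have : ∑ i ∈ Finset.range (m + 1), (H (N + i) - H i) ≤
      ∑ i ∈ Finset.range (m + 1), (H (N + m) - H 0 + 2 * c) := by
    refine Finset.sum_le_sum fun i hi => ?_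
    have hi' := Finset.mem_range.1 hi
    have := hmono (N + i) (N + m) (by omega)
    have := hmono 0 i (by omega)
    linarith
  refine this.trans (le_of_eq ?_)
  rw [Finset.sum_const, Finset.card_range, nsmul_eq_mul]
  push_cast
  ring

/-- The entropy of the convolution is counted twice: it is bounded above by the
Kaimanovich–Vershik inequality, and bounded below scale by scale, with the larger gain `g₁` at
those scales where the points of generation `n` carry entropy. -/
lemma count_ineq (hp : IsPr p) (hlam : 0 < lam) (h1 : lam < 1) (hB : OscBound t lam B)
    (n k N m L K : ℕ) (hN : (N + m) * L ≤ 2 * n) (hN' : 2 * n ≤ (N + m) * L + L)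
    {x base g₁ κ₀ θ : ℝ} (hx : 0 < x)
    (hk1 : 1 ≤ k) (hk : k * lam ^ (2 * (m * L)) ≤ 1) (hK : 1 ≤ K * lam ^ L)
    (hbase : base ≤ scaleEnt t p lam ((m + 1) * L) ((m + 1) * L) - 8 * errC B)
    (hg₁ : g₁ ≤ 1 / 2 * Real.log (k * x) - 3 - Real.log 3) (hbg : base ≤ g₁)
    (hκ : Real.log (2 * K + 1) ≤ κ₀) (hκ0 : 0 < κ₀)
    (hθ : Real.log 6 + x * Real.log (2 * (2 * K + 1)) ≤ θ) :
    N * base + ((scaleEnt t p lam n (n + 2 * n) - scaleEnt t p lam n n - N * θ) / κ₀ - (m + 1))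
      * (g₁ - base) ≤
    (m + 1) * (scaleEnt t p lam (2 * n) (2 * n) + k * (scaleEnt t p lam (n + 2 * n) (n + 2 * n) -
      scaleEnt t p lam (2 * n) (2 * n) - scaleEnt t p lam n n + 4 * errC B) + 3 * Real.log 3) := by
  set H : ℕ → ℝ := fun i => convEnt t p lam n k (lam ^ (n + i * L)) with hH
  have hmono : ∀ i j, i ≤ j → H i ≤ H j + Real.log 3 := fun i j hij =>
    convEnt_mono hp n k (pow_pos hlam _) (pow_le_pow_of_le_one hlam.le h1.le
      (by have := Nat.mul_le_mul_right L hij; omega))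
  have hsum := sum_window_le H N m hmono
  have hJ : H (N + m) ≤ convEnt t p lam n k (lam ^ (n + 2 * n)) + Real.log 3 :=
    convEnt_mono hp n k (pow_pos hlam _) (pow_le_pow_of_le_one hlam.le h1.le (by omega))
  have hup := convEnt_upper (t := t) hp hlam h1 hB n k
  have hlow : k * scaleEnt t p lam n n ≤ H 0 := convEnt_lower hp n k _
  set G : ℕ → Prop := fun i => θ ≤ stepEnt t p lam n ((i + m) * L) L with hG
  have hw : ∀ i ∈ Finset.range N, base + (if G i then g₁ - base else 0) ≤
      H (i + (m + 1)) - H i := by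
    intro i hi
    have hi' := Finset.mem_range.1 hi
    split_ifs with hgi
    · have := convEnt_growth (t := t) hp hlam h1 n k (i * L) (m * L) L K hx hk1 hk hK
        (hθ.trans (by simpa only [hG, add_mul] using hgi))
      simp only [hH]
      rw [show (i + (m + 1)) * L = i * L + (m * L + L) by ring]
      linarith
    · have := convEnt_window (t := t) hp hlam h1 hB n k (i * L) ((m + 1) * L) (by
        refine le_trans ?_ hN
        rw [← add_mul]
        exact Nat.mul_le_mul_right _ (by omega))
      simp only [hH]
      rw [show (i + (m + 1)) * L = i * L + (m + 1) * L by ring]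
      linarith
  have hws := Finset.sum_le_sum hw
  rw [Finset.sum_add_distrib] at hws
  have hcnt := sum_stepEnt (t := t) hp hlam n (N + m) L K hN' hK h1
  rw [add_comm N m, Finset.sum_range_add] at hcnt
  have hc1 : ∑ i ∈ Finset.range m, stepEnt t p lam n (i * L) L ≤ m * κ₀ := by
    have := Finset.sum_le_sum (s := Finset.range m) (fun i _ =>
      (stepEnt_le (t := t) hp hlam n (i * L) L K hK).trans hκ)
    simpa using this
  have hc2 : ∑ i ∈ Finset.range N, stepEnt t p lam n ((m + i) * L) L ≤
      N * θ + ∑ i ∈ Finset.range N, (if G i then κ₀ else 0) := by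
    have hθ0 : 0 ≤ θ := by
      refine le_trans ?_ hθ
      have : 0 ≤ Real.log 6 := Real.log_nonneg (by norm_num)
      have : 0 ≤ Real.log (2 * (2 * K + 1)) := Real.log_nonneg (by
        have := Nat.cast_nonneg (α := ℝ) K; linarith)
      positivity
    have : (N : ℝ) * θ = ∑ i ∈ Finset.range N, θ := by simp
    rw [this, ← Finset.sum_add_distrib]
    refine Finset.sum_le_sum fun i _ => ?_
    split_ifs with h
    · have := (stepEnt_le (t := t) hp hlam n ((m + i) * L) L K hK).trans hκ
      linarith
    · simp only [hG, not_le, add_comm i m] at h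
      linarith
  have f1 : ∑ i ∈ Finset.range N, (if G i then κ₀ else 0) =
      κ₀ * ((Finset.range N).filter G).card := by
    rw [← Finset.sum_filter, Finset.sum_const, nsmul_eq_mul, mul_comm]
  have f2 : ∑ i ∈ Finset.range N, (if G i then g₁ - base else 0) =
      (g₁ - base) * ((Finset.range N).filter G).card := by
    rw [← Finset.sum_filter, Finset.sum_const, nsmul_eq_mul, mul_comm]
  set c : ℝ := (((Finset.range N).filter G).card : ℝ)
  rw [f1] at hc2
  rw [f2] at hws
  have hc : (scaleEnt t p lam n (n + 2 * n) - scaleEnt t p lam n n - N * θ) / κ₀ - (m + 1) ≤ c := by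
    rw [sub_le_iff_le_add, div_le_iff₀ hκ0]
    linarith
  have hfin := mul_le_mul_of_nonneg_right hc (sub_nonneg.2 hbg)
  have hm : (0 : ℝ) ≤ m + 1 := by positivity
  have htot : H (N + m) - H 0 + 2 * Real.log 3 ≤ scaleEnt t p lam (2 * n) (2 * n) +
      k * (scaleEnt t p lam (n + 2 * n) (n + 2 * n) -
      scaleEnt t p lam (2 * n) (2 * n) - scaleEnt t p lam n n + 4 * errC B) + 3 * Real.log 3 := by
    linarith
  have := mul_le_mul_of_nonneg_left htot hm
  simp only [Finset.sum_const, Finset.card_range, nsmul_eq_mul] at hws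
  linarith

set_option maxHeartbeats 1000000 in
/-- If the entropy rate `a` at scales `lam ^ n` is smaller than `log (1 / lam)`, the points of
generation `n` carry only `o(n)` entropy between the scales `lam ^ n` and `lam ^ (3 * n)`. -/
theorem no_concentration (hp : IsPr p) (hlam : 0 < lam) (h1 : lam < 1) (hB : OscBound t lam B)
    {a : ℝ} (hlim : Tendsto (fun n : ℕ => scaleEnt t p lam n n / n) atTop (nhds a))
    (hup : ∀ n : ℕ, scaleEnt t p lam n n ≤ a * n + 6 * errC B) (ha : a < Real.log lam⁻¹)
    {δ : ℝ} (hδ : 0 < δ) :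
    ∀ᶠ n : ℕ in atTop, scaleEnt t p lam n (n + 2 * n) - scaleEnt t p lam n n ≤ δ * n := by
  set ℓ := Real.log lam⁻¹ with hℓ
  set C := errC B
  have hC : 0 ≤ C := log3_pos.le.trans (log3_le_errC B)
  have hC3 : Real.log 3 ≤ C := log3_le_errC B
  have ha0 : 0 ≤ a := ge_of_tendsto' hlim fun n =>
    div_nonneg (Ent_nonneg (hp.pow n) _) (Nat.cast_nonneg n)
  have hℓ0 : 0 < ℓ := ha0.trans_lt ha
  have hlow : ∀ ε > 0, ∃ n0 : ℕ, 1 ≤ n0 ∧ ∀ n ≥ n0, (a - ε) * n ≤ scaleEnt t p lam n n := by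
    intro ε hε
    obtain ⟨n0, h0⟩ := eventually_atTop.1 (hlim.eventually (lt_mem_nhds (show a - ε < a by linarith)))
    refine ⟨max n0 1, le_max_right _ _, fun n hn => ?_⟩
    have hn0 : (0 : ℝ) < n := by exact_mod_cast (le_max_right n0 1).trans hn
    have := h0 n ((le_max_left _ _).trans hn)
    rw [lt_div_iff₀ hn0] at this
    exact this.le
  set κ := δ * (ℓ - a) / (8 * ℓ) with hκdef
  have hκ : 0 < κ := by
    have : 0 < ℓ - a := by linarith
    positivity
  set x := δ / (16 * ℓ) with hxdef
  have hx : 0 < x := by positivity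
  obtain ⟨n0, hn01, hn0⟩ := hlow (κ / 16) (by positivity)
  -- the block length
  obtain ⟨L, hL⟩ := exists_nat_ge (max (max (16 / δ) (64 * C / κ)) (max (n0 : ℝ) (Real.log 10 / ℓ)))
  have hL1 : 16 / δ ≤ L := (le_max_left _ _).trans ((le_max_left _ _).trans hL)
  have hL2 : 64 * C / κ ≤ L := (le_max_right _ _).trans ((le_max_left _ _).trans hL)
  have hL3 : n0 ≤ L := by exact_mod_cast (le_max_left _ _).trans ((le_max_right _ _).trans hL)
  have hL4 : Real.log 10 / ℓ ≤ L := (le_max_right _ _).trans ((le_max_right _ _).trans hL)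
  have hLpos : 0 < L := by omega
  have hLp : (0 : ℝ) < L := by exact_mod_cast hLpos
  rw [div_le_iff₀ hδ] at hL1
  rw [div_le_iff₀ hκ] at hL2
  rw [div_le_iff₀ hℓ0] at hL4
  -- the number of blocks in a window
  obtain ⟨m0, hm0⟩ := exists_nat_ge ((L * a + 5 - 1 / 2 * Real.log (x / 2)) * 2 / (L * (ℓ - a)))
  set m := m0 + 1 with hm
  have hm1 : (1 : ℝ) ≤ m := by rw [hm]; push_cast; linarith [Nat.cast_nonneg (α := ℝ) m0]
  have hmgain : L * a + 5 - 1 / 2 * Real.log (x / 2) ≤ m * L * (ℓ - a) / 2 := by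
    have h2 : 0 < L * (ℓ - a) := mul_pos hLp (by linarith)
    rw [div_le_iff₀ h2] at hm0
    have : (m0 : ℝ) * (L * (ℓ - a)) ≤ m * (L * (ℓ - a)) := by
      rw [hm]; push_cast; nlinarith
    linarith
  -- the number of summands
  have hpw : ∀ j : ℕ, Real.log ((lam⁻¹) ^ j) = j * ℓ := fun j => by rw [Real.log_pow]
  have hinv1 : 1 ≤ lam⁻¹ := (one_le_inv₀ hlam).2 h1.le
  set k := ⌊(lam⁻¹) ^ (2 * (m * L))⌋₊ with hk
  have hbig : 1 ≤ (lam⁻¹) ^ (2 * (m * L)) := one_le_pow₀ hinv1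
  have hk1 : 1 ≤ k := Nat.one_le_floor_iff _ |>.2 hbig
  have hkp : (1 : ℝ) ≤ k := by exact_mod_cast hk1
  have hkle : (k : ℝ) ≤ (lam⁻¹) ^ (2 * (m * L)) := Nat.floor_le (by positivity)
  have hkge : (lam⁻¹) ^ (2 * (m * L)) / 2 ≤ k := by
    have := Nat.lt_floor_add_one ((lam⁻¹) ^ (2 * (m * L)))
    rw [← hk] at this
    linarith
  have hk2 : k * lam ^ (2 * (m * L)) ≤ 1 := by
    have : 0 < lam ^ (2 * (m * L)) := pow_pos hlam _
    calc k * lam ^ (2 * (m * L)) ≤ (lam⁻¹) ^ (2 * (m * L)) * lam ^ (2 * (m * L)) := by gcongr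
      _ = 1 := by rw [← mul_pow, inv_mul_cancel₀ hlam.ne', one_pow]
  set K := ⌈(lam⁻¹) ^ L⌉₊ with hKdef
  have hK1 : 1 ≤ K * lam ^ L := by
    have : 0 < lam ^ L := pow_pos hlam _
    calc (1 : ℝ) = (lam⁻¹) ^ L * lam ^ L := by
          rw [← mul_pow, inv_mul_cancel₀ hlam.ne', one_pow]
      _ ≤ K * lam ^ L := by have := Nat.le_ceil ((lam⁻¹) ^ L); gcongr
  have hKlog : Real.log (2 * (2 * K + 1)) ≤ 2 * L * ℓ := by
    have hb : 1 ≤ (lam⁻¹) ^ L := one_le_pow₀ hinv1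
    have h2 : (K : ℝ) ≤ (lam⁻¹) ^ L + 1 := (Nat.ceil_lt_add_one (by positivity)).le
    have h3 : Real.log (2 * (2 * K + 1)) ≤ Real.log (10 * (lam⁻¹) ^ L) := by
      refine Real.log_le_log (by positivity) (by linarith)
    rw [Real.log_mul (x := 10) (by norm_num) (by positivity), hpw] at h3
    linarith
  have hKlog' : Real.log (2 * K + 1) ≤ 2 * L * ℓ := by
    refine le_trans (Real.log_le_log (by positivity) ?_) hKlog
    linarith [Nat.cast_nonneg (α := ℝ) K]
  clear_value K k m x κ
  set base := (m + 1) * L * (a - κ / 16) - 8 * C with hbasedef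
  set g₁ := m * L * ℓ + 1 / 2 * Real.log (x / 2) - 5 with hg₁def
  have hbase : base ≤ scaleEnt t p lam ((m + 1) * L) ((m + 1) * L) - 8 * C := by
    have := hn0 ((m + 1) * L) (hL3.trans (Nat.le_mul_of_pos_left _ (Nat.succ_pos m)))
    push_cast at this
    rw [hbasedef]; linarith
  have hg₁ : g₁ ≤ 1 / 2 * Real.log (k * x) - 3 - Real.log 3 := by
    have h3 : Real.log 3 ≤ 2 := by
      have := Real.log_le_sub_one_of_pos (show (0 : ℝ) < 3 by norm_num); linarith
    have h4 : Real.log ((lam⁻¹) ^ (2 * (m * L)) * (x / 2)) ≤ Real.log (k * x) := by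
      refine Real.log_le_log (by positivity) ?_
      have := mul_le_mul_of_nonneg_right hkge hx.le
      linarith only [this]
    rw [Real.log_mul (by positivity) (by positivity), hpw] at h4
    push_cast at h4
    rw [hg₁def]; linarith
  have hgain : m * L * (ℓ - a) / 2 ≤ g₁ - base := by
    have : 0 ≤ (m + 1 : ℝ) * L * (κ / 16) := by positivity
    rw [hg₁def, hbasedef]
    linarith only [this, hmgain, hC]
  clear_value base g₁
  have hgain0 : 0 ≤ m * L * (ℓ - a) / 2 := by
    have : 0 ≤ ℓ - a := by linarith
    positivity
  set θ := 2 + x * (2 * L * ℓ) with hθdef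
  have hθ : Real.log 6 + x * Real.log (2 * (2 * K + 1)) ≤ θ := by
    have h6 : Real.log 6 ≤ 2 := by
      rw [Real.log_le_iff_le_exp (by norm_num)]
      have := Real.exp_one_gt_d9
      have h2 : Real.exp 2 = Real.exp 1 * Real.exp 1 := by rw [← Real.exp_add]; norm_num
      rw [h2]; nlinarith
    have := mul_le_mul_of_nonneg_left hKlog hx.le
    linarith
  set ε₁ := κ / (12 * (m + 1) * k) with hε₁
  have hε₁0 : 0 < ε₁ := by positivity
  have hε₁1 : 3 * (m + 1) * k * ε₁ = κ / 4 := by rw [hε₁]; field_simp; norm_num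
  obtain ⟨n1, hn11, hn1⟩ := hlow ε₁ hε₁0
  -- collecting the terms that stay bounded as `n` grows
  set Cst := (m + 1) * (6 * C + k * (10 * C) + 3 * C + (g₁ - base)) + (m + 1) * (m + 1) * L * a
    with hCst
  obtain ⟨n2, hn2⟩ := exists_nat_gt (Cst * 4 / (m * κ))
  filter_upwards [eventually_ge_atTop (max (max n1 n2) ((m + 1) * L))] with n hn
  have hnn1 : n1 ≤ n := (le_max_left _ _).trans ((le_max_left _ _).trans hn)
  have hnn2 : n2 ≤ n := (le_max_right _ _).trans ((le_max_left _ _).trans hn)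
  have hnn3 : (m + 1) * L ≤ n := (le_max_right _ _).trans hn
  by_contra hcon
  rw [not_le] at hcon
  have hnp : (0 : ℝ) < n := by exact_mod_cast lt_of_lt_of_le hn11 hnn1
  set J := 2 * n / L with hJ
  have hJ1 : J * L ≤ 2 * n := Nat.div_mul_le_self _ _
  have hJ2 : 2 * n ≤ J * L + L := by
    rw [hJ]
    exact (Nat.lt_div_mul_add hLpos).le
  have hmJ : m ≤ J := by
    rw [hJ, Nat.le_div_iff_mul_le hLpos]
    rw [add_mul] at hnn3; omega
  obtain ⟨N, hN⟩ := Nat.exists_eq_add_of_le' hmJ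
  rw [hN] at hJ1 hJ2
  have key := count_ineq (t := t) hp hlam h1 hB n k N m L K hJ1 hJ2 hx hk1 hk2 hK1 hbase hg₁
    (by linarith) hKlog' (by positivity) hθ
  have hNL1 : (N : ℝ) * L ≤ 2 * n := by
    have : ((N + m : ℕ) : ℝ) * L ≤ 2 * n := by exact_mod_cast hJ1
    push_cast at this
    have : 0 ≤ (m : ℝ) * L := by positivity
    linarith
  have hNL2 : 2 * (n : ℝ) ≤ N * L + (m + 1) * L := by
    have : 2 * (n : ℝ) ≤ (N + m : ℕ) * L + L := by exact_mod_cast hJ2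
    push_cast at this
    linarith
  have hNbase : (m + 1) * (2 * n * a) - (m + 1) * (m + 1) * L * a - 2 * n * (m + 1) * (κ / 16) -
      n * (κ / 4) ≤ N * base := by
    have e1 : (N : ℝ) * base = (m + 1) * a * (N * L) - (m + 1) * (κ / 16) * (N * L) - 8 * C * N := by
      rw [hbasedef]; ring
    have e2 : (m + 1) * a * (2 * n - (m + 1) * L) ≤ (m + 1) * a * (N * L) :=
      mul_le_mul_of_nonneg_left (by linarith) (by positivity)
    have e3 : (m + 1) * (κ / 16) * (N * L) ≤ (m + 1) * (κ / 16) * (2 * n) :=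
      mul_le_mul_of_nonneg_left hNL1 (by positivity)
    have e4 : 8 * C * N ≤ n * (κ / 4) := by
      have e5 := mul_le_mul_of_nonneg_right hNL1 hκ.le
      have e6 := mul_le_mul_of_nonneg_left hL2 (Nat.cast_nonneg (α := ℝ) N)
      rw [mul_assoc] at e5
      linarith only [e5, e6]
    rw [e1]; linarith only [e2, e3, e4]
  have hgood : δ * n / (4 * L * ℓ) - (m + 1) ≤
      (scaleEnt t p lam n (n + 2 * n) - scaleEnt t p lam n n - N * θ) / (2 * L * ℓ) - (m + 1) := by
    refine sub_le_sub_right ?_ _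
    rw [div_le_div_iff₀ (by positivity) (by positivity)]
    have hxl : x * (2 * L * ℓ) = δ * L / 8 := by rw [hxdef]; field_simp; norm_num
    have hNθ : N * θ ≤ δ * n / 2 := by
      have e1 : N * θ = 2 * N + (N * L) * (δ / 8) := by rw [hθdef, hxl]; ring
      have e2 : (N * L) * (δ / 8) ≤ 2 * n * (δ / 8) := mul_le_mul_of_nonneg_right hNL1 (by positivity)
      have e3 : 16 * (N : ℝ) ≤ 2 * n * δ := by
        have e4 := mul_le_mul_of_nonneg_left hL1 (Nat.cast_nonneg (α := ℝ) N)
        have e5 := mul_le_mul_of_nonneg_right hNL1 hδ.le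
        rw [mul_assoc] at e5
        linarith only [e4, e5]
      rw [e1]; linarith only [e2, e3]
    have e6 : δ * n / 2 ≤ scaleEnt t p lam n (n + 2 * n) - scaleEnt t p lam n n - N * θ := by
      linarith only [hcon, hNθ]
    have e7 := mul_le_mul_of_nonneg_right e6 (show 0 ≤ 4 * L * ℓ by positivity)
    linarith only [e7]
  have hprod : n * (m * κ) - (m + 1) * (g₁ - base) ≤
      ((scaleEnt t p lam n (n + 2 * n) - scaleEnt t p lam n n - N * θ) / (2 * L * ℓ) - (m + 1))
        * (g₁ - base) := by
    refine le_trans ?_ (mul_le_mul_of_nonneg_right hgood (hgain0.trans hgain))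
    have e1 : n * (m * κ) = δ * n / (4 * L * ℓ) * (m * L * (ℓ - a) / 2) := by
      rw [hκdef]; field_simp; ring
    have e2 := mul_le_mul_of_nonneg_left hgain (show 0 ≤ δ * n / (4 * L * ℓ) by positivity)
    rw [sub_mul]; linarith only [e1, e2]
  have u1 := hup (2 * n)
  have u2 := hup (n + 2 * n)
  have l1 := hn1 (2 * n) (by omega)
  have l2 := hn1 n hnn1
  push_cast at u1 u2 l1 l2
  have hupk : k * (scaleEnt t p lam (n + 2 * n) (n + 2 * n) -
      scaleEnt t p lam (2 * n) (2 * n) - scaleEnt t p lam n n + 4 * C) ≤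
      k * (3 * n * ε₁ + 10 * C) := by
    refine mul_le_mul_of_nonneg_left ?_ (Nat.cast_nonneg k)
    linarith only [u2, l1, l2]
  have hrhs : (m + 1) * (scaleEnt t p lam (2 * n) (2 * n) +
      k * (scaleEnt t p lam (n + 2 * n) (n + 2 * n) -
      scaleEnt t p lam (2 * n) (2 * n) - scaleEnt t p lam n n + 4 * C) + 3 * Real.log 3) ≤
      (m + 1) * (2 * n * a + 6 * C + k * (3 * n * ε₁ + 10 * C) + 3 * C) := by
    refine mul_le_mul_of_nonneg_left ?_ (by positivity)
    linarith only [u1, hupk, hC3]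
  have hrhs2 : (m + 1) * (2 * n * a + 6 * C + k * (3 * n * ε₁ + 10 * C) + 3 * C) =
      (m + 1) * (2 * n * a) + n * (κ / 4) + (m + 1) * (6 * C + k * (10 * C) + 3 * C) := by
    rw [← hε₁1]; ring
  have hfinal : n * (m * κ / 4) ≤ Cst := by
    have e1 : 2 * n * (m + 1) * (κ / 16) ≤ n * (m * κ / 4) := by
      have e0 : (0 : ℝ) ≤ n * κ * (m - 1) :=
        mul_nonneg (mul_nonneg hnp.le hκ.le) (sub_nonneg.2 hm1)
      linarith only [e0]
    have e2 : n * (κ / 4) ≤ n * (m * κ / 4) := by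
      have e0 : (0 : ℝ) ≤ n * κ * (m - 1) :=
        mul_nonneg (mul_nonneg hnp.le hκ.le) (sub_nonneg.2 hm1)
      linarith only [e0]
    rw [hCst]
    linarith only [e1, e2, key, hNbase, hprod, hrhs, hrhs2]
  rw [div_lt_iff₀ (by positivity)] at hn2
  have hn2' : (n2 : ℝ) ≤ n := by exact_mod_cast hnn2
  have : (n2 : ℝ) * (m * κ) ≤ n * (m * κ) := mul_le_mul_of_nonneg_right hn2' (by positivity)
  linarith only [this, hfinal, hn2]

end inverse

/-! ### The entropy rate is bounded by the dimension -/

section dimension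

lemma pt_cons {Λ : Type*} (t : Λ → ℝ) (lam : ℝ) (n : ℕ) (i : Λ) (u : Fin n → Λ) :
    pt t lam (n + 1) (Fin.cons i u : Fin (n + 1) → Λ) = t i + lam * pt t lam n u := by
  unfold pt
  rw [Fin.sum_univ_succ, Finset.mul_sum]
  simp only [Fin.cons_zero, Fin.cons_succ, Fin.val_zero, pow_zero, mul_one, Fin.val_succ]
  congr 1
  exact Finset.sum_congr rfl fun k _ => by ring

variable {Λ : Type*} [Fintype Λ] {t p : Λ → ℝ} {lam : ℝ} {ν : Measure ℝ}

/-- The self-similarity relation iterated `N` times. -/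
lemma measure_iterate [IsProbabilityMeasure ν] (hp : IsPr p)
    (hν : ν = ∑ i, ENNReal.ofReal (p i) • ν.map (fun x => lam * x + t i)) (N : ℕ) :
    ∀ S : Set ℝ, MeasurableSet S → ν.real S =
      ∑ u, powW N p u * ν.real ((fun x => pt t lam N u + lam ^ N * x) ⁻¹' S) := by
  have hm : ∀ i, Measurable (fun x : ℝ => lam * x + t i) := fun i => by fun_prop
  have h1 : ∀ S : Set ℝ, MeasurableSet S → ν.real S =
      ∑ i, p i * ν.real ((fun x => lam * x + t i) ⁻¹' S) := by
    intro S hS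
    have : ν S = ∑ i, ENNReal.ofReal (p i) * ν ((fun x => lam * x + t i) ⁻¹' S) := by
      conv_lhs => rw [hν]
      rw [Measure.finsetSum_apply]
      refine Finset.sum_congr rfl fun i _ => ?_
      rw [Measure.smul_apply, Measure.map_apply (hm i) hS, smul_eq_mul]
    unfold Measure.real
    rw [this, ENNReal.toReal_sum (fun i _ => ENNReal.mul_ne_top ENNReal.ofReal_ne_top
      (measure_ne_top _ _))]
    refine Finset.sum_congr rfl fun i _ => ?_
    rw [ENNReal.toReal_mul, ENNReal.toReal_ofReal (hp.nonneg i)]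
  induction N with
  | zero =>
    intro S hS
    simp [powW, pt]
  | succ N ih =>
    intro S hS
    rw [← (push_cons (p := p) N).sum, h1 S hS, Fintype.sum_prod_type]
    refine Finset.sum_congr rfl fun i _ => ?_
    rw [ih _ (hm i hS), Finset.mul_sum]
    refine Finset.sum_congr rfl fun u _ => ?_
    rw [prodW, mul_assoc, pt_cons]
    have e : (fun x => pt t lam N u + lam ^ N * x) ⁻¹' ((fun x => lam * x + t i) ⁻¹' S) =
        (fun x => (t i + lam * pt t lam N u) + lam ^ (N + 1) * x) ⁻¹' S := by
      rw [← Set.preimage_comp]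
      congr 1
      funext x
      simp only [Function.comp_apply]
      ring
    rw [e]

/-- Neighbourhood of size `K` of the `N`-th cell of size `r`. -/
def cellNbhd (r : ℝ) (K : ℕ) (N : ℤ) : Set ℝ := Icc ((N - K) * r) ((N + 1 + K) * r)

lemma sum_cellNbhd_le [IsProbabilityMeasure ν] {r : ℝ} (hr : 0 < r) (K : ℕ) (A : Finset ℤ) :
    ∑ N ∈ A, ν.real (cellNbhd r K N) ≤ 2 * K + 2 := by
  have hmeas : ∀ N, MeasurableSet (cellNbhd r K N) := fun N => measurableSet_Icc
  have hpt : ∀ x : ℝ, ∑ N ∈ A, (cellNbhd r K N).indicator (1 : ℝ → ℝ≥0∞) x ≤ (2 * K + 2 : ℕ) := by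
    intro x
    have e : ∑ N ∈ A, (cellNbhd r K N).indicator (1 : ℝ → ℝ≥0∞) x =
        ((A.filter (fun N => x ∈ cellNbhd r K N)).card : ℝ≥0∞) := by
      rw [Finset.card_filter]
      push_cast
      refine Finset.sum_congr rfl fun N _ => ?_
      simp [Set.indicator_apply]
    rw [e]
    have hsub : A.filter (fun N => x ∈ cellNbhd r K N) ⊆
        Finset.Icc (⌊x / r⌋ - 1 - K) (⌊x / r⌋ + K) := by
      intro N hN
      have := (Finset.mem_filter.1 hN).2
      rw [cellNbhd, Set.mem_Icc, ← le_div_iff₀ hr, ← div_le_iff₀ hr] at this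
      rw [Finset.mem_Icc]
      have h1 : N - K ≤ ⌊x / r⌋ := Int.le_floor.2 (by push_cast; exact this.1)
      have h2 : ⌊x / r⌋ ≤ N + 1 + K := by
        have := (Int.floor_le (x / r)).trans this.2
        exact_mod_cast this
      omega
    have := Finset.card_le_card hsub
    rw [Int.card_Icc] at this
    have h3 : (⌊x / r⌋ + K + 1 - (⌊x / r⌋ - 1 - K)).toNat = 2 * K + 2 := by omega
    rw [h3] at this
    exact_mod_cast this
  have hE : ∑ N ∈ A, ν (cellNbhd r K N) ≤ (2 * K + 2 : ℕ) := by
    calc ∑ N ∈ A, ν (cellNbhd r K N) =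
        ∫⁻ x, ∑ N ∈ A, (cellNbhd r K N).indicator (1 : ℝ → ℝ≥0∞) x ∂ν := by
          rw [lintegral_finsetSum _ (fun N _ => measurable_one.indicator (hmeas N))]
          refine Finset.sum_congr rfl fun N _ => ?_
          rw [lintegral_indicator_one (hmeas N)]
      _ ≤ ∫⁻ _, (2 * K + 2 : ℕ) ∂ν := lintegral_mono hpt
      _ = (2 * K + 2 : ℕ) := by simp
  unfold Measure.real
  rw [← ENNReal.toReal_sum (fun N _ => measure_ne_top _ _)]
  have := ENNReal.toReal_mono (ENNReal.natCast_ne_top _) hE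
  rw [ENNReal.toReal_natCast] at this
  push_cast at this
  exact this

/-- Exact dimensionality along the sequence `lam ^ n`, in measure: outside a measurable set of
small measure all balls of radius `lam ^ n` have mass at least `lam ^ (n * (α + ε))`. -/
lemma exists_good_set [IsProbabilityMeasure ν] (hlam : 0 < lam) (h1 : lam < 1) {α : ℝ}
    (hd : ∀ᵐ x ∂ν, Tendsto (fun r : ℝ => Real.log (ν (Metric.ball x r)).toReal / Real.log r)
      (nhdsWithin 0 (Set.Ioi 0)) (nhds α)) {ε : ℝ} (hε : 0 < ε) :
    ∀ᶠ n : ℕ in atTop, ∃ S : Set ℝ, MeasurableSet S ∧ ν.real S ≤ ε ∧ ∀ x ∉ S,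
      0 < ν.real (Metric.ball x (lam ^ n)) ∧
      -Real.log (ν.real (Metric.ball x (lam ^ n))) ≤ n * Real.log lam⁻¹ * (α + ε) := by
  set f : ℕ → ℝ → ℝ := fun n x => Real.log (ν (Metric.ball x (lam ^ n))).toReal /
    Real.log (lam ^ n) with hf
  have hball : ∀ n : ℕ, Measurable (fun x => ν (Metric.ball x (lam ^ n))) := by
    intro n
    have hs : MeasurableSet {z : ℝ × ℝ | dist z.2 z.1 < lam ^ n} :=
      (isOpen_lt (by fun_prop) continuous_const).measurableSet
    exact measurable_measure_prodMk_left hs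
  have hfm : ∀ n, Measurable (f n) := fun n =>
    (Real.measurable_log.comp (hball n).ennreal_toReal).div_const _
  have hpow : Tendsto (fun n : ℕ => lam ^ n) atTop (nhdsWithin 0 (Set.Ioi 0)) :=
    tendsto_nhdsWithin_iff.2 ⟨tendsto_pow_atTop_nhds_zero_of_lt_one hlam.le h1,
      Eventually.of_forall fun n => pow_pos hlam n⟩
  have hlim : TendstoInMeasure ν f atTop (fun _ => α) :=
    tendstoInMeasure_of_tendsto_ae (fun n => (hfm n).aestronglyMeasurable)
      (hd.mono fun x hx => hx.comp hpow)
  have hev := (hlim (ENNReal.ofReal ε) (by simpa using hε)).eventually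
    (ge_mem_nhds (show (0 : ℝ≥0∞) < ENNReal.ofReal ε by simpa using hε))
  filter_upwards [hev, eventually_ge_atTop 1] with n hn hn1
  have hnull : ν {x | ν (Metric.ball x (lam ^ n)) = 0} = 0 :=
    measure_null_of_locally_null _ fun x hx =>
      ⟨Metric.ball x (lam ^ n), mem_nhdsWithin_of_mem_nhds (Metric.ball_mem_nhds _ (pow_pos hlam n)),
        hx⟩
  refine ⟨{x | ENNReal.ofReal ε ≤ edist (f n x) α} ∪ {x | ν (Metric.ball x (lam ^ n)) = 0},
    (measurableSet_le measurable_const ((hfm n).edist measurable_const)).union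
      (hball n (measurableSet_singleton 0)), ?_, ?_⟩
  · have : ν ({x | ENNReal.ofReal ε ≤ edist (f n x) α} ∪
        {x | ν (Metric.ball x (lam ^ n)) = 0}) ≤ ENNReal.ofReal ε := by
      refine (measure_union_le _ _).trans ?_
      rw [hnull, add_zero]; exact hn
    exact ENNReal.toReal_le_of_le_ofReal hε.le this
  · intro x hx
    simp only [Set.mem_union, Set.mem_ofPred_eq, not_or, not_le] at hx
    refine ⟨ENNReal.toReal_pos hx.2 (measure_ne_top _ _), ?_⟩
    have h2 : |f n x - α| < ε := by
      have := hx.1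
      rw [edist_dist, ENNReal.ofReal_lt_ofReal_iff hε, Real.dist_eq] at this
      exact this
    have h3 : f n x ≤ α + ε := by linarith [(abs_lt.1 h2).2]
    have hl : Real.log (lam ^ n) = -(n * Real.log lam⁻¹) := by
      rw [Real.log_pow, Real.log_inv]; ring
    have hn0 : (0 : ℝ) < n := by exact_mod_cast hn1
    have hpos : 0 < n * Real.log lam⁻¹ :=
      mul_pos hn0 (Real.log_pos ((one_lt_inv₀ hlam).2 h1))
    simp only [hf, hl] at h3
    rw [div_neg, neg_le_iff_add_nonneg, ← sub_nonneg] at h3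
    have h4 : -Real.log (ν (Metric.ball x (lam ^ n))).toReal / (n * Real.log lam⁻¹) ≤ α + ε := by
      rw [neg_div]; linarith
    rw [div_le_iff₀ hpos] at h4
    unfold Measure.real
    linarith

lemma dim_nonneg [IsProbabilityMeasure ν] {α : ℝ}
    (hd : ∀ᵐ x ∂ν, Tendsto (fun r : ℝ => Real.log (ν (Metric.ball x r)).toReal / Real.log r)
      (nhdsWithin 0 (Set.Ioi 0)) (nhds α)) : 0 ≤ α := by
  obtain ⟨x, hx⟩ := hd.exists
  refine ge_of_tendsto hx ?_
  filter_upwards [self_mem_nhdsWithin, mem_nhdsWithin_of_mem_nhds (Iio_mem_nhds one_pos)]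
    with r hr hr1
  refine div_nonneg_of_nonpos (Real.log_nonpos ENNReal.toReal_nonneg ?_)
    (Real.log_nonpos (le_of_lt hr) (le_of_lt hr1))
  exact ENNReal.toReal_le_of_le_ofReal zero_le_one (by simpa using prob_le_one)

/-- Entropy bound at a fixed generation, from a set `S` outside of which balls are heavy. -/
lemma scaleEnt_le_of_good [IsProbabilityMeasure ν] (hp : IsPr p) (hp0 : ∀ i, 0 < p i)
    (hlam : 0 < lam)
    (hν : ν = ∑ i, ENNReal.ofReal (p i) • ν.map (fun x => lam * x + t i)) (K : ℕ)
    (hK : 1 / 2 ≤ ν.real (Icc (-(K : ℝ)) K)) (n : ℕ) {S : Set ℝ} (hS : MeasurableSet S)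
    {ε c M : ℝ} (hc : 0 ≤ c) (hM0 : 0 ≤ M) (hM : ∀ i, -Real.log (p i) ≤ M) (hSε : ν.real S ≤ ε)
    (hgood : ∀ x ∉ S, 0 < ν.real (Metric.ball x (lam ^ n)) ∧
      -Real.log (ν.real (Metric.ball x (lam ^ n))) ≤ c) :
    scaleEnt t p lam n n ≤ Real.log (2 * (K + 1 : ℕ) + 2) + c + 2 * ε * (Real.log 2 + n * M) := by
  set r := lam ^ n with hr
  have hr0 : 0 < r := pow_pos hlam n
  have hC0 : (0 : ℝ) < 2 * (K + 1 : ℕ) + 2 := by positivity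
  set q : ℤ → ℝ := fun N => ν.real (cellNbhd r (K + 1) N) / (2 * (K + 1 : ℕ) + 2)
  set X : (Fin n → Λ) → ℤ := fun u => D r (pt t lam n u)
  have hit := measure_iterate hp hν n
  have hpu : ∀ u : Fin n → Λ, 0 < powW n p u := fun u => Finset.prod_pos fun j _ => hp0 _
  have hX : ∀ u, (X u : ℝ) * r ≤ pt t lam n u ∧ pt t lam n u < (X u + 1) * r := by
    intro u
    rw [← le_div_iff₀ hr0, ← div_lt_iff₀ hr0]
    exact ⟨Int.floor_le _, Int.lt_floor_add_one _⟩
  have hsubK : ∀ u, Icc (-(K : ℝ)) K ⊆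
      (fun x => pt t lam n u + r * x) ⁻¹' (cellNbhd r (K + 1) (X u)) := by
    intro u y hy
    have h := hX u
    simp only [Set.mem_preimage, cellNbhd, Set.mem_Icc] at hy ⊢
    push_cast
    constructor <;> nlinarith [hy.1, hy.2, h.1, h.2]
  -- every cell that occurs is charged at least half the weight of the word
  have hlow : ∀ u, powW n p u / 2 ≤ ν.real (cellNbhd r (K + 1) (X u)) := by
    intro u
    rw [hit (cellNbhd r (K + 1) (X u)) measurableSet_Icc]
    refine le_trans ?_ (Finset.single_le_sum (f := fun u' => powW n p u' * ν.real
      ((fun x => pt t lam n u' + lam ^ n * x) ⁻¹' (cellNbhd r (K + 1) (X u))))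
      (fun u' _ => mul_nonneg (hpu u').le measureReal_nonneg) (Finset.mem_univ u))
    have := hK.trans (measureReal_mono (hsubK u))
    have := mul_le_mul_of_nonneg_left this (hpu u).le
    linarith
  have hqpos : ∀ u, 0 < ν.real (cellNbhd r (K + 1) (X u)) := fun u =>
    lt_of_lt_of_le (by have := hpu u; positivity) (hlow u)
  have hg := gibbs (hp.pow n) X (fun _ => ()) (fun N _ => q N)
    (fun _ _ => div_nonneg measureReal_nonneg hC0.le)
    (fun u _ => div_pos (hqpos u) hC0)
    (fun u => by
      rw [← Finset.sum_div, div_le_one hC0]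
      refine le_trans (le_of_eq ?_) (sum_cellNbhd_le (ν := ν) hr0 (K + 1) (Finset.univ.image X))
      congr!)
  rw [Ent_unit (hp.pow n), sub_zero] at hg
  have hE : scaleEnt t p lam n n ≤ Ent (powW n p) (fun u => (X u, ())) :=
    Ent_le_of_ker (hp.pow n) fun ω ω' h => by simpa [X] using h
  refine (hE.trans hg).trans ?_
  -- words whose image of `[-K, K]` lies entirely in the exceptional set `S`
  set bad : (Fin n → Λ) → Prop := fun u =>
    Icc (-(K : ℝ)) K ⊆ (fun x => pt t lam n u + r * x) ⁻¹' S with hbad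
  have hbadP : ∑ u, powW n p u * (if bad u then 1 else 0) ≤ 2 * ε := by
    have h2 : ∑ u, powW n p u * (if bad u then 1 else 0) ≤ ∑ u, 2 * (powW n p u *
        ν.real ((fun x => pt t lam n u + lam ^ n * x) ⁻¹' S)) := by
      refine Finset.sum_le_sum fun u _ => ?_
      split_ifs with hu
      · have := hK.trans (measureReal_mono (μ := ν) hu)
        have := mul_le_mul_of_nonneg_left this (hpu u).le
        linarith
      · have := mul_nonneg (hpu u).le (measureReal_nonneg (μ := ν)
          (s := (fun x => pt t lam n u + lam ^ n * x) ⁻¹' S))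
        linarith
    rw [← Finset.mul_sum, ← hit S hS] at h2
    linarith
  have hterm : ∀ u, -Real.log (q (X u)) ≤ Real.log (2 * (K + 1 : ℕ) + 2) + c +
      (if bad u then 1 else 0) * (Real.log 2 + n * M) := by
    intro u
    have e : -Real.log (q (X u)) = Real.log (2 * (K + 1 : ℕ) + 2) -
        Real.log (ν.real (cellNbhd r (K + 1) (X u))) := by
      simp only [q]
      rw [Real.log_div (hqpos u).ne' hC0.ne']; ring
    rw [e]
    split_ifs with hu
    · have h2 := Real.log_le_log (by have := hpu u; positivity) (hlow u)
      rw [Real.log_div (hpu u).ne' two_ne_zero] at h2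
      have h3 : -(n * M) ≤ Real.log (powW n p u) := by
        unfold powW
        rw [Real.log_prod (fun j _ => (hp0 _).ne')]
        have : ∑ j : Fin n, (-M) ≤ ∑ j, Real.log (p (u j)) :=
          Finset.sum_le_sum fun j _ => by linarith [hM (u j)]
        simpa using this
      linarith
    · simp only [hbad, Set.not_subset] at hu
      obtain ⟨y, hy, hyS⟩ := hu
      obtain ⟨hb0, hb⟩ := hgood _ hyS
      have hsub : Metric.ball (pt t lam n u + r * y) r ⊆ cellNbhd r (K + 1) (X u) := by
        intro z hz
        rw [Metric.mem_ball, Real.dist_eq, abs_lt] at hz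
        have h := hX u
        simp only [cellNbhd, Set.mem_Icc] at hy ⊢
        push_cast
        constructor <;> nlinarith [hy.1, hy.2, h.1, h.2, hz.1, hz.2]
      have := Real.log_le_log hb0 (measureReal_mono (μ := ν) hsub)
      linarith
  calc ∑ u, powW n p u * (-Real.log (q (X u))) ≤ ∑ u, powW n p u *
        (Real.log (2 * (K + 1 : ℕ) + 2) + c + (if bad u then 1 else 0) * (Real.log 2 + n * M)) :=
        Finset.sum_le_sum fun u _ => mul_le_mul_of_nonneg_left (hterm u) (hpu u).le
    _ = (Real.log (2 * (K + 1 : ℕ) + 2) + c) * ∑ u, powW n p u +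
        (∑ u, powW n p u * (if bad u then 1 else 0)) * (Real.log 2 + n * M) := by
        rw [Finset.sum_mul, Finset.mul_sum, ← Finset.sum_add_distrib]
        exact Finset.sum_congr rfl fun u _ => by ring
    _ ≤ _ := by
        rw [(hp.pow n).sum_one, mul_one]
        have : 0 ≤ Real.log 2 + n * M :=
          add_nonneg (Real.log_nonneg (by norm_num)) (by positivity)
        have := mul_le_mul_of_nonneg_right hbadP this
        linarith

/-- The entropy rate at scales `lam ^ n` is at most `log (1 / lam)` times the dimension of the
self-similar measure. -/
theorem rate_le_dim [IsProbabilityMeasure ν] (hp : IsPr p) (hp0 : ∀ i, 0 < p i)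
    (hlam : 0 < lam) (h1 : lam < 1)
    (hν : ν = ∑ i, ENNReal.ofReal (p i) • ν.map (fun x => lam * x + t i)) {α a : ℝ}
    (hd : ∀ᵐ x ∂ν, Tendsto (fun r : ℝ => Real.log (ν (Metric.ball x r)).toReal / Real.log r)
      (nhdsWithin 0 (Set.Ioi 0)) (nhds α))
    (hlim : Tendsto (fun n : ℕ => scaleEnt t p lam n n / n) atTop (nhds a)) :
    a ≤ α * Real.log lam⁻¹ := by
  have hα := dim_nonneg hd
  have hℓ : 0 < Real.log lam⁻¹ := Real.log_pos ((one_lt_inv₀ hlam).2 h1)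
  obtain ⟨K, hK⟩ : ∃ K : ℕ, 1 / 2 ≤ ν.real (Icc (-(K : ℝ)) K) := by
    have hmono : Monotone (fun K : ℕ => Icc (-(K : ℝ)) K) := fun i j hij =>
      Icc_subset_Icc (by simpa using hij) (by simpa using hij)
    have h := tendsto_measure_iUnion_atTop (μ := ν) hmono
    have hU : ⋃ K : ℕ, Icc (-(K : ℝ)) K = univ := by
      refine eq_univ_of_forall fun x => ?_
      obtain ⟨K, hK⟩ := exists_nat_ge |x|
      exact mem_iUnion.2 ⟨K, abs_le.1 hK⟩
    rw [hU, measure_univ] at h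
    have h' := ((ENNReal.tendsto_toReal ENNReal.one_ne_top).comp h).eventually
      (le_mem_nhds (show (1 / 2 : ℝ) < (1 : ℝ≥0∞).toReal by norm_num))
    exact h'.exists
  set M := ∑ i, -Real.log (p i) with hMdef
  have hneg : ∀ i, 0 ≤ -Real.log (p i) := fun i => by
    have : p i ≤ 1 := by
      rw [← hp.sum_one]; exact Finset.single_le_sum (fun j _ => hp.nonneg j) (Finset.mem_univ i)
    linarith [Real.log_nonpos (hp.nonneg i) this]
  have hM0 : 0 ≤ M := Finset.sum_nonneg fun i _ => hneg i
  have hM : ∀ i, -Real.log (p i) ≤ M := fun i =>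
    Finset.single_le_sum (f := fun i => -Real.log (p i)) (fun j _ => hneg j) (Finset.mem_univ i)
  have key : ∀ ε > 0, a ≤ Real.log lam⁻¹ * (α + ε) + 2 * ε * M := by
    intro ε hε
    have hl : Tendsto (fun n : ℕ => (Real.log (2 * (K + 1 : ℕ) + 2) + 2 * ε * Real.log 2) / (n : ℝ) +
        (Real.log lam⁻¹ * (α + ε) + 2 * ε * M)) atTop
        (nhds (0 + (Real.log lam⁻¹ * (α + ε) + 2 * ε * M))) :=
      (tendsto_const_div_atTop_nhds_zero_nat _).add tendsto_const_nhds
    rw [zero_add] at hl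
    refine le_of_tendsto_of_tendsto hlim hl ?_
    filter_upwards [exists_good_set hlam h1 hd hε, eventually_ge_atTop 1] with n hn hn1
    obtain ⟨S, hS, hSε, hg⟩ := hn
    have hn0 : (0 : ℝ) < n := by exact_mod_cast hn1
    have := scaleEnt_le_of_good (c := n * Real.log lam⁻¹ * (α + ε)) hp hp0 hlam hν K hK n hS
      (by positivity) hM0 hM hSε hg
    rw [div_le_iff₀ hn0, add_mul, div_mul_cancel₀ _ hn0.ne']
    linarith
  refine le_of_forall_pos_le_add fun η hη => ?_
  have hden : 0 < Real.log lam⁻¹ + 2 * M + 1 := by positivity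
  have := key (η / (Real.log lam⁻¹ + 2 * M + 1)) (by positivity)
  have e : η / (Real.log lam⁻¹ + 2 * M + 1) * (Real.log lam⁻¹ + 2 * M + 1) = η :=
    div_mul_cancel₀ _ hden.ne'
  have : 0 < η / (Real.log lam⁻¹ + 2 * M + 1) := by positivity
  nlinarith

end dimension

/-! ### Transversality of words -/

section transversality
variable {Λ : Type*} {t : Λ → ℝ}

lemma mul_pow_sub_pow_le {x y : ℝ} (hx : 0 ≤ x) (hxy : x ≤ y) (k : ℕ) :
    y * (y ^ k - x ^ k) ≤ (y - x) * (k * y ^ k) := by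
  have hy : 0 ≤ y := hx.trans hxy
  induction k with
  | zero => simp
  | succ k ih =>
    have h1 : x ^ k ≤ y ^ k := pow_le_pow_left₀ hx hxy k
    have h2 : y * (y * (y ^ k - x ^ k)) ≤ y * ((y - x) * (k * y ^ k)) :=
      mul_le_mul_of_nonneg_left ih hy
    have h3 : y * (y - x) * x ^ k ≤ y * (y - x) * y ^ k :=
      mul_le_mul_of_nonneg_left h1 (mul_nonneg hy (sub_nonneg.2 hxy))
    push_cast
    calc y * (y ^ (k + 1) - x ^ (k + 1)) =
        y * (y * (y ^ k - x ^ k)) + y * (y - x) * x ^ k := by ring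
      _ ≤ y * ((y - x) * (k * y ^ k)) + y * (y - x) * y ^ k := add_le_add h2 h3
      _ = _ := by ring

lemma sum_mul_pow_le {y : ℝ} (hy : 0 ≤ y) (hy1 : y < 1) (n : ℕ) :
    ∑ k : Fin n, ((k : ℕ) : ℝ) * y ^ (k : ℕ) ≤ y / (1 - y) ^ 2 := by
  have hn : ‖y‖ < 1 := by rwa [Real.norm_of_nonneg hy]
  have h := hasSum_coe_mul_geometric_of_norm_lt_one hn
  rw [Fin.sum_univ_eq_sum_range (fun k : ℕ => (k : ℝ) * y ^ k) n]
  exact sum_le_hasSum _ (fun k _ => by positivity) h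

/-- Bound for the increment of a power series with bounded coefficients. -/
lemma abs_sum_pow_sub_le {x y τ : ℝ} (hx : 0 ≤ x) (hxy : x ≤ y) (hy1 : y < 1) (n : ℕ)
    (c : Fin n → ℝ) (hc : ∀ k, |c k| ≤ τ) (hτ : 0 ≤ τ) :
    y * |∑ k, c k * (y ^ (k : ℕ) - x ^ (k : ℕ))| ≤ τ * ((y - x) * (y / (1 - y) ^ 2)) := by
  have hy : 0 ≤ y := hx.trans hxy
  have h1 : |∑ k, c k * (y ^ (k : ℕ) - x ^ (k : ℕ))| ≤
      ∑ k : Fin n, τ * (y ^ (k : ℕ) - x ^ (k : ℕ)) := by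
    refine (Finset.abs_sum_le_sum_abs _ _).trans (Finset.sum_le_sum fun k _ => ?_)
    have : 0 ≤ y ^ (k : ℕ) - x ^ (k : ℕ) := sub_nonneg.2 (pow_le_pow_left₀ hx hxy _)
    rw [abs_mul, abs_of_nonneg this]
    exact mul_le_mul_of_nonneg_right (hc k) this
  calc y * |∑ k, c k * (y ^ (k : ℕ) - x ^ (k : ℕ))|
      ≤ y * ∑ k : Fin n, τ * (y ^ (k : ℕ) - x ^ (k : ℕ)) := mul_le_mul_of_nonneg_left h1 hy
    _ = ∑ k : Fin n, τ * (y * (y ^ (k : ℕ) - x ^ (k : ℕ))) := by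
        rw [Finset.mul_sum]; exact Finset.sum_congr rfl fun k _ => by ring
    _ ≤ ∑ k : Fin n, τ * ((y - x) * ((k : ℕ) * y ^ (k : ℕ))) :=
        Finset.sum_le_sum fun k _ =>
          mul_le_mul_of_nonneg_left (mul_pow_sub_pow_le hx hxy _) hτ
    _ = τ * ((y - x) * ∑ k : Fin n, ((k : ℕ) : ℝ) * y ^ (k : ℕ)) := by
        rw [Finset.mul_sum, Finset.mul_sum]
    _ ≤ _ := mul_le_mul_of_nonneg_left (mul_le_mul_of_nonneg_left (sum_mul_pow_le hy hy1 n)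
        (sub_nonneg.2 hxy)) hτ

/-- Transversality. For distinct words `u, v`, after removing the common prefix of length `j` the
differences `gx`, `gy` of the two points at the parameters `x`, `y` are such that
`y * gx - x * gy` is of order `y - x`. -/
lemma transversal {dmin dmax x y : ℝ} (hmin : ∀ i j, i ≠ j → dmin ≤ |t i - t j|)
    (hmax : ∀ i j, |t i - t j| ≤ dmax) (hd : 0 ≤ dmax) (hx : 0 < x) (hxy : x < y) (hy1 : y < 1) :
    ∀ (n : ℕ) (u v : Fin n → Λ), u ≠ v → ∃ j gx gy, j ≤ n ∧
      pt t x n u - pt t x n v = x ^ j * gx ∧ pt t y n u - pt t y n v = y ^ j * gy ∧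
      (dmin - dmax * (y / (1 - y)) ^ 2) * (y - x) ≤ |y * gx - x * gy| := by
  intro n
  have hy : 0 < y := hx.trans hxy
  induction n with
  | zero => intro u v h; exact absurd (Subsingleton.elim u v) h
  | succ n ih =>
    intro u v
    refine Fin.consCases (fun i u' => ?_) u
    refine Fin.consCases (fun i' v' => ?_) v
    intro h
    by_cases hi : i = i'
    · subst hi
      have h' : u' ≠ v' := fun e => h (by rw [e])
      obtain ⟨j, gx, gy, hj, h1, h2, h3⟩ := ih u' v' h'
      refine ⟨j + 1, gx, gy, by omega, ?_, ?_, h3⟩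
      · rw [pt_cons, pt_cons, pow_succ]; linear_combination x * h1
      · rw [pt_cons, pt_cons, pow_succ]; linear_combination y * h2
    · refine ⟨0, _, _, by omega, (by rw [pow_zero, one_mul]), (by rw [pow_zero, one_mul]), ?_⟩
      rw [pt_cons, pt_cons, pt_cons, pt_cons]
      have hb := abs_sum_pow_sub_le hx.le hxy.le hy1 n (fun k => t (u' k) - t (v' k))
        (fun k => hmax _ _) hd
      set S := ∑ k, (t (u' k) - t (v' k)) * (y ^ (k : ℕ) - x ^ (k : ℕ)) with hS
      have hSe : S = (pt t y n u' - pt t y n v') - (pt t x n u' - pt t x n v') := by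
        rw [hS]; unfold pt
        rw [← Finset.sum_sub_distrib, ← Finset.sum_sub_distrib, ← Finset.sum_sub_distrib]
        exact Finset.sum_congr rfl fun k _ => by ring
      have e : y * (t i + x * pt t x n u' - (t i' + x * pt t x n v')) -
          x * (t i + y * pt t y n u' - (t i' + y * pt t y n v')) =
          (t i - t i') * (y - x) - x * y * S := by rw [hSe]; ring
      rw [e]
      have h1 : |(t i - t i') * (y - x)| - |x * y * S| ≤
          |(t i - t i') * (y - x) - x * y * S| := abs_sub_abs_le_abs_sub _ _
      rw [abs_mul, abs_of_pos (sub_pos.2 hxy), abs_mul, abs_of_pos (mul_pos hx hy)] at h1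
      have h2 := mul_le_mul_of_nonneg_right (hmin i i' hi) (sub_pos.2 hxy).le
      have h3 : x * y * |S| ≤ dmax * ((y - x) * (y / (1 - y)) ^ 2) := by
        calc x * y * |S| = x * (y * |S|) := by ring
          _ ≤ y * (y * |S|) := mul_le_mul_of_nonneg_right hxy.le (by positivity)
          _ ≤ y * (dmax * ((y - x) * (y / (1 - y) ^ 2))) := mul_le_mul_of_nonneg_left hb hy.le
          _ = _ := by rw [div_pow]; ring
      linarith

/-- Two words of length `n` whose points are indistinguishable at scale `x ^ (n + 2 * n)` for the
parameter `x` and at scale `y ^ (n + 2 * n)` for the parameter `y` are equal, if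
`y - x > x ^ (n + 1)`. -/
lemma words_eq {dmin dmax x y κ : ℝ} (hmin : ∀ i j, i ≠ j → dmin ≤ |t i - t j|)
    (hmax : ∀ i j, |t i - t j| ≤ dmax) (hd : 0 ≤ dmax) (hx : 0 < x) (hxy : x < y)
    (hy2 : y ≤ 1 / 2) (hyx : y ≤ 3 / 2 * x) (hκ : 0 ≤ κ)
    (hκy : κ ≤ dmin - dmax * (y / (1 - y)) ^ 2)
    {n : ℕ} (hn : x ^ (n + 1) < y - x) (hsmall : 2 * (3 / 4 : ℝ) ^ n < κ * x) (u v : Fin n → Λ)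
    (h1 : D (x ^ (n + 2 * n)) (pt t x n u) = D (x ^ (n + 2 * n)) (pt t x n v))
    (h2 : D (y ^ (n + 2 * n)) (pt t y n u) = D (y ^ (n + 2 * n)) (pt t y n v)) : u = v := by
  by_contra hne
  have hy : 0 < y := hx.trans hxy
  obtain ⟨j, gx, gy, hj, e1, e2, hg⟩ :=
    transversal hmin hmax hd hx hxy (by linarith) n u v hne
  have hsm : ∀ {z g : ℝ}, 0 < z → z ≤ y → |z ^ j * g| < z ^ (n + 2 * n) → |g| ≤ y ^ (2 * n) := by
    intro z g hz hzy h
    have hz1 : z ≤ 1 := by linarith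
    rw [abs_mul, abs_of_pos (pow_pos hz j)] at h
    have h3 : z ^ (n + 2 * n) ≤ z ^ j * z ^ (2 * n) := by
      rw [← pow_add]; exact pow_le_pow_of_le_one hz.le hz1 (by omega)
    have h4 : |g| < z ^ (2 * n) := lt_of_mul_lt_mul_left (h.trans_le h3) (pow_pos hz j).le
    exact h4.le.trans (pow_le_pow_left₀ hz.le hzy _)
  have g1 : |gx| ≤ y ^ (2 * n) := hsm hx hxy.le (by rw [← e1]; exact D_eq_imp (pow_pos hx _) h1)
  have g2 : |gy| ≤ y ^ (2 * n) := hsm hy le_rfl (by rw [← e2]; exact D_eq_imp (pow_pos hy _) h2)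
  have h3 : |y * gx - x * gy| ≤ 2 * y ^ (2 * n) := by
    have h4 := abs_sub (y * gx) (x * gy)
    rw [abs_mul, abs_mul, abs_of_pos hx, abs_of_pos hy] at h4
    have h5 : y * |gx| ≤ 1 * |gx| := mul_le_mul_of_nonneg_right (by linarith) (abs_nonneg _)
    have h6 : x * |gy| ≤ 1 * |gy| := mul_le_mul_of_nonneg_right (by linarith) (abs_nonneg _)
    linarith
  have h4 : y ^ (2 * n) ≤ (3 / 4 : ℝ) ^ n * x ^ n := by
    rw [pow_mul, ← mul_pow]
    exact pow_le_pow_left₀ (by positivity) (by nlinarith) n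
  have h5 : κ * x ^ (n + 1) ≤ (dmin - dmax * (y / (1 - y)) ^ 2) * (y - x) :=
    mul_le_mul hκy hn.le (by positivity) (hκ.trans hκy)
  have h6 : κ * x * x ^ n ≤ 2 * (3 / 4 : ℝ) ^ n * x ^ n := by
    rw [pow_succ] at h5; linarith
  exact absurd (le_of_mul_le_mul_right h6 (pow_pos hx n)) (not_le.2 hsmall)

/-- Lipschitz dependence of the points on the parameter. -/
lemma pt_lip {τ x y : ℝ} (hτ : ∀ i, |t i| ≤ τ) (hτ0 : 0 ≤ τ) (hx : 0 < x) (hxy : x < y)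
    (hy2 : y ≤ 1 / 2) (n : ℕ) (u : Fin n → Λ) :
    |pt t y n u - pt t x n u| ≤ 4 * τ * (y - x) := by
  have hy : 0 < y := hx.trans hxy
  have h := abs_sum_pow_sub_le hx.le hxy.le (by linarith) n (fun k => t (u k)) (fun k => hτ _) hτ0
  have e : ∑ k, t (u k) * (y ^ (k : ℕ) - x ^ (k : ℕ)) = pt t y n u - pt t x n u := by
    unfold pt
    rw [← Finset.sum_sub_distrib]
    exact Finset.sum_congr rfl fun k _ => by ring
  rw [e] at h
  have h1 : y / (1 - y) ^ 2 ≤ 4 * y := by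
    rw [div_le_iff₀ (by nlinarith)]
    nlinarith [mul_nonneg hy.le (by nlinarith : (0 : ℝ) ≤ 4 * (1 - y) ^ 2 - 1)]
  have h2 : τ * ((y - x) * (y / (1 - y) ^ 2)) ≤ τ * ((y - x) * (4 * y)) :=
    mul_le_mul_of_nonneg_left (mul_le_mul_of_nonneg_left h1 (by linarith)) hτ0
  refine le_of_mul_le_mul_left (h.trans (h2.trans (le_of_eq ?_))) hy
  ring

end transversality

/-! ### Exceptional parameters are separated -/

section separation
variable {Ω : Type*} [Fintype Ω] {q : Ω → ℝ}

/-- Two fine partitions `F₁, F₂` refining (up to one cell) coarse partitions `G₁, G₂`, with `G₁`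
nearly determining `G₂`: the joint entropy of the fine partitions is at most the entropy of one
coarse partition plus the two gains. -/
lemma joint_ent_le (hq : IsPr q) (F₁ F₂ G₁ G₂ : Ω → ℤ) (K : ℕ)
    (h1 : ∀ ω ω', F₁ ω = F₁ ω' → |G₁ ω - G₁ ω'| ≤ (1 : ℕ))
    (h2 : ∀ ω ω', F₂ ω = F₂ ω' → |G₂ ω - G₂ ω'| ≤ (1 : ℕ))
    (hG : ∀ ω ω', G₁ ω = G₁ ω' → |G₂ ω - G₂ ω'| ≤ K) :
    Ent q (fun ω => (F₁ ω, F₂ ω)) ≤ Ent q G₁ + (Ent q F₁ - Ent q G₁) + (Ent q F₂ - Ent q G₂) +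
      (Real.log (2 * K + 1) + 2 * Real.log 3) := by
  have a1 := submod hq F₁ F₂ (fun ω => (G₁ ω, G₂ ω))
  have a2 := submod hq F₁ G₂ G₁
  have a3 := submod hq F₂ G₁ G₂
  have b1 := Ent_near hq G₁ F₁ F₁ 1 fun ω ω' h => ⟨h1 _ _ h, h⟩
  have b2 := Ent_near hq G₂ F₂ F₂ 1 fun ω ω' h => ⟨h2 _ _ h, h⟩
  have b3 := Ent_near hq G₂ G₁ G₁ K fun ω ω' h => ⟨hG _ _ h, h⟩
  have e : Real.log (2 * (1 : ℕ) + 1) = Real.log 3 := by norm_num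
  rw [e] at b1 b2
  have c1 : Ent q (fun ω => (F₁ ω, F₂ ω)) ≤ Ent q (fun ω => (F₁ ω, F₂ ω, (G₁ ω, G₂ ω))) :=
    Ent_le_of_ker hq fun ω ω' h => by simp only [Prod.mk.injEq] at h ⊢; tauto
  have c2 : Ent q (fun ω => (F₁ ω, G₁ ω)) ≤ Ent q (fun ω => (G₁ ω, F₁ ω)) :=
    Ent_le_of_ker hq fun ω ω' h => by simp only [Prod.mk.injEq] at h ⊢; tauto
  have c3 : Ent q (fun ω => (F₂ ω, G₂ ω)) ≤ Ent q (fun ω => (G₂ ω, F₂ ω)) :=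
    Ent_le_of_ker hq fun ω ω' h => by simp only [Prod.mk.injEq] at h ⊢; tauto
  have c4 : Ent q (fun ω => (F₁ ω, (G₁ ω, G₂ ω))) ≤ Ent q (fun ω => (F₁ ω, G₂ ω, G₁ ω)) :=
    Ent_le_of_ker hq fun ω ω' h => by simp only [Prod.mk.injEq] at h ⊢; tauto
  have c5 : Ent q (fun ω => (G₂ ω, G₁ ω)) ≤ Ent q (fun ω => (G₁ ω, G₂ ω)) :=
    Ent_le_of_ker hq fun ω ω' h => by simp only [Prod.mk.injEq] at h ⊢; tauto
  linarith

variable {Λ : Type*} [Fintype Λ] {t p : Λ → ℝ}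

lemma D_coarse {x : ℝ} (hx : 0 < x) (hx1 : x ≤ 1) {n m : ℕ} (hnm : n ≤ m) {a b : ℝ}
    (h : D (x ^ m) a = D (x ^ m) b) : |D (x ^ n) a - D (x ^ n) b| ≤ (1 : ℕ) := by
  refine D_near (pow_pos hx n) 1 ?_
  have h1 := D_eq_imp (pow_pos hx m) h
  have h2 : x ^ m ≤ x ^ n := pow_le_pow_of_le_one hx.le hx1 hnm
  push_cast
  linarith

/-- The entropy of words is bounded by scale-`n` quantities at two parameters whose distance is
comparable to `x ^ n`. -/
lemma word_ent_le (hp : IsPr p) {dmin dmax τ x y κ : ℝ}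
    (hmin : ∀ i j, i ≠ j → dmin ≤ |t i - t j|)
    (hmax : ∀ i j, |t i - t j| ≤ dmax) (hd : 0 ≤ dmax) (hτ : ∀ i, |t i| ≤ τ) (hτ0 : 0 ≤ τ)
    (hx : 0 < x) (hxy : x < y)
    (hy2 : y ≤ 1 / 2) (hyx : y ≤ 3 / 2 * x) (hκ : 0 ≤ κ)
    (hκy : κ ≤ dmin - dmax * (y / (1 - y)) ^ 2)
    {n : ℕ} (hn : x ^ (n + 1) < y - x) (hn' : y - x ≤ x ^ n)
    (hsmall : 2 * (3 / 4 : ℝ) ^ n < κ * x) (K : ℕ) (hK : 8 * τ + 1 ≤ K) :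
    n * Ent p (fun i => i) ≤ scaleEnt t p x n n +
      (scaleEnt t p x n (n + 2 * n) - scaleEnt t p x n n) +
      (scaleEnt t p y n (n + 2 * n) - scaleEnt t p y n n) +
      (Real.log (2 * K + 1) + 2 * Real.log 3) := by
  have hy : 0 < y := hx.trans hxy
  have hP := hp.pow n
  have h1 := joint_ent_le hP (fun u => D (x ^ (n + 2 * n)) (pt t x n u))
    (fun u => D (y ^ (n + 2 * n)) (pt t y n u)) (fun u => D (x ^ n) (pt t x n u))
    (fun u => D (y ^ n) (pt t y n u)) K
    (fun u v h => D_coarse hx (by linarith) (by omega) h)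
    (fun u v h => D_coarse hy (by linarith) (by omega) h)
    (fun u v h => by
      refine D_near (pow_pos hy n) K ?_
      have a0 := abs_lt.1 (D_eq_imp (pow_pos hx n) h)
      have a1 := abs_le.1 (pt_lip hτ hτ0 hx hxy hy2 n u)
      have a2 := abs_le.1 (pt_lip hτ hτ0 hx hxy hy2 n v)
      have a3 : x ^ n ≤ y ^ n := pow_le_pow_left₀ hx.le hxy.le n
      have a4 : 4 * τ * (y - x) ≤ 4 * τ * y ^ n :=
        mul_le_mul_of_nonneg_left (hn'.trans a3) (by positivity)
      have a5 := mul_le_mul_of_nonneg_right hK (pow_pos hy n).le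
      rw [abs_le]
      constructor <;> linarith)
  have h2 : Ent (powW n p) (fun u => u) ≤ Ent (powW n p)
      (fun u => (D (x ^ (n + 2 * n)) (pt t x n u), D (y ^ (n + 2 * n)) (pt t y n u))) :=
    Ent_le_of_ker hP fun u v h => by
      simp only [Prod.mk.injEq] at h
      exact words_eq hmin hmax hd hx hxy hy2 hyx hκ hκy hn hsmall u v h.1 h.2
  have h3 := Ent_pow hp (fun i => i) n
  unfold scaleEnt
  rw [← h3]
  exact h2.trans h1

/-- Uniformly exceptional parameters are separated, hence countable. -/
lemma countable_uniform (hp : IsPr p) {dmin dmax τ q₀ q₁ κ δ : ℝ}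
    (hmin : ∀ i j, i ≠ j → dmin ≤ |t i - t j|)
    (hmax : ∀ i j, |t i - t j| ≤ dmax) (hd : 0 ≤ dmax) (hτ : ∀ i, |t i| ≤ τ) (hτ0 : 0 ≤ τ)
    (hq₀ : 0 < q₀) (hq₁ : q₁ ≤ 1 / 2) (hκ : 0 < κ)
    (hκq : ∀ y, 0 < y → y ≤ q₁ → κ ≤ dmin - dmax * (y / (1 - y)) ^ 2) (hδ : 0 < δ) (N : ℕ) :
    {x : ℝ | q₀ ≤ x ∧ x ≤ q₁ ∧ ∀ n ≥ N,
      scaleEnt t p x n n ≤ (Ent p (fun i => i) - 3 * δ) * n ∧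
      scaleEnt t p x n (n + 2 * n) - scaleEnt t p x n n ≤ δ * n}.Countable := by
  set E := {x : ℝ | q₀ ≤ x ∧ x ≤ q₁ ∧ ∀ n ≥ N,
      scaleEnt t p x n n ≤ (Ent p (fun i => i) - 3 * δ) * n ∧
      scaleEnt t p x n (n + 2 * n) - scaleEnt t p x n n ≤ δ * n} with hE
  obtain ⟨K, hK⟩ := exists_nat_ge (8 * τ + 1)
  set C := Real.log (2 * K + 1) + 2 * Real.log 3 with hC
  have hlim1 : ∀ᶠ n : ℕ in atTop, 2 * (3 / 4 : ℝ) ^ n < κ * q₀ := by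
    have := (tendsto_pow_atTop_nhds_zero_of_lt_one (r := (3 / 4 : ℝ)) (by norm_num)
      (by norm_num)).const_mul 2
    rw [mul_zero] at this
    exact this.eventually_lt_const (by positivity)
  have hlim2 : ∀ᶠ n : ℕ in atTop, C < δ * n :=
    (tendsto_natCast_atTop_atTop.const_mul_atTop hδ).eventually_gt_atTop C
  obtain ⟨N₁, hN₁⟩ := eventually_atTop.1 ((hlim1.and hlim2).and (eventually_ge_atTop N))
  set r₀ := min (q₀ / 2) (q₀ ^ (N₁ + 1)) with hr₀
  have hr₀pos : 0 < r₀ := by positivity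
  have hsep : ∀ x ∈ E, ∀ y ∈ E, x < y → r₀ ≤ y - x := by
    intro x hxE y hyE hxy
    by_contra! hlt
    obtain ⟨hx0, hx1, hxn⟩ := hxE
    obtain ⟨hy0, hy1, hyn⟩ := hyE
    have hx : 0 < x := hq₀.trans_le hx0
    have l1 : y - x < q₀ / 2 := hlt.trans_le (min_le_left _ _)
    have l2 : y - x < q₀ ^ (N₁ + 1) := hlt.trans_le (min_le_right _ _)
    obtain ⟨n, hn1, hn2⟩ := exists_nat_pow_near_of_lt_one (x := y - x) (y := x) (by linarith)
      (by linarith) hx (by linarith)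
    have hnN : N₁ ≤ n := by
      by_contra! h
      have : x ^ (N₁ + 1) ≤ x ^ (n + 1) := pow_le_pow_of_le_one hx.le (by linarith) (by omega)
      have := pow_le_pow_left₀ hq₀.le hx0 (N₁ + 1)
      linarith
    obtain ⟨⟨s1, s2⟩, s3⟩ := hN₁ n hnN
    have hs : 2 * (3 / 4 : ℝ) ^ n < κ * x :=
      s1.trans_le (mul_le_mul_of_nonneg_left hx0 hκ.le)
    have hw := word_ent_le hp hmin hmax hd hτ hτ0 hx hxy (by linarith) (by linarith) hκ.le
      (hκq y (by linarith) hy1) hn1 hn2 hs K hK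
    have w1 := hxn n s3
    have w2 := hyn n s3
    nlinarith [w1.1, w1.2, w2.2]
  refine Set.MapsTo.countable_of_injOn (f := fun x : ℝ => ⌊x / r₀⌋) (t := univ)
    (fun _ _ => mem_univ _) ?_ (Set.to_countable _)
  intro x hx y hy hxy
  have h := D_eq_imp hr₀pos (x := x) (y := y) hxy
  rw [abs_lt] at h
  rcases lt_trichotomy x y with h' | h' | h'
  · linarith [hsep x hx y hy h']
  · exact h'
  · linarith [hsep y hy x hx h']

lemma Ent_id (p : Λ → ℝ) : Ent p (fun i => i) = -∑ i, p i * Real.log (p i) := by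
  unfold Ent mass
  rw [← Finset.sum_neg_distrib]
  refine Finset.sum_congr rfl fun i _ => ?_
  have : (∑ j, if j = i then p j else 0) = p i := by simp
  rw [this]; ring

/-- A dimension drop makes the entropy rate strictly smaller than both the entropy of `p` and
`log lam⁻¹`, which gives the two uniform entropy bounds at all large scales. -/
lemma exceptional_bounds (hp : IsPr p) (hp0 : ∀ i, 0 < p i) {lam α : ℝ} (hlam : 0 < lam)
    (h1 : lam < 1) {ν : Measure ℝ} [IsProbabilityMeasure ν]
    (hν : ν = ∑ i, ENNReal.ofReal (p i) • ν.map (fun x => lam * x + t i)) (hd : ∀ᵐ x ∂ν, Tendsto (fun r : ℝ =>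
      Real.log (ν (Metric.ball x r)).toReal / Real.log r) (nhdsWithin 0 (Set.Ioi 0)) (nhds α))
    (hα : α < 1) (hα' : α * Real.log lam⁻¹ < Ent p (fun i => i)) :
    ∃ ε > 0, ∀ δ, 0 < δ → δ ≤ ε → ∀ᶠ n : ℕ in atTop,
      scaleEnt t p lam n n ≤ (Ent p (fun i => i) - 3 * δ) * n ∧
      scaleEnt t p lam n (n + 2 * n) - scaleEnt t p lam n n ≤ δ * n := by
  obtain ⟨B, hB⟩ := exists_oscBound t hlam h1
  obtain ⟨a, hlim, hup⟩ := exists_rate hp hlam h1 hB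
  have ha := rate_le_dim hp hp0 hlam h1 hν hd hlim
  have hl : 0 < Real.log lam⁻¹ := Real.log_pos ((one_lt_inv₀ hlam).2 h1)
  have ha1 : a < Real.log lam⁻¹ := by nlinarith
  refine ⟨(Ent p (fun i => i) - a) / 6, by linarith, fun δ hδ hδε => ?_⟩
  have hev := hlim.eventually_le_const (show a < Ent p (fun i => i) - 3 * δ by linarith)
  filter_upwards [hev, eventually_ge_atTop 1,
    no_concentration hp hlam h1 hB hlim hup ha1 hδ] with n h2 h3 h4
  have : (0 : ℝ) < n := by exact_mod_cast h3
  exact ⟨(div_le_iff₀ this).1 h2, h4⟩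

end separation

end SSM

/-- for the IFS `{x ↦ λx + t_i}_{i=1}^n` with `n ≥ 3`, the set of parameters
`λ ∈ (0, (1+√b)^{-1})` where the dimension of the self-similar measure drops below
`min(1, similarity dimension)` is at most countable. -/
theorem stmt6 (n : ℕ) (hn : 3 ≤ n) (t : Fin n → ℝ) (ht : Function.Injective t)
    (p : Fin n → ℝ) (hp : ∀ i, 0 < p i) (hp1 : ∑ i, p i = 1)
    (ν : ℝ → Measure ℝ)
    (hν : ∀ lam ∈ Ioo (0 : ℝ) 1,
      IsSelfSimilarMeasure (fun _ _ => lam) (fun i _ => t i) p lam (ν lam))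
    (dimf : ℝ → ℝ) (hdim : ∀ lam ∈ Ioo (0 : ℝ) 1, ExactDim (ν lam) (dimf lam))
    (bb : ℝ)
    (hbb : bb = sSup {d : ℝ | ∃ i j, i ≠ j ∧ d = |t i - t j|} /
      sInf {d : ℝ | ∃ i j, i ≠ j ∧ d = |t i - t j|}) :
    {lam ∈ Ioo (0 : ℝ) (1 / (1 + Real.sqrt bb)) |
      dimf lam < min 1 ((∑ i, p i * Real.log (p i)) / (∑ i, p i * Real.log |lam|))}.Countable := by
  set A := {d : ℝ | ∃ i j, i ≠ j ∧ d = |t i - t j|} with hA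
  have hAfin : A.Finite := by
    refine (Set.finite_range (fun ij : Fin n × Fin n => |t ij.1 - t ij.2|)).subset ?_
    rintro d ⟨i, j, -, rfl⟩
    exact ⟨(i, j), rfl⟩
  have hAne : A.Nonempty := by
    refine ⟨_, ⟨0, by omega⟩, ⟨1, by omega⟩, ?_, rfl⟩
    simp [Fin.ext_iff]
  set dmin := sInf A with hdmin
  set dmax := sSup A with hdmax
  have hdmin0 : 0 < dmin := by
    obtain ⟨i, j, hij, h⟩ := hAne.csInf_mem hAfin
    rw [hdmin, h]
    exact abs_pos.2 (sub_ne_zero.2 fun e => hij (ht e))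
  have hle : dmin ≤ dmax := csInf_le_csSup hAne hAfin.bddBelow hAfin.bddAbove
  have hmin : ∀ i j, i ≠ j → dmin ≤ |t i - t j| := fun i j h =>
    csInf_le hAfin.bddBelow ⟨i, j, h, rfl⟩
  have hmax : ∀ i j, |t i - t j| ≤ dmax := by
    intro i j
    by_cases h : i = j
    · rw [h, sub_self, abs_zero]; exact hdmin0.le.trans hle
    · exact le_csSup hAfin.bddAbove ⟨i, j, h, rfl⟩
  have hdmax0 : 0 < dmax := hdmin0.trans_le hle
  have hb1 : 1 ≤ bb := by rw [hbb, le_div_iff₀ hdmin0]; linarith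
  set s := Real.sqrt bb with hs
  have hs1 : 1 ≤ s := by rw [hs]; exact Real.one_le_sqrt.2 hb1
  have hs2 : s ^ 2 = dmax / dmin := by rw [hs, Real.sq_sqrt (by linarith), hbb]
  have hpr : SSM.IsPr p := ⟨fun i => (hp i).le, hp1⟩
  set τ := ∑ i, |t i| with hτdef
  have hτ : ∀ i, |t i| ≤ τ := fun i =>
    Finset.single_le_sum (f := fun i => |t i|) (fun j _ => abs_nonneg _) (Finset.mem_univ i)
  have hτ0 : 0 ≤ τ := Finset.sum_nonneg fun i _ => abs_nonneg _
  have hls : 1 / (1 + s) ≤ 1 / 2 := one_div_le_one_div_of_le (by norm_num) (by linarith)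
  -- the exceptional set is covered by countably many uniformly exceptional sets
  have hcount : ∀ M N : ℕ, {x : ℝ | 1 / ((M : ℝ) + 1) ≤ x ∧ x ≤ 1 / (1 + s) - 1 / ((M : ℝ) + 1) ∧
      ∀ n ≥ N, SSM.scaleEnt t p x n n ≤
          (SSM.Ent p (fun i => i) - 3 * (1 / ((M : ℝ) + 1))) * n ∧
        SSM.scaleEnt t p x n (n + 2 * n) - SSM.scaleEnt t p x n n ≤
          1 / ((M : ℝ) + 1) * n}.Countable := by
    intro M N
    have hM : 0 < 1 / ((M : ℝ) + 1) := by positivity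
    set q := 1 / (1 + s) - 1 / ((M : ℝ) + 1) with hq
    have hqs : q < 1 / (1 + s) := by linarith
    rcases le_or_gt q 0 with hq0 | hq0
    · convert Set.countable_empty
      refine Set.eq_empty_of_forall_notMem ?_
      rintro x ⟨h1, h2, -⟩
      linarith
    have hq1 : 0 < 1 - q := by linarith
    refine SSM.countable_uniform hpr hmin hmax hdmax0.le hτ hτ0 hM (by linarith)
      (κ := dmin - dmax * (q / (1 - q)) ^ 2) ?_ ?_ hM N
    · -- `q < 1 / (1 + s)` means `s * (q / (1 - q)) < 1`
      have h1 : s * (q / (1 - q)) < 1 := by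
        rw [← mul_div_assoc, div_lt_one hq1]
        rw [lt_div_iff₀ (by linarith)] at hqs
        linarith
      have h2 : (s * (q / (1 - q))) ^ 2 < 1 := by
        have : 0 ≤ s * (q / (1 - q)) := by positivity
        nlinarith
      rw [mul_pow, hs2, div_mul_eq_mul_div, div_lt_one hdmin0] at h2
      linarith
    · intro y hy hyq
      have h1 : y / (1 - y) ≤ q / (1 - q) := div_le_div₀ hq0.le hyq hq1 (by linarith)
      have h2 : (y / (1 - y)) ^ 2 ≤ (q / (1 - q)) ^ 2 :=
        pow_le_pow_left₀ (div_nonneg hy.le (by linarith)) h1 2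
      linarith [mul_le_mul_of_nonneg_left h2 hdmax0.le]
  refine (Set.countable_iUnion fun M => Set.countable_iUnion fun N => hcount M N).mono ?_
  rintro lam ⟨⟨hl0, hl1⟩, hdrop⟩
  have hlt1 : lam < 1 := by linarith
  have hmem : lam ∈ Ioo (0 : ℝ) 1 := ⟨hl0, hlt1⟩
  obtain ⟨hprob, hself⟩ := hν lam hmem
  have hl : 0 < Real.log lam⁻¹ := Real.log_pos ((one_lt_inv₀ hl0).2 hlt1)
  rw [lt_min_iff] at hdrop
  have hden : ∑ i, p i * Real.log |lam| = -Real.log lam⁻¹ := by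
    rw [← Finset.sum_mul, hp1, one_mul, abs_of_pos hl0, Real.log_inv, neg_neg]
  have hα' : dimf lam * Real.log lam⁻¹ < SSM.Ent p (fun i => i) := by
    have h := hdrop.2
    rw [hden, div_neg, ← neg_div, lt_div_iff₀ hl] at h
    rwa [SSM.Ent_id]
  obtain ⟨ε, hε, hev⟩ := SSM.exceptional_bounds (t := t) hpr hp hl0 hlt1 hself (hdim lam hmem)
    hdrop.1 hα'
  obtain ⟨M, hM⟩ := exists_nat_one_div_lt
    (show 0 < min ε (min lam (1 / (1 + s) - lam)) from
      lt_min hε (lt_min hl0 (sub_pos.2 hl1)))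
  rw [lt_min_iff, lt_min_iff] at hM
  obtain ⟨N, hN⟩ := eventually_atTop.1 (hev (1 / ((M : ℝ) + 1)) (by positivity) hM.1.le)
  exact mem_iUnion.2 ⟨M, mem_iUnion.2 ⟨N, hM.2.1.le, by linarith [hM.2.2], hN⟩⟩

end
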